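/- arXiv:2304.07798 — 3 statements merged into one kernel-verified Lean document; each statement's English description precedes it below -/
import Mathlib

section
/- Assume G is an elementary abelian 2-group with n = |G| > 8. Define: B₁ = {E_a*A_bE_c* : a,c ∈ {1,2,3,4}, b ∈ {0,1,2,3}, b ≠ max{a,c}, and p_{cb}^a ≠ 0}, where p_{gh}^i denotes the intersection number of the scheme (for any (u,v) ∈ R_i, p_{gh}^i = |{w ∈ X_G : (u,w) ∈ R_g and (w,v) ∈ R_h}|, independent of the choice of (u,v) ∈ R_i); B₂ = {E_a*JE_b* : a,b ∈ {0,…,4}}; B₅ = {E_1*A_2E_3*A_1E_4*, E_2*A_1E_3*A_2E_4*, E_3*A_1E_2*A_3E_4*, E_4*A_1E_3*A_2E_1*, E_4*A_2E_3*A_1E_2*, E_4*A_3E_2*A_1E_3*}; B₆ = {E_4*A_aE_b*A_cE_4* : {a,b,c} = {1,2,3}}. Then B₁ ∪ B₂ ∪ B₅ ∪ B₆ is an F-basis of the Terwilliger F-algebra T, i.e. it is F-linearly independent and its F-linear span equals T. -/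
open Matrix

abbrev XG (G : Type) [Group G] : Type := {v : Fin 3 → G // v 0 * v 1 = v 2}

def cIdx : Fin 5 → Fin 3
  | 0 => 0
  | 1 => 0
  | 2 => 1
  | 3 => 2
  | 4 => 0

def rel {G : Type} [Group G] (i : Fin 5) (y z : XG G) : Prop :=
  if i = 0 then y = z
  else if i = 4 then ∀ d : Fin 3, y.1 d ≠ z.1 d
  else y ≠ z ∧ y.1 (cIdx i) = z.1 (cIdx i)

instance {G : Type} [Group G] [DecidableEq G] (i : Fin 5) (y z : XG G) :
    Decidable (rel i y z) := by
  unfold rel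
  infer_instance

def Adj (F : Type) [Field F] {G : Type} [Group G] [DecidableEq G] (i : Fin 5) :
    Matrix (XG G) (XG G) F :=
  Matrix.of fun y z => if rel i y z then 1 else 0

def DualE (F : Type) [Field F] {G : Type} [Group G] [DecidableEq G] (x : XG G) (i : Fin 5) :
    Matrix (XG G) (XG G) F :=
  Matrix.of fun y z => if y = z ∧ rel i x y then 1 else 0

def AllOne (F : Type) [Field F] (G : Type) [Group G] : Matrix (XG G) (XG G) F :=
  Matrix.of fun _ _ => 1

def genSet (F : Type) [Field F] (G : Type) [Group G] [Fintype G] [DecidableEq G]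
    (x : XG G) : Set (Matrix (XG G) (XG G) F) :=
  {M | ∃ a b c : Fin 5, M = DualE F x a * Adj F b * DualE F x c}

def TerwilligerAlg (F : Type) [Field F] (G : Type) [Group G] [Fintype G] [DecidableEq G]
    (x : XG G) : Subalgebra F (Matrix (XG G) (XG G) F) :=
  Algebra.adjoin F (genSet F G x)

def B1set (F : Type) [Field F] (G : Type) [Group G] [Fintype G] [DecidableEq G]
    (x : XG G) : Set (Matrix (XG G) (XG G) F) :=
  {M | ∃ a c b : Fin 5,
    a ∈ ({1, 2, 3, 4} : Finset (Fin 5)) ∧ c ∈ ({1, 2, 3, 4} : Finset (Fin 5)) ∧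
    b ∈ ({0, 1, 2, 3} : Finset (Fin 5)) ∧ b ≠ max a c ∧
    (∃ u v : XG G, rel a u v ∧ ∃ w : XG G, rel c u w ∧ rel b w v) ∧
    M = DualE F x a * Adj F b * DualE F x c}

def B2set (F : Type) [Field F] (G : Type) [Group G] [Fintype G] [DecidableEq G]
    (x : XG G) : Set (Matrix (XG G) (XG G) F) :=
  {M | ∃ a b : Fin 5, M = DualE F x a * AllOne F G * DualE F x b}

def B5set (F : Type) [Field F] (G : Type) [Group G] [Fintype G] [DecidableEq G]
    (x : XG G) : Set (Matrix (XG G) (XG G) F) :=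
  {DualE F x 1 * Adj F 2 * DualE F x 3 * Adj F 1 * DualE F x 4,
   DualE F x 2 * Adj F 1 * DualE F x 3 * Adj F 2 * DualE F x 4,
   DualE F x 3 * Adj F 1 * DualE F x 2 * Adj F 3 * DualE F x 4,
   DualE F x 4 * Adj F 1 * DualE F x 3 * Adj F 2 * DualE F x 1,
   DualE F x 4 * Adj F 2 * DualE F x 3 * Adj F 1 * DualE F x 2,
   DualE F x 4 * Adj F 3 * DualE F x 2 * Adj F 1 * DualE F x 3}

def B6set (F : Type) [Field F] (G : Type) [Group G] [Fintype G] [DecidableEq G]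
    (x : XG G) : Set (Matrix (XG G) (XG G) F) :=
  {M | ∃ a b c : Fin 5, ({a, b, c} : Finset (Fin 5)) = {1, 2, 3} ∧
    M = DualE F x 4 * Adj F a * DualE F x b * Adj F c * DualE F x 4}


section Aux

def okc (a : Fin 5) (d : Fin 3) : Prop := a ≠ 0 ∧ (a = 4 ∨ cIdx a ≠ d)

instance (a : Fin 5) (d : Fin 3) : Decidable (okc a d) := by unfold okc; infer_instance

def qc {G : Type} [Group G] (x : XG G) (d : Fin 3) (y : XG G) : G := y.1 d * x.1 d

theorem el_sq {G : Type} [Group G] (h : ∀ a : G, a ^ 2 = 1) (a : G) : a * a = 1 := by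
  have := h a
  rwa [pow_two] at this

theorem el_comm {G : Type} [Group G] (h : ∀ a : G, a ^ 2 = 1) (a b : G) : a * b = b * a := by
  have h1 := el_sq h (a * b)
  have ha : a⁻¹ = a := inv_eq_of_mul_eq_one_left (el_sq h a)
  have hb : b⁻¹ = b := inv_eq_of_mul_eq_one_left (el_sq h b)
  have := inv_eq_of_mul_eq_one_left h1
  rw [_root_.mul_inv_rev, ha, hb] at this
  exact this.symm

theorem el_cancel {G : Type} [Group G] (h : ∀ a : G, a ^ 2 = 1) (a b : G) : a * (a * b) = b := by
  rw [← mul_assoc, el_sq h, one_mul]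

theorem el_cancel2 {G : Type} [Group G] (h : ∀ a : G, a ^ 2 = 1) (a b : G) : a * b * b = a := by
  rw [mul_assoc, el_sq h, mul_one]

theorem qc_mul {G : Type} [Group G] (h : ∀ a : G, a ^ 2 = 1) (x y : XG G) :
    qc x 0 y * qc x 1 y = qc x 2 y := by
  unfold qc
  rw [← x.2, ← y.2, mul_assoc, mul_assoc, ← mul_assoc (x.1 0), el_comm h (x.1 0) (y.1 1)]
  simp only [mul_assoc]

theorem qc_tri {G : Type} [Group G] (h : ∀ a : G, a ^ 2 = 1) (x y : XG G) (i j k : Fin 3)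
    (hij : i ≠ j) (hik : i ≠ k) (hjk : j ≠ k) :
    qc x i y * qc x j y = qc x k y := by
  have h0 := qc_mul h x y
  have c := el_comm h
  have e1 := el_cancel h
  have e2 := el_cancel2 h
  fin_cases i <;> fin_cases j <;> fin_cases k <;> simp at hij hik hjk ⊢ <;>
    first
    | exact h0
    | (rw [c]; exact h0)
    | (rw [← h0, e1])
    | (rw [← h0, e2])
    | (rw [← h0, c, e1])
    | (rw [← h0, c, e2])

theorem qc_inj {G : Type} [Group G] (x : XG G) (d : Fin 3) (y z : XG G) :
    qc x d y = qc x d z ↔ y.1 d = z.1 d := by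
  unfold qc
  exact mul_left_inj _

theorem qc_one {G : Type} [Group G] (h : ∀ a : G, a ^ 2 = 1) (x : XG G) (d : Fin 3) (y : XG G) :
    qc x d y = 1 ↔ x.1 d = y.1 d := by
  have : qc x d x = 1 := el_sq h _
  rw [← this, qc_inj]
  exact eq_comm

theorem qc_ext {G : Type} [Group G] (h : ∀ a : G, a ^ 2 = 1) (x y z : XG G) (i j : Fin 3)
    (hij : i ≠ j) (hi : qc x i y = qc x i z) (hj : qc x j y = qc x j z) : y = z := by
  obtain ⟨k, hik, hjk⟩ : ∃ k : Fin 3, i ≠ k ∧ j ≠ k := by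
    clear hi hj
    revert i j; decide
  have hk : qc x k y = qc x k z := by
    rw [← qc_tri h x y i j k hij hik hjk, ← qc_tri h x z i j k hij hik hjk, hi, hj]
  apply Subtype.ext
  funext d
  rw [← qc_inj x]
  have : d = i ∨ d = j ∨ d = k := by
    clear hi hj hk
    revert i j k d; decide
  rcases this with rfl | rfl | rfl <;> assumption

theorem qc_ex {G : Type} [Group G] (h : ∀ a : G, a ^ 2 = 1) (x : XG G) (i j : Fin 3)
    (hij : i ≠ j) (s t : G) : ∃ y : XG G, qc x i y = s ∧ qc x j y = t := by
  have key : ∀ s t : G, ∃ y : XG G, qc x 0 y = s ∧ qc x 1 y = t := by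
    intro s t
    refine ⟨⟨![s * x.1 0, t * x.1 1, s * x.1 0 * (t * x.1 1)], by simp⟩, ?_, ?_⟩
    · simp [qc, el_cancel2 h]
    · simp [qc, el_cancel2 h]
  have c := el_comm h
  have e1 := el_cancel h
  have e2 := el_cancel2 h
  have e3 : ∀ a b : G, b * a * b = a := fun a b => by rw [c b a, e2]
  obtain ⟨y1, h1, h1'⟩ := key s t
  obtain ⟨y2, h2, h2'⟩ := key t s
  obtain ⟨y3, h3, h3'⟩ := key s (s * t)
  obtain ⟨y4, h4, h4'⟩ := key (s * t) s
  obtain ⟨y5, h5, h5'⟩ := key t (s * t)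
  obtain ⟨y6, h6, h6'⟩ := key (s * t) t
  have m1 := qc_mul h x y1
  have m2 := qc_mul h x y2
  have m3 := qc_mul h x y3
  have m4 := qc_mul h x y4
  have m5 := qc_mul h x y5
  have m6 := qc_mul h x y6
  fin_cases i <;> fin_cases j <;> try exact absurd rfl hij
  · exact ⟨y1, h1, h1'⟩
  · exact ⟨y3, h3, m3.symm.trans (by rw [h3, h3', e1])⟩
  · exact ⟨y2, h2', h2⟩
  · exact ⟨y4, h4', m4.symm.trans (by rw [h4, h4', e3])⟩
  · exact ⟨y5, m5.symm.trans (by rw [h5, h5', c s t, e1]), h5⟩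
  · exact ⟨y6, m6.symm.trans (by rw [h6, h6', e2]), h6'⟩

theorem fin3_all (P : Fin 3 → Prop) (h0 : P 0) (h1 : P 1) (h2 : P 2) (d : Fin 3) : P d := by
  fin_cases d <;> assumption

theorem rel_zero {G : Type} [Group G] (y z : XG G) : rel 0 y z ↔ y = z := by simp [rel]

theorem rel_one {G : Type} [Group G] (y z : XG G) :
    rel 1 y z ↔ y ≠ z ∧ y.1 0 = z.1 0 := by simp [rel, cIdx]

theorem rel_two {G : Type} [Group G] (y z : XG G) :
    rel 2 y z ↔ y ≠ z ∧ y.1 1 = z.1 1 := by simp [rel, cIdx]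

theorem rel_three {G : Type} [Group G] (y z : XG G) :
    rel 3 y z ↔ y ≠ z ∧ y.1 2 = z.1 2 := by simp [rel, cIdx]

theorem rel_four {G : Type} [Group G] (y z : XG G) :
    rel 4 y z ↔ y.1 0 ≠ z.1 0 ∧ y.1 1 ≠ z.1 1 ∧ y.1 2 ≠ z.1 2 := by
  have : rel 4 y z ↔ ∀ d : Fin 3, y.1 d ≠ z.1 d := by simp [rel]
  rw [this]
  exact ⟨fun H => ⟨H 0, H 1, H 2⟩, fun H => fin3_all _ H.1 H.2.1 H.2.2⟩

theorem rel_iff {G : Type} [Group G] (h : ∀ a : G, a ^ 2 = 1) (x y : XG G) (a : Fin 5) :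
    rel a x y ↔ ∀ d, (qc x d y ≠ 1 ↔ okc a d) := by
  have hx : ∀ d, qc x d x = 1 := fun d => el_sq h _
  have hne : ∀ i j : Fin 3, i ≠ j → qc x i y = 1 → (x ≠ y ↔ qc x j y ≠ 1) := by
    intro i j hij hi
    refine not_congr ⟨?_, ?_⟩
    · rintro rfl; exact hx _
    · intro hj
      exact qc_ext h x x y i j hij (by rw [hx, hi]) (by rw [hx, hj])
  have main : ∀ c i j : Fin 3, c ≠ i → c ≠ j → i ≠ j →
      (x ≠ y ∧ x.1 c = y.1 c ↔ (qc x c y = 1 ∧ qc x i y ≠ 1 ∧ qc x j y ≠ 1)) := by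
    intro c i j hi hj _
    rw [← qc_one h]
    constructor
    · rintro ⟨h1, h2⟩
      exact ⟨h2, (hne c i hi h2).1 h1, (hne c j hj h2).1 h1⟩
    · rintro ⟨h1, h2, _⟩
      exact ⟨(hne c i hi h1).2 h2, h1⟩
  have ex : (∀ d, (qc x d y ≠ 1 ↔ okc a d)) ↔
      ((qc x 0 y ≠ 1 ↔ okc a 0) ∧ (qc x 1 y ≠ 1 ↔ okc a 1) ∧ (qc x 2 y ≠ 1 ↔ okc a 2)) :=
    ⟨fun H => ⟨H 0, H 1, H 2⟩, fun H => fin3_all _ H.1 H.2.1 H.2.2⟩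
  rw [ex]
  have m0 := main 0 1 2 (by decide) (by decide) (by decide)
  have m1 := main 1 0 2 (by decide) (by decide) (by decide)
  have m2 := main 2 0 1 (by decide) (by decide) (by decide)
  have c : ∀ i : Fin 5, i = 0 ∨ i = 1 ∨ i = 2 ∨ i = 3 ∨ i = 4 := by decide
  rcases c a with rfl | rfl | rfl | rfl | rfl
  · have o : ¬ okc 0 0 ∧ ¬ okc 0 1 ∧ ¬ okc 0 2 := by decide
    rw [rel_zero]
    simp only [o, iff_false, not_not]
    constructor
    · rintro rfl
      exact ⟨hx _, hx _, hx _⟩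
    · rintro ⟨h0, h1, -⟩
      exact qc_ext h x x y 0 1 (by decide) (by rw [hx, h0]) (by rw [hx, h1])
  · have o : ¬ okc 1 0 ∧ okc 1 1 ∧ okc 1 2 := by decide
    rw [rel_one, m0]
    simp only [o, iff_false, iff_true, not_not]
  · have o : okc 2 0 ∧ ¬ okc 2 1 ∧ okc 2 2 := by decide
    rw [rel_two, m1]
    simp only [o, iff_false, iff_true, not_not]
    exact and_left_comm
  · have o : okc 3 0 ∧ okc 3 1 ∧ ¬ okc 3 2 := by decide
    rw [rel_three, m2]
    simp only [o, iff_false, iff_true, not_not]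
    exact ⟨fun H => ⟨H.2.1, H.2.2, H.1⟩, fun H => ⟨H.2.2, H.1, H.2.1⟩⟩
  · have o : okc 4 0 ∧ okc 4 1 ∧ okc 4 2 := by decide
    rw [rel_four]
    simp only [o, iff_true, ne_eq, qc_one h]

theorem okc_inj : ∀ a c : Fin 5, (∀ d, okc a d ↔ okc c d) → a = c := by decide

theorem rel_unique {G : Type} [Group G] (h : ∀ a : G, a ^ 2 = 1) {x y : XG G} {a c : Fin 5}
    (ha : rel a x y) (hc : rel c x y) : a = c := by
  rw [rel_iff h] at ha hc
  exact okc_inj a c fun d => (ha d).symm.trans (hc d)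

theorem rel_ex {G : Type} [Group G] (y z : XG G) :
    ∃ a : Fin 5, rel a y z := by
  by_cases h0 : y = z
  · exact ⟨0, (rel_zero _ _).2 h0⟩
  by_cases h1 : y.1 0 = z.1 0
  · exact ⟨1, (rel_one _ _).2 ⟨h0, h1⟩⟩
  by_cases h2 : y.1 1 = z.1 1
  · exact ⟨2, (rel_two _ _).2 ⟨h0, h2⟩⟩
  by_cases h3 : y.1 2 = z.1 2
  · exact ⟨3, (rel_three _ _).2 ⟨h0, h3⟩⟩
  exact ⟨4, (rel_four _ _).2 ⟨h1, h2, h3⟩⟩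

theorem qc_coll {G : Type} [Group G] (h : ∀ a : G, a ^ 2 = 1) {x y : XG G} {a : Fin 5}
    (ha : rel a x y) (h4 : a ≠ 4) {i j : Fin 3} (hi : okc a i) (hj : okc a j) :
    qc x i y = qc x j y := by
  by_cases hij : i = j
  · rw [hij]
  have hi2 := hi.2.resolve_left h4
  have hj2 := hj.2.resolve_left h4
  have h1 := qc_tri h x y (cIdx a) i j hi2 hj2 hij
  have h2 : qc x (cIdx a) y = 1 := by
    by_contra hh
    have := ((rel_iff h x y a).1 ha (cIdx a)).1 hh
    exact (this.2.resolve_left h4) rfl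
  rw [h2, one_mul] at h1
  exact h1

end Aux

section Mats

variable {F : Type} [Field F] {G : Type} [Group G] [Fintype G] [DecidableEq G]

def cls : Fin 6 → Fin 5
  | 0 => 1
  | 1 => 2
  | 2 => 3
  | 3 => 4
  | 4 => 4
  | 5 => 4

def crd : Fin 6 → Fin 3
  | 0 => 1
  | 1 => 0
  | 2 => 0
  | 3 => 0
  | 4 => 1
  | 5 => 2

theorem okc_pt : ∀ p, okc (cls p) (crd p) := by decide

def Jm (F : Type) [Field F] {G : Type} [Group G] [DecidableEq G] (x : XG G) (a c : Fin 5) :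
    Matrix (XG G) (XG G) F :=
  Matrix.of fun y z => if rel a x y ∧ rel c x z then 1 else 0

def Nm (F : Type) [Field F] {G : Type} [Group G] [DecidableEq G] (x : XG G)
    (a : Fin 5) (i : Fin 3) (c : Fin 5) (j : Fin 3) :
    Matrix (XG G) (XG G) F :=
  Matrix.of fun y z => if rel a x y ∧ rel c x z ∧ qc x i y = qc x j z then 1 else 0

theorem DualE_diag (x : XG G) (a : Fin 5) :
    DualE F x a = Matrix.diagonal (fun y => if rel a x y then 1 else 0) := by
  ext y z
  by_cases h : y = z
  · subst h; simp [DualE]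
  · simp [DualE, h]

theorem blk_apply (x : XG G) (a c : Fin 5) (M : Matrix (XG G) (XG G) F) (y z : XG G) :
    (DualE F x a * M * DualE F x c) y z = if rel a x y ∧ rel c x z then M y z else 0 := by
  rw [DualE_diag, DualE_diag, Matrix.mul_diagonal, Matrix.diagonal_mul]
  by_cases h1 : rel a x y <;> by_cases h2 : rel c x z <;> simp [h1, h2]

theorem DualE_idem (x : XG G) (a : Fin 5) : DualE F x a * DualE F x a = DualE F x a := by
  rw [DualE_diag, Matrix.diagonal_mul_diagonal]
  congr 1
  funext y
  by_cases h1 : rel a x y <;> simp [h1]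

theorem split_prod (x : XG G) (a b c d e : Fin 5) :
    DualE F x a * Adj F b * DualE F x c * Adj F d * DualE F x e =
    (DualE F x a * Adj F b * DualE F x c) * (DualE F x c * Adj F d * DualE F x e) := by
  conv_lhs => rw [← DualE_idem x c]
  simp only [Matrix.mul_assoc]

theorem EJE (x : XG G) (a c : Fin 5) : DualE F x a * AllOne F G * DualE F x c = Jm F x a c := by
  ext y z
  rw [blk_apply]
  simp [AllOne, Jm]

theorem sum_aux (h : ∀ a : G, a ^ 2 = 1) (x : XG G) (c : Fin 5) (j k : Fin 3)
    (hj : okc c j) (hk : okc c k) :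
    ∃ α β : F, (c ≠ 4 → α = 0 ∧ β = 1) ∧ ∀ s t : G, s ≠ 1 → t ≠ 1 →
      (∑ z : XG G, if rel c x z ∧ qc x j z = s ∧ qc x k z = t then (1 : F) else 0) =
        α + if s = t then β else 0 := by
  by_cases h4 : c = 4
  · subst h4
    by_cases hjk : j = k
    · subst hjk
      refine ⟨0, ((Fintype.card G - 2 : ℕ) : F), fun H => absurd rfl H, ?_⟩
      intro s t hs ht
      by_cases hst : s = t
      · subst hst
        simp only [and_self, if_true, zero_add]
        rw [Finset.sum_boole]
        congr 1
        obtain ⟨k, l, hk, hl, hkl⟩ : ∃ k l : Fin 3, j ≠ k ∧ j ≠ l ∧ k ≠ l := by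
          clear hj hk
          revert j; decide
        have h1 : (Finset.univ.filter fun g : G => g ≠ 1 ∧ g ≠ s).card = Fintype.card G - 2 := by
          have : (Finset.univ.filter fun g : G => g ≠ 1 ∧ g ≠ s) = Finset.univ \ {1, s} := by
            ext g; simp
          rw [this, Finset.card_sdiff_of_subset (Finset.subset_univ _), Finset.card_univ,
            Finset.card_pair (Ne.symm hs)]
        rw [← h1]
        have hr : ∀ z, rel 4 x z ↔ ∀ d, qc x d z ≠ 1 := by
          intro z
          rw [rel_iff h]
          have : ∀ d, okc 4 d := by decide
          simp only [this, iff_true]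
        refine Finset.card_bij (fun z _ => qc x k z) ?_ ?_ ?_
        · intro z hz
          simp only [Finset.mem_filter, Finset.mem_univ, true_and, hr] at hz ⊢
          refine ⟨hz.1 k, fun e => hz.1 l ?_⟩
          rw [← qc_tri h x z j k l hk hl hkl, hz.2, e, el_sq h]
        · intro z hz z' hz' e
          simp only [Finset.mem_filter, Finset.mem_univ, true_and] at hz hz'
          exact qc_ext h x z z' j k hk (by rw [hz.2, hz'.2]) e
        · intro g hg
          simp only [Finset.mem_filter, Finset.mem_univ, true_and] at hg
          obtain ⟨z, hz1, hz2⟩ := qc_ex h x j k hk s g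
          refine ⟨z, ?_, hz2⟩
          simp only [Finset.mem_filter, Finset.mem_univ, true_and, hr]
          refine ⟨?_, hz1⟩
          intro d
          have : d = j ∨ d = k ∨ d = l := by
            clear hz1 hz2 hj hr
            revert j k l d; decide
          rcases this with rfl | rfl | rfl
          · rwa [hz1]
          · rw [hz2]; exact hg.1
          · rw [← qc_tri h x z j k d hk hl hkl, hz1, hz2]
            intro e
            apply hg.2
            have := el_cancel h s g
            rw [e, mul_one] at this
            exact this.symm
      · rw [if_neg hst, add_zero]
        apply Finset.sum_eq_zero
        intro z _
        rw [if_neg]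
        rintro ⟨-, h1, h2⟩
        exact hst (h1.symm.trans h2)
    · refine ⟨1, -1, fun H => absurd rfl H, ?_⟩
      intro s t hs ht
      obtain ⟨z0, h1, h2⟩ := qc_ex h x j k hjk s t
      obtain ⟨l, hl, hl'⟩ : ∃ l : Fin 3, j ≠ l ∧ k ≠ l := by
        clear h1 h2 hj hk
        revert j k; decide
      have key : ∀ z, (rel 4 x z ∧ qc x j z = s ∧ qc x k z = t) ↔ (z = z0 ∧ s ≠ t) := by
        intro z
        constructor
        · rintro ⟨hr, e1, e2⟩
          refine ⟨qc_ext h x z z0 j k hjk (by rw [e1, h1]) (by rw [e2, h2]), ?_⟩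
          rintro rfl
          have := ((rel_iff h x z 4).1 hr l).2 (by clear * -; revert l; decide)
          apply this
          rw [← qc_tri h x z j k l hjk hl hl', e1, e2, el_sq h]
        · rintro ⟨rfl, hst⟩
          refine ⟨?_, h1, h2⟩
          rw [rel_iff h]
          intro d
          have o : okc 4 d := by clear * -; revert d; decide
          refine iff_of_true ?_ o
          have : d = j ∨ d = k ∨ d = l := by
            clear h1 h2 hj hk o
            revert j k l d; decide
          rcases this with rfl | rfl | rfl
          · rwa [h1]
          · rwa [h2]
          · rw [← qc_tri h x z j k d hjk hl hl', h1, h2]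
            intro e
            apply hst
            have := el_cancel h s t
            rwa [e, mul_one] at this
      simp only [key]
      by_cases hst : s = t
      · simp [hst]
      · simp [hst]
  · refine ⟨0, 1, fun _ => ⟨rfl, rfl⟩, ?_⟩
    intro s t hs ht
    have hjc := hj.2.resolve_left h4
    obtain ⟨z0, h1, h2⟩ := qc_ex h x (cIdx c) j hjc 1 s
    have hz0 : rel c x z0 := by
      rw [rel_iff h]
      intro d
      by_cases hd : cIdx c = d
      · subst hd
        refine iff_of_false (fun H => H h1) ?_
        rintro ⟨-, H⟩
        exact (H.resolve_left h4) rfl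
      · refine iff_of_true ?_ ⟨hj.1, Or.inr hd⟩
        by_cases hdj : d = j
        · rw [hdj, h2]; exact hs
        · rw [← qc_tri h x z0 (cIdx c) j d hjc hd (Ne.symm hdj), h1, h2, one_mul]
          exact hs
    have key : ∀ z, (rel c x z ∧ qc x j z = s ∧ qc x k z = t) ↔ (z = z0 ∧ s = t) := by
      intro z
      constructor
      · rintro ⟨hr, e1, e2⟩
        have e3 := qc_coll h hr h4 hj hk
        refine ⟨?_, by rw [← e1, ← e2, e3]⟩
        refine qc_ext h x z z0 (cIdx c) j hjc ?_ (by rw [e1, h2])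
        rw [h1]
        by_contra hh
        exact ((((rel_iff h x z c).1 hr (cIdx c)).1 hh).2.resolve_left h4) rfl
      · rintro ⟨rfl, hst⟩
        exact ⟨hz0, h2, by rw [← qc_coll h hz0 h4 hj hk, h2, hst]⟩
    simp only [key]
    by_cases hst : s = t
    · simp [hst]
    · simp [hst]

theorem rel_ne_one (h : ∀ a : G, a ^ 2 = 1) {x y : XG G} {a : Fin 5} {i : Fin 3}
    (hi : okc a i) (hr : rel a x y) : qc x i y ≠ 1 :=
  ((rel_iff h x y a).1 hr i).2 hi

theorem NN (h : ∀ a : G, a ^ 2 = 1) (x : XG G) (a c d : Fin 5) (i j k l : Fin 3)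
    (hi : okc a i) (hj : okc c j) (hk : okc c k) (hl : okc d l) :
    ∃ α β : F, (c ≠ 4 → α = 0 ∧ β = 1) ∧
      Nm F x a i c j * Nm F x c k d l = α • Jm F x a d + β • Nm F x a i d l := by
  obtain ⟨α, β, h1, h2⟩ := sum_aux (F := F) h x c j k hj hk
  refine ⟨α, β, h1, ?_⟩
  ext y w
  simp only [Matrix.mul_apply, Nm, Jm, Matrix.of_apply, Matrix.add_apply, Matrix.smul_apply]
  by_cases hy : rel a x y
  · by_cases hw : rel d x w
    · have := h2 (qc x i y) (qc x l w) (rel_ne_one h hi hy) (rel_ne_one h hl hw)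
      simp only [hy, hw, true_and, and_true, smul_eq_mul, if_true, mul_one, mul_ite, mul_zero]
      rw [← this]
      apply Finset.sum_congr rfl
      intro z _
      by_cases e0 : rel c x z <;> by_cases e1 : qc x i y = qc x j z <;>
        by_cases e2 : qc x k z = qc x l w <;> simp [e0, e1, e2, eq_comm]
    · simp [hw]
  · simp [hy]

theorem JN (h : ∀ a : G, a ^ 2 = 1) (x : XG G) (a c d : Fin 5) (k l : Fin 3)
    (hk : okc c k) (hl : okc d l) :
    ∃ α : F, Jm F x a c * Nm F x c k d l = α • Jm F x a d := by
  obtain ⟨α, β, h1, h2⟩ := sum_aux (F := F) h x c k k hk hk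
  refine ⟨α + β, ?_⟩
  ext y w
  simp only [Matrix.mul_apply, Nm, Jm, Matrix.of_apply, Matrix.smul_apply]
  by_cases hy : rel a x y
  · by_cases hw : rel d x w
    · have := h2 (qc x l w) (qc x l w) (rel_ne_one h hl hw) (rel_ne_one h hl hw)
      rw [if_pos rfl] at this
      simp only [hy, hw, true_and, and_true, smul_eq_mul, if_true, mul_one]
      rw [← this]
      apply Finset.sum_congr rfl
      intro z _
      by_cases e0 : rel c x z <;> by_cases e2 : qc x k z = qc x l w <;> simp [e0, e2]
    · simp [hw]
  · simp [hy]

theorem NJ (h : ∀ a : G, a ^ 2 = 1) (x : XG G) (a c d : Fin 5) (i j : Fin 3)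
    (hi : okc a i) (hj : okc c j) :
    ∃ α : F, Nm F x a i c j * Jm F x c d = α • Jm F x a d := by
  obtain ⟨α, β, h1, h2⟩ := sum_aux (F := F) h x c j j hj hj
  refine ⟨α + β, ?_⟩
  ext y w
  simp only [Matrix.mul_apply, Nm, Jm, Matrix.of_apply, Matrix.smul_apply]
  by_cases hy : rel a x y
  · by_cases hw : rel d x w
    · have := h2 (qc x i y) (qc x i y) (rel_ne_one h hi hy) (rel_ne_one h hi hy)
      rw [if_pos rfl] at this
      simp only [hy, hw, true_and, and_true, smul_eq_mul, if_true, mul_one]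
      rw [← this]
      apply Finset.sum_congr rfl
      intro z _
      by_cases e0 : rel c x z <;> by_cases e2 : qc x i y = qc x j z <;> simp [e0, e2]
      · exact fun H => absurd H.symm e2
    · simp [hw]
  · simp [hy]

theorem JJ (x : XG G) (a c d : Fin 5) :
    ∃ α : F, Jm F x a c * Jm F x c d = α • Jm F x a d := by
  refine ⟨∑ z : XG G, if rel c x z then 1 else 0, ?_⟩
  ext y w
  simp only [Matrix.mul_apply, Jm, Matrix.of_apply, Matrix.smul_apply]
  by_cases hy : rel a x y
  · by_cases hw : rel d x w
    · simp only [hy, hw, true_and, and_true, smul_eq_mul, if_true, mul_one]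
      apply Finset.sum_congr rfl
      intro z _
      by_cases e0 : rel c x z <;> simp [e0]
    · simp [hw]
  · simp [hy]

def Blk (x : XG G) (a c : Fin 5) (M : Matrix (XG G) (XG G) F) : Prop :=
  ∀ y z, M y z ≠ 0 → rel a x y ∧ rel c x z

theorem Blk_J (x : XG G) (a c : Fin 5) : Blk x a c (Jm F x a c) := by
  intro y z hh
  by_contra H
  simp [Jm, H] at hh

theorem Blk_N (x : XG G) (a c : Fin 5) (i j : Fin 3) : Blk x a c (Nm F x a i c j) := by
  intro y z hh
  by_contra H
  rw [← not_not (a := rel a x y ∧ rel c x z)] at *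
  apply hh
  simp only [Nm, Matrix.of_apply]
  rw [if_neg]
  tauto

theorem Blk_E (x : XG G) (a : Fin 5) : Blk x a a (DualE F x a) := by
  intro y z hh
  simp only [DualE, Matrix.of_apply, ne_eq, ite_eq_right_iff, not_forall] at hh
  obtain ⟨⟨rfl, h2⟩, _⟩ := hh
  exact ⟨h2, h2⟩

theorem Blk_mul_zero (h : ∀ a : G, a ^ 2 = 1) (x : XG G) {a c c' d : Fin 5}
    {M N : Matrix (XG G) (XG G) F}
    (hM : Blk x a c M) (hN : Blk x c' d N) (hc : c ≠ c') : M * N = 0 := by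
  ext y w
  rw [Matrix.mul_apply]
  apply Finset.sum_eq_zero
  intro z _
  by_contra H
  exact hc (rel_unique h (hM y z (left_ne_zero_of_mul H)).2 (hN z w (right_ne_zero_of_mul H)).1)

theorem E_mul (x : XG G) {a c : Fin 5} {M : Matrix (XG G) (XG G) F} (hM : Blk x a c M) :
    DualE F x a * M = M := by
  ext y z
  rw [DualE_diag, Matrix.diagonal_mul]
  by_cases hh : M y z = 0
  · simp [hh]
  · simp [(hM y z hh).1]

theorem mul_E (x : XG G) {a c : Fin 5} {M : Matrix (XG G) (XG G) F} (hM : Blk x a c M) :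
    M * DualE F x c = M := by
  ext y z
  rw [DualE_diag, Matrix.mul_diagonal]
  by_cases hh : M y z = 0
  · simp [hh]
  · simp [(hM y z hh).2]

def Np (F : Type) [Field F] {G : Type} [Group G] [DecidableEq G] (x : XG G)
    (p r : Fin 6) : Matrix (XG G) (XG G) F := Nm F x (cls p) (crd p) (cls r) (crd r)

def Wset (F : Type) [Field F] {G : Type} [Group G] [DecidableEq G] (x : XG G) :
    Set (Matrix (XG G) (XG G) F) :=
  {M | (∃ a c, M = Jm F x a c) ∨ M = DualE F x 4 ∨ ∃ p r, M = Np F x p r}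

theorem Wset_blk (x : XG G) {M : Matrix (XG G) (XG G) F} (hM : M ∈ Wset F x) :
    ∃ a c, Blk x a c M := by
  rcases hM with ⟨a, c, rfl⟩ | rfl | ⟨p, r, rfl⟩
  · exact ⟨_, _, Blk_J x a c⟩
  · exact ⟨_, _, Blk_E x 4⟩
  · exact ⟨_, _, Blk_N x _ _ _ _⟩

theorem W_mul_gen (h : ∀ a : G, a ^ 2 = 1) (x : XG G) {M N : Matrix (XG G) (XG G) F}
    (hM : M ∈ Wset F x) (hN : N ∈ Wset F x) : M * N ∈ Submodule.span F (Wset F x) := by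
  have sJ : ∀ a c, Jm F x a c ∈ Submodule.span F (Wset F x) := fun a c =>
    Submodule.subset_span (Or.inl ⟨a, c, rfl⟩)
  have sN : ∀ p r, Np F x p r ∈ Submodule.span F (Wset F x) := fun a c =>
    Submodule.subset_span (Or.inr (Or.inr ⟨a, c, rfl⟩))
  have hM0 := Submodule.subset_span (R := F) hM
  have hN0 := Submodule.subset_span (R := F) hN
  obtain ⟨a0, c0, b0⟩ := Wset_blk x hM
  obtain ⟨a1, c1, b1⟩ := Wset_blk x hN
  rcases hM with ⟨a, c, rfl⟩ | rfl | ⟨p, r, rfl⟩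
  · rcases hN with ⟨a', c', rfl⟩ | rfl | ⟨p', r', rfl⟩
    · by_cases e : c = a'
      · subst e
        obtain ⟨α, e⟩ := JJ (F := F) x a c c'
        rw [e]
        exact Submodule.smul_mem _ _ (sJ _ _)
      · rw [Blk_mul_zero h x (Blk_J x a c) (Blk_J x a' c') e]
        exact Submodule.zero_mem _
    · by_cases e : c = 4
      · subst e
        rwa [mul_E x (Blk_J x a 4)]
      · rw [Blk_mul_zero h x (Blk_J x a c) (Blk_E x 4) e]
        exact Submodule.zero_mem _
    · by_cases e : c = cls p'
      · subst e
        obtain ⟨α, e⟩ := JN (F := F) h x a _ _ _ _ (okc_pt p') (okc_pt r')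
        unfold Np
        rw [e]
        exact Submodule.smul_mem _ _ (sJ _ _)
      · rw [Np, Blk_mul_zero h x (Blk_J x a c) (Blk_N x _ _ _ _) e]
        exact Submodule.zero_mem _
  · by_cases e : 4 = a1
    · subst e
      rwa [E_mul x b1]
    · rw [Blk_mul_zero h x (Blk_E x 4) b1 e]
      exact Submodule.zero_mem _
  · rcases hN with ⟨a', c', rfl⟩ | rfl | ⟨p', r', rfl⟩
    · by_cases e : cls r = a'
      · subst e
        obtain ⟨α, e⟩ := NJ (F := F) h x _ _ c' _ _ (okc_pt p) (okc_pt r)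
        unfold Np
        rw [e]
        exact Submodule.smul_mem _ _ (sJ _ _)
      · rw [Np, Blk_mul_zero h x (Blk_N x _ _ _ _) (Blk_J x a' c') e]
        exact Submodule.zero_mem _
    · by_cases e : cls r = 4
      · have : Blk x (cls p) 4 (Np F x p r) := e ▸ Blk_N x _ _ _ _
        rwa [mul_E x this]
      · rw [Np, Blk_mul_zero h x (Blk_N x _ _ _ _) (Blk_E x 4) e]
        exact Submodule.zero_mem _
    · by_cases e : cls r = cls p'
      · have hk : okc (cls r) (crd p') := e ▸ okc_pt p'
        obtain ⟨α, β, -, e'⟩ := NN (F := F) h x _ _ _ _ _ _ _ (okc_pt p) (okc_pt r) hk (okc_pt r')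
        unfold Np
        rw [← e, e']
        exact Submodule.add_mem _ (Submodule.smul_mem _ _ (sJ _ _))
          (Submodule.smul_mem _ _ (sN p r'))
      · rw [Np, Np, Blk_mul_zero h x (Blk_N x _ _ _ _) (Blk_N x _ _ _ _) e]
        exact Submodule.zero_mem _

theorem W_mul (h : ∀ a : G, a ^ 2 = 1) (x : XG G) {M N : Matrix (XG G) (XG G) F}
    (hM : M ∈ Submodule.span F (Wset F x)) (hN : N ∈ Submodule.span F (Wset F x)) :
    M * N ∈ Submodule.span F (Wset F x) := by
  have h1 := Submodule.mul_mem_mul hM hN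
  rw [Submodule.span_mul_span] at h1
  refine (Submodule.span_le.2 ?_) h1
  rintro _ ⟨A, hA, B, hB, rfl⟩
  exact W_mul_gen h x hA hB

end Mats

section Gens

variable {F : Type} [Field F] {G : Type} [Group G] [Fintype G] [DecidableEq G]

theorem rel_mid (x : XG G) (b : Fin 5) (h0 : b ≠ 0) (h4 : b ≠ 4) (y z : XG G) :
    rel b y z ↔ y ≠ z ∧ qc x (cIdx b) y = qc x (cIdx b) z := by
  rw [qc_inj]
  simp [rel, h0, h4]

def pt (a : Fin 5) (i : Fin 3) : Fin 6 :=
  match a with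
  | 0 => 0
  | 1 => 0
  | 2 => 1
  | 3 => 2
  | 4 => match i with
    | 0 => 3
    | 1 => 4
    | 2 => 5

theorem pt_cls : ∀ a i, okc a i → cls (pt a i) = a := by decide

theorem pt_crd : ∀ i, crd (pt 4 i) = i := by decide

theorem pt_ok (a : Fin 5) (i : Fin 3) (hi : okc a i) : okc a (crd (pt a i)) := by
  have := okc_pt (pt a i)
  rwa [pt_cls a i hi] at this

theorem q_pt (h : ∀ a : G, a ^ 2 = 1) {x y : XG G} {a : Fin 5} {i : Fin 3} (hi : okc a i)
    (hr : rel a x y) : qc x (crd (pt a i)) y = qc x i y := by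
  by_cases h4 : a = 4
  · subst h4
    rw [pt_crd]
  · exact qc_coll h hr h4 (pt_ok a i hi) hi

theorem Nm_pt (h : ∀ a : G, a ^ 2 = 1) (x : XG G) {a c : Fin 5} {i j : Fin 3} (hi : okc a i)
    (hj : okc c j) : Nm F x a i c j = Np F x (pt a i) (pt c j) := by
  ext y z
  simp only [Np, Nm, Matrix.of_apply, pt_cls a i hi, pt_cls c j hj]
  congr 1
  apply propext
  constructor
  · rintro ⟨h1, h2, h3⟩
    exact ⟨h1, h2, by rw [q_pt h hi h1, q_pt h hj h2, h3]⟩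
  · rintro ⟨h1, h2, h3⟩
    rw [q_pt h hi h1, q_pt h hj h2] at h3
    exact ⟨h1, h2, h3⟩

theorem EAE_N (h : ∀ a : G, a ^ 2 = 1) (x : XG G) (a b c : Fin 5) (hac : a ≠ c)
    (hb0 : b ≠ 0) (hb4 : b ≠ 4) :
    DualE F x a * Adj F b * DualE F x c = Nm F x a (cIdx b) c (cIdx b) := by
  ext y z
  rw [blk_apply]
  simp only [Adj, Nm, Matrix.of_apply, rel_mid x b hb0 hb4]
  by_cases h1 : rel a x y
  · by_cases h2 : rel c x z
    · have : y ≠ z := by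
        rintro rfl
        exact hac (rel_unique h h1 h2)
      simp [h1, h2, this]
    · simp [h2]
  · simp [h1]

theorem okc_mid : ∀ a b : Fin 5, a ≠ 0 → b ≠ 0 → b ≠ 4 → b ≠ a → okc a (cIdx b) := by decide

theorem EAE_Np (h : ∀ a : G, a ^ 2 = 1) (x : XG G) (a b c : Fin 5) (hac : a ≠ c)
    (hb0 : b ≠ 0) (hb4 : b ≠ 4) (ha : a ≠ 0) (hc : c ≠ 0) (hba : b ≠ a) (hbc : b ≠ c) :
    DualE F x a * Adj F b * DualE F x c = Np F x (pt a (cIdx b)) (pt c (cIdx b)) := by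
  rw [EAE_N h x a b c hac hb0 hb4,
    Nm_pt h x (okc_mid a b ha hb0 hb4 hba) (okc_mid c b hc hb0 hb4 hbc)]

theorem prod_Np (h : ∀ a : G, a ^ 2 = 1) (x : XG G) (a b c d e : Fin 5) (hac : a ≠ c)
    (hce : c ≠ e)
    (hb0 : b ≠ 0) (hb4 : b ≠ 4) (hd0 : d ≠ 0) (hd4 : d ≠ 4) (ha : a ≠ 0) (hc : c ≠ 0)
    (hc4 : c ≠ 4) (he : e ≠ 0) (hba : b ≠ a) (hbc : b ≠ c) (hdc : d ≠ c) (hde : d ≠ e) :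
    DualE F x a * Adj F b * DualE F x c * Adj F d * DualE F x e =
      Np F x (pt a (cIdx b)) (pt e (cIdx d)) := by
  rw [split_prod, EAE_N h x a b c hac hb0 hb4, EAE_N h x c d e hce hd0 hd4]
  obtain ⟨α, β, h1, h2⟩ := NN (F := F) h x a c e (cIdx b) (cIdx b) (cIdx d) (cIdx d)
    (okc_mid a b ha hb0 hb4 hba) (okc_mid c b hc hb0 hb4 hbc)
    (okc_mid c d hc hd0 hd4 hdc) (okc_mid e d he hd0 hd4 hde)
  rw [h2, (h1 hc4).1, (h1 hc4).2, zero_smul, zero_add, one_smul,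
    Nm_pt h x (okc_mid a b ha hb0 hb4 hba) (okc_mid e d he hd0 hd4 hde)]

theorem EAzE (h : ∀ a : G, a ^ 2 = 1) (x : XG G) (a c : Fin 5) :
    DualE F x a * Adj F 0 * DualE F x c = if a = c then DualE F x a else 0 := by
  have : Adj F 0 = (1 : Matrix (XG G) (XG G) F) := by
    ext y z
    simp [Adj, rel_zero, Matrix.one_apply]
  rw [this, mul_one]
  split_ifs with hh
  · subst hh
    exact DualE_idem x a
  · exact Blk_mul_zero h x (Blk_E x a) (Blk_E x c) hh

theorem DualE_Np (h : ∀ a : G, a ^ 2 = 1) (x : XG G) (p : Fin 6) (hp : cls p ≠ 4) :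
    DualE F x (cls p) = Np F x p p := by
  ext y z
  simp only [Np, Nm, DualE, Matrix.of_apply]
  congr 1
  apply propext
  constructor
  · rintro ⟨rfl, h1⟩
    exact ⟨h1, h1, rfl⟩
  · rintro ⟨h1, h2, h3⟩
    refine ⟨?_, h1⟩
    have ho := (okc_pt p).2.resolve_left hp
    have hn : ¬ okc (cls p) (cIdx (cls p)) := fun H => (H.2.resolve_left hp) rfl
    have t1 : qc x (cIdx (cls p)) y = 1 := by
      by_contra H
      exact hn (((rel_iff h x y _).1 h1 _).1 H)
    have t2 : qc x (cIdx (cls p)) z = 1 := by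
      by_contra H
      exact hn (((rel_iff h x z _).1 h2 _).1 H)
    exact qc_ext h x y z _ _ ho (by rw [t1, t2]) h3

theorem AllOne_sum (h : ∀ a : G, a ^ 2 = 1) : AllOne F G = ∑ b : Fin 5, Adj F b := by
  ext y z
  rw [Matrix.sum_apply]
  obtain ⟨a, ha⟩ := rel_ex y z
  rw [Finset.sum_eq_single a]
  · simp [AllOne, Adj, ha]
  · intro b _ hb
    simp only [Adj, Matrix.of_apply]
    rw [if_neg]
    exact fun H => hb (rel_unique h H ha)
  · simp

theorem one_sum (h : ∀ a : G, a ^ 2 = 1) (x : XG G) :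
    (1 : Matrix (XG G) (XG G) F) = ∑ b : Fin 5, DualE F x b := by
  ext y z
  rw [Matrix.sum_apply]
  obtain ⟨a, ha⟩ := rel_ex x y
  rw [Finset.sum_eq_single a]
  · simp [DualE, ha, Matrix.one_apply]
  · intro b _ hb
    simp only [DualE, Matrix.of_apply]
    rw [if_neg]
    exact fun H => hb (rel_unique h H.2 ha)
  · simp

theorem Jm_sum (h : ∀ a : G, a ^ 2 = 1) (x : XG G) (a c : Fin 5) :
    Jm F x a c = ∑ b : Fin 5, DualE F x a * Adj F b * DualE F x c := by
  rw [← EJE, AllOne_sum h, Finset.mul_sum, Finset.sum_mul]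

theorem cls_surj : ∀ a : Fin 5, a = 0 ∨ a = 4 ∨ ∃ p, cls p = a ∧ cls p ≠ 4 := by decide

theorem DualE_mem (h : ∀ a : G, a ^ 2 = 1) (x : XG G) (a : Fin 5) :
    DualE F x a ∈ Submodule.span F (Wset F x) := by
  rcases cls_surj a with rfl | rfl | ⟨p, rfl, hp⟩
  · have : DualE F x 0 = Jm F x 0 0 := by
      ext y z
      simp only [DualE, Jm, Matrix.of_apply, rel_zero]
      congr 1
      apply propext
      constructor
      · rintro ⟨rfl, rfl⟩; exact ⟨rfl, rfl⟩
      · rintro ⟨rfl, rfl⟩; exact ⟨rfl, rfl⟩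
    rw [this]
    exact Submodule.subset_span (Or.inl ⟨0, 0, rfl⟩)
  · exact Submodule.subset_span (Or.inr (Or.inl rfl))
  · rw [DualE_Np h x p hp]
    exact Submodule.subset_span (Or.inr (Or.inr ⟨p, p, rfl⟩))

theorem Nm_mem (h : ∀ a : G, a ^ 2 = 1) (x : XG G) (a c : Fin 5) (i j : Fin 3) :
    Nm F x a i c j ∈ Submodule.span F (Wset F x) := by
  by_cases h1 : okc a i
  · by_cases h2 : okc c j
    · rw [Nm_pt h x h1 h2]
      exact Submodule.subset_span (Or.inr (Or.inr ⟨_, _, rfl⟩))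
    · have : Nm F x a i c j = 0 := by
        ext y z
        simp only [Nm, Matrix.of_apply, Matrix.zero_apply]
        rw [if_neg]
        rintro ⟨e1, e2, e3⟩
        have := rel_ne_one h h1 e1
        rw [e3] at this
        exact h2 (((rel_iff h x z c).1 e2 j).1 this)
      rw [this]
      exact Submodule.zero_mem _
  · by_cases h2 : okc c j
    · have : Nm F x a i c j = 0 := by
        ext y z
        simp only [Nm, Matrix.of_apply, Matrix.zero_apply]
        rw [if_neg]
        rintro ⟨e1, e2, e3⟩
        have := rel_ne_one h h2 e2
        rw [← e3] at this
        exact h1 (((rel_iff h x y a).1 e1 i).1 this)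
      rw [this]
      exact Submodule.zero_mem _
    · have : Nm F x a i c j = Jm F x a c := by
        ext y z
        simp only [Nm, Jm, Matrix.of_apply]
        congr 1
        apply propext
        constructor
        · rintro ⟨e1, e2, e3⟩
          exact ⟨e1, e2⟩
        · rintro ⟨e1, e2⟩
          refine ⟨e1, e2, ?_⟩
          have t1 : qc x i y = 1 := by
            by_contra H
            exact h1 (((rel_iff h x y _).1 e1 _).1 H)
          have t2 : qc x j z = 1 := by
            by_contra H
            exact h2 (((rel_iff h x z _).1 e2 _).1 H)
          rw [t1, t2]
      rw [this]
      exact Submodule.subset_span (Or.inl ⟨_, _, rfl⟩)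

theorem EAE_diag (x : XG G) (a b : Fin 5)
    (hb0 : b ≠ 0) (hb4 : b ≠ 4) :
    DualE F x a * Adj F b * DualE F x a = Nm F x a (cIdx b) a (cIdx b) - DualE F x a := by
  ext y z
  rw [blk_apply]
  simp only [Adj, Nm, DualE, Matrix.of_apply, rel_mid x b hb0 hb4, Matrix.sub_apply]
  by_cases h1 : rel a x y
  · by_cases h3 : y = z
    · subst h3
      simp [h1]
    · simp [h1, h3]
      by_cases h2 : rel a x z <;> simp [h2]
  · simp [h1]

theorem gen_mem (h : ∀ a : G, a ^ 2 = 1) (x : XG G) (a b c : Fin 5) :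
    DualE F x a * Adj F b * DualE F x c ∈ Submodule.span F (Wset F x) := by
  have mid : ∀ b : Fin 5, b ≠ 4 →
      DualE F x a * Adj F b * DualE F x c ∈ Submodule.span F (Wset F x) := by
    intro b hb4
    by_cases hb0 : b = 0
    · subst hb0
      rw [EAzE h]
      split_ifs
      · exact DualE_mem h x a
      · exact Submodule.zero_mem _
    by_cases hac : a = c
    · subst hac
      rw [EAE_diag x a b hb0 hb4]
      exact Submodule.sub_mem _ (Nm_mem h x _ _ _ _) (DualE_mem h x a)
    · rw [EAE_N h x a b c hac hb0 hb4]
      exact Nm_mem h x _ _ _ _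
  by_cases hb4 : b = 4
  · subst hb4
    have := Jm_sum (F := F) h x a c
    rw [Fin.sum_univ_five] at this
    rw [← sub_eq_iff_eq_add'.2 this]
    refine Submodule.sub_mem _ (Submodule.subset_span (Or.inl ⟨_, _, rfl⟩)) ?_
    exact Submodule.add_mem _ (Submodule.add_mem _ (Submodule.add_mem _ (mid 0 (by decide))
      (mid 1 (by decide))) (mid 2 (by decide))) (mid 3 (by decide))
  · exact mid b hb4

theorem T_le (h : ∀ a : G, a ^ 2 = 1) (x : XG G) :
    Subalgebra.toSubmodule (TerwilligerAlg F G x) ≤ Submodule.span F (Wset F x) := by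
  intro M hM
  have hM' : M ∈ Algebra.adjoin F (genSet F G x) := hM
  clear hM
  induction hM' using Algebra.adjoin_induction with
  | mem M hM =>
    obtain ⟨a, b, c, rfl⟩ := hM
    exact gen_mem h x a b c
  | algebraMap r =>
    rw [Algebra.algebraMap_eq_smul_one, one_sum h x]
    exact Submodule.smul_mem _ _ (Submodule.sum_mem _ fun a _ => DualE_mem h x a)
  | add M N h1 h2 h3 h4 => exact Submodule.add_mem _ h3 h4
  | mul M N h1 h2 h3 h4 => exact W_mul h x h3 h4

theorem S_le_T (h : ∀ a : G, a ^ 2 = 1) (x : XG G) {M : Matrix (XG G) (XG G) F}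
    (hM : M ∈ B1set F G x ∪ B2set F G x ∪ B5set F G x ∪ B6set F G x) :
    M ∈ TerwilligerAlg F G x := by
  have g : ∀ a b c, DualE F x a * Adj F b * DualE F x c ∈ TerwilligerAlg F G x :=
    fun a b c => Algebra.subset_adjoin ⟨a, b, c, rfl⟩
  have g5 : ∀ a b c d e, DualE F x a * Adj F b * DualE F x c * Adj F d * DualE F x e
      ∈ TerwilligerAlg F G x := by
    intro a b c d e
    rw [split_prod]
    exact Subalgebra.mul_mem _ (g _ _ _) (g _ _ _)
  rcases hM with ((hM | hM) | hM) | hM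
  · obtain ⟨a, c, b, -, -, -, -, -, rfl⟩ := hM
    exact g _ _ _
  · obtain ⟨a, b, rfl⟩ := hM
    rw [EJE, Jm_sum h]
    exact Subalgebra.sum_mem _ fun b _ => g _ _ _
  · rcases hM with rfl | rfl | rfl | rfl | rfl | rfl <;> exact g5 _ _ _ _ _
  · obtain ⟨a, b, c, -, rfl⟩ := hM
    exact g5 _ _ _ _ _

end Gens

section Basis

variable {F : Type} [Field F] {G : Type} [Group G] [Fintype G] [DecidableEq G]

def Vp (F : Type) [Field F] {G : Type} [Group G] [DecidableEq G] (x : XG G)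
    (p r : Fin 6) : Matrix (XG G) (XG G) F :=
  Matrix.of fun y z => if rel (cls p) x y ∧ rel (cls r) x z ∧ qc x (crd p) y = qc x (crd r) z ∧
    ¬ (y = z ∧ cls p = 4) then 1 else 0

def vfam (F : Type) [Field F] {G : Type} [Group G] [DecidableEq G] (x : XG G) :
    (Fin 5 × Fin 5) ⊕ Option (Fin 6 × Fin 6) → Matrix (XG G) (XG G) F
  | Sum.inl ac => Jm F x ac.1 ac.2
  | Sum.inr none => DualE F x 4
  | Sum.inr (some pr) => Vp F x pr.1 pr.2

theorem crd_inj : ∀ p r : Fin 6, cls p = cls r → crd p = crd r → p = r := by decide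

theorem Vp_eq (h : ∀ a : G, a ^ 2 = 1) (x : XG G) (p r : Fin 6) (hpr : p ≠ r ∨ cls p ≠ 4) :
    Vp F x p r = Np F x p r := by
  ext y z
  simp only [Vp, Np, Nm, Matrix.of_apply]
  congr 1
  apply propext
  constructor
  · rintro ⟨e1, e2, e3, -⟩
    exact ⟨e1, e2, e3⟩
  · rintro ⟨e1, e2, e3⟩
    refine ⟨e1, e2, e3, ?_⟩
    rintro ⟨rfl, hp⟩
    have hc := rel_unique h e1 e2
    have hne : crd p ≠ crd r := fun H => (hpr.resolve_right (fun H' => H' hp)) (crd_inj p r hc H)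
    obtain ⟨l, hl, hl'⟩ : ∃ l : Fin 3, crd p ≠ l ∧ crd r ≠ l := by
      generalize crd p = i at *
      generalize crd r = j at *
      clear * - hne
      revert i j; decide
    rw [hp] at e1
    have ho : okc 4 l := by clear * -; revert l; decide
    apply rel_ne_one h ho e1
    rw [← qc_tri h x y _ _ l hne hl hl', e3, el_sq h]

theorem Vp_diag (x : XG G) (p : Fin 6) (b : Fin 5) (hb0 : b ≠ 0) (hb4 : b ≠ 4)
    (hp : cls p = 4) (hb : cIdx b = crd p) :
    DualE F x 4 * Adj F b * DualE F x 4 = Vp F x p p := by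
  ext y z
  rw [blk_apply]
  simp only [Vp, Adj, Matrix.of_apply, rel_mid x b hb0 hb4, hp, hb, and_true]
  by_cases h1 : rel 4 x y
  · by_cases h2 : rel 4 x z
    · simp [h1, h2, and_comm]
    · simp [h2]
  · simp [h1]

theorem Np_diag (x : XG G) (p : Fin 6) (hp : cls p = 4) :
    Np F x p p = Vp F x p p + DualE F x 4 := by
  ext y z
  simp only [Vp, Np, Nm, DualE, Matrix.of_apply, Matrix.add_apply, hp]
  by_cases h1 : rel 4 x y
  · by_cases h3 : y = z
    · subst h3
      simp [h1]
    · simp [h1, h3]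
  · simp [h1]

theorem mk_pt (h : ∀ a : G, a ^ 2 = 1) (x : XG G) (p : Fin 6) (A B : G) (hA : A ≠ 1) (hB : B ≠ 1)
    (hAB : A ≠ B) : ∃ y : XG G, rel (cls p) x y ∧ qc x (crd p) y = A ∧
      ∀ p', cls p' = cls p → p' ≠ p → qc x (crd p') y = B ∨ qc x (crd p') y = A * B := by
  by_cases h4 : cls p = 4
  · obtain ⟨k, l, hk, hl, hkl⟩ : ∃ k l : Fin 3, crd p ≠ k ∧ crd p ≠ l ∧ k ≠ l := by
      generalize crd p = j
      revert j; decide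
    obtain ⟨y, h1, h2⟩ := qc_ex h x (crd p) k hk A B
    have h3 := qc_tri h x y _ _ _ hk hl hkl
    rw [h1, h2] at h3
    have hd : ∀ d, d = crd p ∨ d = k ∨ d = l := by
      generalize crd p = j at *
      clear * - hk hl hkl
      revert j k l; decide
    refine ⟨y, ?_, h1, ?_⟩
    · rw [h4, rel_iff h]
      intro d
      refine iff_of_true ?_ (by clear * -; revert d; decide)
      rcases hd d with rfl | rfl | rfl
      · rwa [h1]
      · rwa [h2]
      · rw [← h3]
        intro e
        apply hAB
        have := el_cancel h A B
        rwa [e, mul_one] at this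
    · intro p' hp' hne
      rcases hd (crd p') with e | e | e
      · exact absurd (crd_inj _ _ hp' e) hne
      · rw [e]; exact Or.inl h2
      · rw [e]; exact Or.inr h3.symm
  · have ho := (okc_pt p).2.resolve_left h4
    obtain ⟨y, h1, h2⟩ := qc_ex h x (cIdx (cls p)) (crd p) ho 1 A
    refine ⟨y, ?_, h2, ?_⟩
    · rw [rel_iff h]
      intro d
      by_cases hd : cIdx (cls p) = d
      · subst hd
        refine iff_of_false (fun H => H h1) ?_
        rintro ⟨-, H⟩
        exact (H.resolve_left h4) rfl
      · refine iff_of_true ?_ ⟨(okc_pt p).1, Or.inr hd⟩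
        by_cases hdj : d = crd p
        · rw [hdj, h2]; exact hA
        · rw [← qc_tri h x y (cIdx (cls p)) (crd p) d ho hd (Ne.symm hdj), h1, h2, one_mul]
          exact hA
    · intro p' hp' hne
      exfalso
      clear * - h4 hp' hne
      revert p p'; decide

theorem four_indep (h : ∀ a : G, a ^ 2 = 1) (hcard : 8 < Fintype.card G) :
    ∃ A B D E : G, A ≠ 1 ∧ B ≠ 1 ∧ A ≠ B ∧ D ≠ 1 ∧ E ≠ 1 ∧ D ≠ E ∧
      (A ≠ D ∧ B ≠ D ∧ A * B ≠ D) ∧ (A ≠ E ∧ B ≠ E ∧ A * B ≠ E) ∧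
      (A ≠ D * E ∧ B ≠ D * E ∧ A * B ≠ D * E) := by
  have pick : ∀ s : Finset G, s.card ≤ 8 → ∃ g, g ∉ s := by
    intro s hs
    by_contra H
    push Not at H
    have : s = Finset.univ := Finset.eq_univ_iff_forall.2 H
    rw [this, Finset.card_univ] at hs
    omega
  obtain ⟨A, hA⟩ := pick {1} (by simp)
  obtain ⟨B, hB⟩ := pick {1, A} (Finset.card_le_two.trans (by norm_num))
  obtain ⟨D, hD⟩ := pick {1, A, B, A * B} (Finset.card_le_four.trans (by norm_num))
  obtain ⟨E, hE⟩ := pick ({1, A, B, A * B} ∪ {D, D * A, D * B, D * (A * B)})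
    ((Finset.card_union_le _ _).trans
      (Nat.add_le_add Finset.card_le_four Finset.card_le_four))
  simp only [Finset.mem_union, Finset.mem_insert, Finset.mem_singleton, not_or] at hA hB hD hE
  have key : ∀ X : G, E ≠ D * X → X ≠ D * E := by
    rintro X hX rfl
    exact hX (el_cancel h D E).symm
  obtain ⟨⟨e1, e2, e3, e4⟩, e5, e6, e7, e8⟩ := hE
  exact ⟨A, B, D, E, hA, hB.1, Ne.symm hB.2, hD.1, e1, Ne.symm e5,
    ⟨Ne.symm hD.2.1, Ne.symm hD.2.2.1, Ne.symm hD.2.2.2⟩,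
    ⟨Ne.symm e2, Ne.symm e3, Ne.symm e4⟩, key _ e6, key _ e7, key _ e8⟩

theorem cls_surj' : ∀ a : Fin 5, a = 0 ∨ ∃ p, cls p = a := by decide

theorem cls_ne : ∀ p, cls p ≠ 0 := by decide

theorem mk_any (h : ∀ a : G, a ^ 2 = 1) (x : XG G) (a : Fin 5) (A B : G) (hA : A ≠ 1) (hB : B ≠ 1)
    (hAB : A ≠ B) : ∃ y : XG G, rel a x y ∧
      ∀ p', cls p' = a → qc x (crd p') y = A ∨ qc x (crd p') y = B ∨ qc x (crd p') y = A * B := by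
  rcases cls_surj' a with rfl | ⟨p, rfl⟩
  · exact ⟨x, (rel_zero _ _).2 rfl, fun p' hp' => absurd hp' (cls_ne p')⟩
  · obtain ⟨y, h1, h2, h3⟩ := mk_pt h x p A B hA hB hAB
    refine ⟨y, h1, fun p' hp' => ?_⟩
    by_cases e : p' = p
    · subst e; exact Or.inl h2
    · exact Or.inr (h3 p' hp' e)

theorem gen_rep (h : ∀ a : G, a ^ 2 = 1) (hcard : 8 < Fintype.card G) (x : XG G) (a c : Fin 5) :
    ∃ y z : XG G, rel a x y ∧ rel c x z ∧
      ∀ p r, cls p = a → cls r = c → qc x (crd p) y ≠ qc x (crd r) z := by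
  obtain ⟨A, B, D, E, hA, hB, hAB, hD, hE, hDE, ⟨n1, n2, n3⟩, ⟨n4, n5, n6⟩, n7, n8, n9⟩ :=
    four_indep h hcard
  obtain ⟨y, hy1, hy2⟩ := mk_any h x a A B hA hB hAB
  obtain ⟨z, hz1, hz2⟩ := mk_any h x c D E hD hE hDE
  refine ⟨y, z, hy1, hz1, ?_⟩
  intro p r hp hr
  rcases hy2 p hp with e | e | e <;> rcases hz2 r hr with e' | e' | e' <;> rw [e, e'] <;>
    assumption

theorem spec_rep (h : ∀ a : G, a ^ 2 = 1) (hcard : 8 < Fintype.card G) (x : XG G) (p r : Fin 6) :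
    ∃ y z : XG G, rel (cls p) x y ∧ rel (cls r) x z ∧ qc x (crd p) y = qc x (crd r) z ∧
      ¬ (y = z ∧ cls p = 4) ∧
      ∀ p' r', cls p' = cls p → cls r' = cls r → qc x (crd p') y = qc x (crd r') z →
        p' = p ∧ r' = r := by
  obtain ⟨A, B, D, E, hA, hB, hAB, hD, hE, hDE, ⟨n1, n2, n3⟩, -⟩ := four_indep h hcard
  obtain ⟨y, hy1, hy2, hy3⟩ := mk_pt h x p A B hA hB hAB
  obtain ⟨z, hz1, hz2, hz3⟩ := mk_pt h x r A D hA hD n1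
  have uniq : ∀ p' r', cls p' = cls p → cls r' = cls r → qc x (crd p') y = qc x (crd r') z →
        p' = p ∧ r' = r := by
    intro p' r' hp' hr' e
    have k1 : A ≠ A * B := fun e => hB (left_eq_mul.1 e)
    have k2 : A ≠ A * D := fun e => hD (left_eq_mul.1 e)
    have k3 : B ≠ A * D := fun e => n3 (by rw [e, el_cancel h])
    have k4 : A * B ≠ A * D := fun e => n2 (mul_left_cancel e)
    by_cases ep : p' = p
    · by_cases er : r' = r
      · exact ⟨ep, er⟩
      · subst ep
        rw [hy2] at e
        rcases hz3 r' hr' er with e' | e' <;> rw [e'] at e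
        · exact absurd e n1
        · exact absurd e k2
    · by_cases er : r' = r
      · subst er
        rw [hz2] at e
        rcases hy3 p' hp' ep with e' | e' <;> rw [e'] at e
        · exact absurd e.symm hAB
        · exact absurd e.symm k1
      · rcases hz3 r' hr' er with e' | e' <;> rcases hy3 p' hp' ep with e'' | e'' <;>
          rw [e', e''] at e
        · exact absurd e n2
        · exact absurd e n3
        · exact absurd e k3
        · exact absurd e k4
  refine ⟨y, z, hy1, hz1, by rw [hy2, hz2], ?_, uniq⟩
  rintro ⟨rfl, hp⟩
  have hc : cls r = 4 := by rw [← hp]; exact rel_unique h hz1 hy1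
  obtain ⟨p', hp', hne⟩ : ∃ p', cls p' = 4 ∧ p' ≠ p := by
    clear * -
    revert p; decide
  obtain ⟨u1, u2⟩ := uniq p' p' (hp'.trans hp.symm) (hp'.trans hc.symm) rfl
  exact hne u1

theorem vfam_indep (h : ∀ a : G, a ^ 2 = 1) (hcard : 8 < Fintype.card G) (x : XG G) :
    LinearIndependent F (vfam F x) := by
  rw [Fintype.linearIndependent_iff]
  intro g hg
  have ev : ∀ a c y z, rel a x y → rel c x z →
      g (Sum.inl (a, c)) + (g (Sum.inr none) * DualE F x 4 y z +
        ∑ pr : Fin 6 × Fin 6, g (Sum.inr (some pr)) * Vp F x pr.1 pr.2 y z) = 0 := by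
    intro a c y z hy hz
    have := congrFun (congrFun hg y) z
    rw [Matrix.sum_apply, Fintype.sum_sum_type, Fintype.sum_option] at this
    simp only [Matrix.smul_apply, smul_eq_mul, vfam, Matrix.zero_apply] at this
    rw [Finset.sum_eq_single (a, c)] at this
    · simpa [Jm, hy, hz] using this
    · rintro ⟨a', c'⟩ _ hne
      simp only [Jm, Matrix.of_apply]
      rw [if_neg, mul_zero]
      rintro ⟨h1, h2⟩
      exact hne (by rw [rel_unique h h1 hy, rel_unique h h2 hz])
    · simp
  have gJ : ∀ a c, g (Sum.inl (a, c)) = 0 := by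
    intro a c
    obtain ⟨y, z, hy, hz, hn⟩ := gen_rep h hcard x a c
    have := ev a c y z hy hz
    have e1 : DualE F x 4 y z = 0 := by
      simp only [DualE, Matrix.of_apply]
      rw [if_neg]
      rintro ⟨rfl, h4⟩
      exact hn 3 3 (rel_unique h h4 hy) (rel_unique h h4 hz) rfl
    rw [e1, mul_zero, zero_add, Finset.sum_eq_zero, add_zero] at this
    · exact this
    · rintro ⟨p, r⟩ _
      simp only [Vp, Matrix.of_apply]
      rw [if_neg, mul_zero]
      rintro ⟨h1, h2, h3, -⟩
      exact hn p r (rel_unique h h1 hy) (rel_unique h h2 hz) h3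
  have gV : ∀ p r, g (Sum.inr (some (p, r))) = 0 := by
    intro p r
    obtain ⟨y, z, hy, hz, hq, hyz, hn⟩ := spec_rep h hcard x p r
    have := ev _ _ y z hy hz
    have e1 : DualE F x 4 y z = 0 := by
      simp only [DualE, Matrix.of_apply]
      rw [if_neg]
      rintro ⟨rfl, h4⟩
      exact hyz ⟨rfl, rel_unique h hy h4⟩
    rw [gJ, e1, mul_zero, zero_add, zero_add, Finset.sum_eq_single (p, r)] at this
    · simpa only [Vp, Matrix.of_apply, hy, hz, hq, hyz, not_false_eq_true, and_self, if_true,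
        mul_one] using this
    · rintro ⟨p', r'⟩ _ hne
      simp only [Vp, Matrix.of_apply]
      rw [if_neg, mul_zero]
      rintro ⟨h1, h2, h3, -⟩
      obtain ⟨rfl, rfl⟩ := hn p' r' (rel_unique h h1 hy) (rel_unique h h2 hz) h3
      exact hne rfl
    · simp
  have gE : g (Sum.inr none) = 0 := by
    obtain ⟨y, z, hy, -⟩ := gen_rep h hcard x 4 4
    have := ev 4 4 y y hy hy
    rw [gJ, zero_add, Finset.sum_eq_zero, add_zero] at this
    · simpa [DualE, hy] using this
    · rintro ⟨p, r⟩ _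
      rw [gV, zero_mul]
  rintro (⟨a, c⟩ | _ | ⟨p, r⟩)
  · exact gJ a c
  · exact gE
  · exact gV p r

theorem Vp_ne (h : ∀ a : G, a ^ 2 = 1) (hcard : 8 < Fintype.card G) (x : XG G) (p r : Fin 6) :
    Vp F x p r ≠ 0 := (vfam_indep (F := F) h hcard x).ne_zero (Sum.inr (some (p, r)))

theorem rel_symm {b : Fin 5} {y z : XG G} (hr : rel b y z) : rel b z y := by
  unfold rel at *
  split_ifs at * with h0 h4
  · exact hr.symm
  · exact fun d => (hr d).symm
  · exact ⟨hr.1.symm, hr.2.symm⟩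

theorem B1mem (x : XG G) (a b c : Fin 5) (ha : a ≠ 0) (hc : c ≠ 0) (hb : b ≠ 4)
    (hm : b ≠ max a c) (hne : DualE F x a * Adj F b * DualE F x c ≠ 0) :
    DualE F x a * Adj F b * DualE F x c ∈ B1set F G x := by
  have m1 : ∀ a : Fin 5, a ≠ 0 → a ∈ ({1, 2, 3, 4} : Finset (Fin 5)) := by decide
  have m2 : ∀ a : Fin 5, a ≠ 4 → a ∈ ({0, 1, 2, 3} : Finset (Fin 5)) := by decide
  refine ⟨a, c, b, m1 a ha, m1 c hc, m2 b hb, hm, ?_, rfl⟩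
  by_contra H
  apply hne
  ext y z
  rw [blk_apply]
  split_ifs with hh
  · simp only [Adj, Matrix.of_apply, Matrix.zero_apply]
    rw [if_neg]
    intro hr
    exact H ⟨x, y, hh.1, z, hh.2, rel_symm hr⟩
  · rfl

theorem DualE_ne (h : ∀ a : G, a ^ 2 = 1) (hcard : 8 < Fintype.card G) (x : XG G) (a : Fin 5) :
    DualE F x a ≠ 0 := by
  obtain ⟨y, z, hy, -⟩ := gen_rep h hcard x a a
  intro H
  have := congrFun (congrFun H y) y
  simp [DualE, hy] at this

theorem comb1 : ∀ p r : Fin 6, (p = r ∧ cls p ≠ 4) ∨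
    (p = r ∧ cls p = 4 ∧ ∃ b : Fin 5, b ≠ 0 ∧ b ≠ 4 ∧ cIdx b = crd p) ∨
    (∃ b : Fin 5, b ≠ 0 ∧ b ≠ 4 ∧ b ≠ cls p ∧ b ≠ cls r ∧ cls p ≠ cls r ∧
      pt (cls p) (cIdx b) = p ∧ pt (cls r) (cIdx b) = r) ∨
    ((p = 0 ∧ r = 3) ∨ (p = 1 ∧ r = 4) ∨ (p = 2 ∧ r = 5) ∨
      (p = 3 ∧ r = 0) ∨ (p = 4 ∧ r = 1) ∨ (p = 5 ∧ r = 2)) ∨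
    (p ≠ r ∧ cls p = 4 ∧ cls r = 4) := by decide

theorem comb2 : ∀ p r : Fin 6, p ≠ r → cls p = 4 → cls r = 4 → ∃ a b c : Fin 5,
    ({a, b, c} : Finset (Fin 5)) = {1, 2, 3} ∧ pt 4 (cIdx a) = p ∧ pt 4 (cIdx c) = r := by
  decide

theorem comb3 : ∀ a b c : Fin 5, ({a, b, c} : Finset (Fin 5)) = {1, 2, 3} →
    (a ≠ 0 ∧ a ≠ 4) ∧ (b ≠ 0 ∧ b ≠ 4) ∧ (c ≠ 0 ∧ c ≠ 4) ∧ a ≠ b ∧ b ≠ c ∧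
    pt 4 (cIdx a) ≠ pt 4 (cIdx c) := by
  decide

theorem B6_eq (h : ∀ a : G, a ^ 2 = 1) (x : XG G) (a b c : Fin 5)
    (hh : ({a, b, c} : Finset (Fin 5)) = {1, 2, 3}) :
    DualE F x 4 * Adj F a * DualE F x b * Adj F c * DualE F x 4 =
      Vp F x (pt 4 (cIdx a)) (pt 4 (cIdx c)) := by
  obtain ⟨⟨a0, a4⟩, ⟨b0, b4⟩, ⟨c0, c4⟩, hab, hbc, hne⟩ := comb3 a b c hh
  rw [Vp_eq h x _ _ (Or.inl hne)]
  exact prod_Np h x 4 a b c 4 b4.symm b4 a0 a4 c0 c4 (by decide) b0 b4 (by decide) a4 hab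
    hbc.symm c4

theorem V_mem (h : ∀ a : G, a ^ 2 = 1) (hcard : 8 < Fintype.card G) (x : XG G)
    (i : (Fin 5 × Fin 5) ⊕ Option (Fin 6 × Fin 6)) :
    vfam F x i ∈ B1set F G x ∪ B2set F G x ∪ B5set F G x ∪ B6set F G x := by
  have hE : ∀ a : Fin 5, a ≠ 0 → DualE F x a ∈ B1set F G x := by
    intro a ha
    have e := EAzE (F := F) h x a a
    rw [if_pos rfl] at e
    have := B1mem (F := F) x a 0 a ha ha (by decide) (by rw [max_self]; exact ha.symm)
      (by rw [e]; exact DualE_ne h hcard x a)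
    rwa [e] at this
  rcases i with ⟨a, c⟩ | _ | ⟨p, r⟩
  · exact Or.inl (Or.inl (Or.inr ⟨a, c, (EJE x a c).symm⟩))
  · exact Or.inl (Or.inl (Or.inl (hE 4 (by decide))))
  · have hne := Vp_ne (F := F) h hcard x p r
    change Vp F x p r ∈ _
    rcases comb1 p r with ⟨rfl, hp⟩ | ⟨rfl, hp, b, b0, b4, hb⟩ | ⟨b, b0, b4, bp, br, hpr, e1, e2⟩ |
      hh | ⟨hpr, hp, hr⟩
    · rw [Vp_eq h x p p (Or.inr hp), ← DualE_Np h x p hp]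
      exact Or.inl (Or.inl (Or.inl (hE _ (cls_ne p))))
    · rw [← Vp_diag x p b b0 b4 hp hb] at hne ⊢
      exact Or.inl (Or.inl (Or.inl (B1mem x 4 b 4 (by decide) (by decide) b4
        (by rw [max_self]; exact b4) hne)))
    · have e := EAE_Np (F := F) h x (cls p) b (cls r) hpr b0 b4 (cls_ne p) (cls_ne r) bp br
      rw [e1, e2, ← Vp_eq h x p r (Or.inl (fun H => hpr (by rw [H])))] at e
      rw [← e] at hne ⊢
      refine Or.inl (Or.inl (Or.inl (B1mem x _ b _ (cls_ne p) (cls_ne r) b4 ?_ hne)))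
      rcases max_choice (cls p) (cls r) with e | e <;> rw [e] <;> assumption
    · refine Or.inl (Or.inr ?_)
      have hpr : p ≠ r := by clear * - hh; revert p r; decide
      rw [Vp_eq h x p r (Or.inl hpr)]
      rcases hh with ⟨rfl, rfl⟩ | ⟨rfl, rfl⟩ | ⟨rfl, rfl⟩ | ⟨rfl, rfl⟩ | ⟨rfl, rfl⟩ | ⟨rfl, rfl⟩
      · exact Or.inl (prod_Np h x 1 2 3 1 4 (by decide) (by decide) (by decide) (by decide)
          (by decide) (by decide) (by decide) (by decide) (by decide) (by decide) (by decide)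
          (by decide) (by decide) (by decide)).symm
      · exact Or.inr (Or.inl (prod_Np h x 2 1 3 2 4 (by decide) (by decide) (by decide) (by decide)
          (by decide) (by decide) (by decide) (by decide) (by decide) (by decide) (by decide)
          (by decide) (by decide) (by decide)).symm)
      · exact Or.inr (Or.inr (Or.inl (prod_Np h x 3 1 2 3 4 (by decide) (by decide) (by decide)
          (by decide) (by decide) (by decide) (by decide) (by decide) (by decide) (by decide)
          (by decide) (by decide) (by decide) (by decide)).symm))
      · exact Or.inr (Or.inr (Or.inr (Or.inl (prod_Np h x 4 1 3 2 1 (by decide) (by decide)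
          (by decide) (by decide) (by decide) (by decide) (by decide) (by decide) (by decide)
          (by decide) (by decide) (by decide) (by decide) (by decide)).symm)))
      · exact Or.inr (Or.inr (Or.inr (Or.inr (Or.inl (prod_Np h x 4 2 3 1 2 (by decide) (by decide)
          (by decide) (by decide) (by decide) (by decide) (by decide) (by decide) (by decide)
          (by decide) (by decide) (by decide) (by decide) (by decide)).symm))))
      · exact Or.inr (Or.inr (Or.inr (Or.inr (Or.inr (prod_Np h x 4 3 2 1 3 (by decide) (by decide)
          (by decide) (by decide) (by decide) (by decide) (by decide) (by decide) (by decide)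
          (by decide) (by decide) (by decide) (by decide) (by decide)).symm))))
    · obtain ⟨a, b, c, hh, rfl, rfl⟩ := comb2 p r hpr hp hr
      exact Or.inr ⟨a, b, c, hh, (B6_eq h x a b c hh).symm⟩

theorem W_le (h : ∀ a : G, a ^ 2 = 1) (hcard : 8 < Fintype.card G) (x : XG G) :
    Submodule.span F (Wset F x) ≤
      Submodule.span F (B1set F G x ∪ B2set F G x ∪ B5set F G x ∪ B6set F G x) := by
  have hv := fun i => Submodule.subset_span (R := F) (V_mem (F := F) h hcard x i)
  refine Submodule.span_le.2 ?_
  rintro M (⟨a, c, rfl⟩ | rfl | ⟨p, r, rfl⟩)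
  · exact hv (Sum.inl (a, c))
  · exact hv (Sum.inr none)
  · by_cases hpr : p = r ∧ cls p = 4
    · obtain ⟨rfl, hp⟩ := hpr
      rw [Np_diag x p hp]
      exact Submodule.add_mem _ (hv (Sum.inr (some (p, p)))) (hv (Sum.inr none))
    · rw [← Vp_eq h x p r (by tauto)]
      exact hv (Sum.inr (some (p, r)))

theorem pt_inj_cls (a c : Fin 5) (i j : Fin 3) (hi : okc a i) (hj : okc c j) (hac : a ≠ c) :
    pt a i ≠ pt c j := by
  intro H
  have := pt_cls a i hi
  rw [H, pt_cls c j hj] at this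
  exact hac this.symm

theorem comb4 : ∀ b : Fin 5, b ≠ 0 → b ≠ 4 → cls (pt 4 (cIdx b)) = 4 ∧
    cIdx b = crd (pt 4 (cIdx b)) := by decide

theorem S_range (h : ∀ a : G, a ^ 2 = 1) (x : XG G) :
    B1set F G x ∪ B2set F G x ∪ B5set F G x ∪ B6set F G x ⊆ Set.range (vfam F x) := by
  have hNV : ∀ p r, (p ≠ r ∨ cls p ≠ 4) → Np F x p r ∈ Set.range (vfam F x) := by
    intro p r hpr
    exact ⟨Sum.inr (some (p, r)), Vp_eq h x p r hpr⟩
  rintro M (((hM | hM) | hM) | hM)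
  · obtain ⟨a, c, b, ha, hc, hb, hm, ⟨u, v, huv, w, huw, hwv⟩, rfl⟩ := hM
    have m1 : ∀ a : Fin 5, a ∈ ({1, 2, 3, 4} : Finset (Fin 5)) → a ≠ 0 := by decide
    have m2 : ∀ a : Fin 5, a ∈ ({0, 1, 2, 3} : Finset (Fin 5)) → a ≠ 4 := by decide
    replace ha := m1 a ha
    replace hc := m1 c hc
    replace hb := m2 b hb
    have irr : ∀ {e : Fin 5} {y z : XG G}, e ≠ 0 → rel e y z → y ≠ z := by
      rintro e y z he hr rfl
      exact he (rel_unique h hr ((rel_zero _ _).2 rfl))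
    by_cases hac : a = c
    · subst hac
      rw [max_self] at hm
      by_cases hb0 : b = 0
      · subst hb0
        rw [EAzE h, if_pos rfl]
        by_cases ha4 : a = 4
        · subst ha4
          exact ⟨Sum.inr none, rfl⟩
        · rcases cls_surj a with rfl | rfl | ⟨p, rfl, hp⟩
          · exact absurd rfl ha
          · exact absurd rfl ha4
          · rw [DualE_Np h x p hp]
            exact hNV p p (Or.inr hp)
      · by_cases ha4 : a = 4
        · subst ha4
          obtain ⟨e1, e2⟩ := comb4 b hb0 hb
          rw [Vp_diag x (pt 4 (cIdx b)) b hb0 hb e1 e2]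
          exact ⟨Sum.inr (some (_, _)), rfl⟩
        · exfalso
          apply hm
          have r1 := (rel_mid x a ha ha4 _ _).1 huv
          have r2 := (rel_mid x a ha ha4 _ _).1 huw
          exact rel_unique h hwv ((rel_mid x a ha ha4 _ _).2
            ⟨irr hb0 hwv, r2.2.symm.trans r1.2⟩)
    · by_cases hb0 : b = 0
      · subst hb0
        rw [rel_zero] at hwv
        subst hwv
        exact absurd (rel_unique h huv huw) hac
      · have hba : b ≠ a := by
          rintro rfl
          have r1 := (rel_mid x b ha hb _ _).1 huv
          have r2 := (rel_mid x b ha hb _ _).1 hwv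
          exact hac (rel_unique h ((rel_mid x b ha hb _ _).2
            ⟨irr hc huw, r1.2.trans r2.2.symm⟩) huw)
        have hbc : b ≠ c := by
          rintro rfl
          have r1 := (rel_mid x b hc hb _ _).1 huw
          have r2 := (rel_mid x b hc hb _ _).1 hwv
          exact hac (rel_unique h huv ((rel_mid x b hc hb _ _).2
            ⟨irr ha huv, r1.2.trans r2.2⟩))
        rw [EAE_Np h x a b c hac hb0 hb ha hc hba hbc]
        exact hNV _ _ (Or.inl (pt_inj_cls _ _ _ _ (okc_mid a b ha hb0 hb hba)
          (okc_mid c b hc hb0 hb hbc) hac))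
  · obtain ⟨a, b, rfl⟩ := hM
    exact ⟨Sum.inl (a, b), (EJE x a b).symm⟩
  · rcases hM with rfl | rfl | rfl | rfl | rfl | rfl <;>
    · rw [prod_Np h x _ _ _ _ _ (by decide) (by decide) (by decide) (by decide)
          (by decide) (by decide) (by decide) (by decide) (by decide) (by decide)
          (by decide) (by decide) (by decide) (by decide)]
      exact hNV _ _ (by decide)
  · obtain ⟨a, b, c, hh, rfl⟩ := hM
    rw [B6_eq h x a b c hh]
    exact ⟨Sum.inr (some (_, _)), rfl⟩

end Basis

theorem stmt14 (F : Type) [Field F] (G : Type) [Group G] [Fintype G] [DecidableEq G]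
    (helem : ∀ a : G, a ^ 2 = 1) (hcard : 8 < Fintype.card G)
    (x : XG G) :
    LinearIndependent F
      ((↑) : ↥(B1set F G x ∪ B2set F G x ∪ B5set F G x ∪ B6set F G x) →
        Matrix (XG G) (XG G) F) ∧
    Submodule.span F (B1set F G x ∪ B2set F G x ∪ B5set F G x ∪ B6set F G x) =
      Subalgebra.toSubmodule (TerwilligerAlg F G x) := by
  refine ⟨?_, le_antisymm (Submodule.span_le.2 fun M hM => S_le_T helem x hM)
    ((T_le helem x).trans (W_le helem hcard x))⟩
  exact LinearIndepOn.mono (vfam_indep (F := F) helem hcard x).linearIndepOn_id (S_range helem x)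
end

section
/- Assume G is an elementary abelian 2-group with |G| = n and the image of n in F equals 1 (i.e. n ≡ 1 mod p where p = char F). Then there is a surjective F-algebra homomorphism from the Terwilliger F-algebra T onto M₄(F) × F × F whose kernel K is a nilpotent two-sided ideal of T (there exists m ≥ 1 such that any product of m elements of K equals the zero matrix). Consequently T/Rad T ≅ M₄(F) ⊕ M₁(F) ⊕ M₁(F) as F-algebras, where Rad T = K is the Jacobson radical of T. -/
open Matrix

namespace TW
set_option linter.unusedSectionVars false
set_option linter.unusedSimpArgs false
open scoped Kronecker

abbrev Q := Fin 3 ⊕ Fin 3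
abbrev HH (G : Type) [Group G] : Type := {h : G // h ≠ 1}

section
variable {F : Type} [Field F] {G : Type} [CommGroup G] [Fintype G] [DecidableEq G]

def mk (x : XG G) (a b : G) : XG G :=
  ⟨![x.1 0 * a, x.1 1 * b, x.1 0 * a * (x.1 1 * b)], rfl⟩

def c (x : XG G) (d : Fin 3) (y : XG G) : G := (x.1 d)⁻¹ * y.1 d

lemma c_mul (x y : XG G) : c x 0 y * c x 1 y = c x 2 y := by
  unfold c
  rw [← x.2, ← y.2, mul_inv]
  exact mul_mul_mul_comm _ _ _ _

@[simp] lemma c0_mk (x : XG G) (a b : G) : c x 0 (mk x a b) = a := by simp [c, mk]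
@[simp] lemma c1_mk (x : XG G) (a b : G) : c x 1 (mk x a b) = b := by simp [c, mk]
@[simp] lemma c2_mk (x : XG G) (a b : G) : c x 2 (mk x a b) = a * b := by
  rw [← c_mul]; simp

lemma mk_c (x y : XG G) : mk x (c x 0 y) (c x 1 y) = y := by
  apply Subtype.ext
  funext d
  fin_cases d
  · simp [mk, c]
  · simp [mk, c]
  · simpa [mk, c] using y.2

def eqv (x : XG G) : G × G ≃ XG G where
  toFun p := mk x p.1 p.2
  invFun y := (c x 0 y, c x 1 y)
  left_inv p := by simp
  right_inv y := mk_c x y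

lemma sum_X {M : Type} [AddCommMonoid M] (x : XG G) (f : XG G → M) :
    ∑ y, f y = ∑ a, ∑ b, f (mk x a b) := by
  rw [← Fintype.sum_prod_type' (f := fun a b => f (mk x a b))]
  exact (Fintype.sum_equiv (eqv x) _ _ (fun p => rfl)).symm

lemma c_eq_iff (x : XG G) (d : Fin 3) (y z : XG G) : c x d y = c x d z ↔ y.1 d = z.1 d := by
  simp [c]

lemma c_self (x : XG G) (d : Fin 3) : c x d x = 1 := by simp [c]

lemma ext2 (x : XG G) {y z : XG G} (h0 : c x 0 y = c x 0 z) (h1 : c x 1 y = c x 1 z) : y = z := by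
  rw [← mk_c x y, ← mk_c x z, h0, h1]

def pt (x : XG G) : Fin 3 → G → XG G
  | 0, h => mk x 1 h
  | 1, h => mk x h 1
  | 2, h => mk x h h

lemma c_pt (helem : ∀ a : G, a * a = 1) (x : XG G) (d i : Fin 3) (h : G) :
    c x d (pt x i h) = if d = i then 1 else h := by
  fin_cases d <;> fin_cases i <;> simp [pt, helem]

/-- The incidence matrix. -/
def C (F : Type) [Field F] (x : XG G) : Matrix (XG G) (Q × HH G) F :=
  Matrix.of fun y p => match p.1 with
    | .inl i => if y = pt x i p.2.1 then 1 else 0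
    | .inr k => if c x k y = p.2.1 then 1 else 0

def kv (F : Type) [Field F] (x : XG G) : Fin 5 → XG G → F
  | 0, y => if y = x then 1 else 0
  | 1, y => if c x 0 y = 1 then 1 else 0
  | 2, y => if c x 1 y = 1 then 1 else 0
  | 3, y => if c x 2 y = 1 then 1 else 0
  | 4, _ => 1

def Jm (F : Type) [Field F] (x : XG G) : Matrix (XG G) (Fin 5) F :=
  Matrix.of fun y a => kv F x a y

def O (F : Type) [Field F] (G : Type) [Group G] : Matrix (Q × HH G) Q F :=
  Matrix.of fun p q => if p.1 = q then 1 else 0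

def gm (F : Type) [Field F] : Matrix Q Q F := Matrix.of fun q r => match q, r with
  | .inl i, .inl j => if i = j then 1 else 0
  | .inl i, .inr j => if i = j then 0 else 1
  | .inr i, .inl j => if i = j then 0 else 1
  | .inr i, .inr j => if i = j then 1 else 0

def hm (F : Type) [Field F] : Matrix Q Q F := Matrix.of fun q r => match q, r with
  | .inl _, .inl _ => 0
  | .inl _, .inr _ => 0
  | .inr _, .inl _ => 0
  | .inr i, .inr j => if i = j then 0 else 1

def ka (F : Type) [Field F] : Matrix (Fin 5) Q F := Matrix.of fun a q => match q with
  | .inl i => (if a = i.succ.castSucc then 1 else 0) - (if a = 0 then 1 else 0)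
  | .inr i => (if a = 4 then 1 else 0) - (if a = i.succ.castSucc then 1 else 0)

def sm (F : Type) [Field F] : Matrix Q (Fin 5) F := Matrix.of fun q a => match q with
  | .inl i => (if a = i.succ.castSucc then 1 else 0) + (if a = 4 then 1 else 0)
  | .inr i => if a = 0 then 0 else if a = i.succ.castSucc then 0 else 1

def Nm (F : Type) [Field F] : Matrix (Fin 5) (Fin 5) F := Matrix.of fun _ _ => 1

lemma sum_ne_one (f : G → F) : ∑ h : HH G, f h.1 = (∑ h, f h) - f 1 := by
  rw [← Finset.sum_erase_eq_sub (Finset.mem_univ 1)]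
  symm
  apply Finset.sum_subtype
  intro h; simp

lemma card_count (hn : (Fintype.card G : F) = 1) : (Finset.card (Finset.univ : Finset G) : F) = 1 := hn

lemma kv_pt (helem : ∀ a : G, a * a = 1) (x : XG G) (i : Fin 3) (h : HH G) (a : Fin 5) :
    kv F x a (pt x i h.1) = sm F (.inl i) a := by
  have h2 := h.2
  have hx : pt x i h.1 ≠ x := by
    intro e
    have := fun d => congrArg (c x d) e
    simp only [c_pt helem, c_self] at this
    have h0 := this 0
    have h1 := this 1
    clear this
    fin_cases i <;> simp_all
  fin_cases a <;> fin_cases i <;> simp [kv, sm, c_pt helem, h2, hx] <;> simp_all [Fin.ext_iff]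

lemma C_pt (helem : ∀ a : G, a * a = 1) (x : XG G) (i : Fin 3) (h h' : HH G) (r : Q) :
    C F x (pt x i h.1) (r, h') = if h = h' then gm F (.inl i) r else 0 := by
  have h2 := h.2
  have h2' := h'.2
  rcases r with j | k
  · simp only [C, gm, Matrix.of_apply]
    have : pt x i h.1 = pt x j h'.1 ↔ (h = h' ∧ i = j) := by
      constructor
      · intro e
        have := fun d => congrArg (c x d) e
        simp only [c_pt helem] at this
        have h0 := this 0
        have h1 := this 1
        have h3 := this 2
        rw [Subtype.ext_iff]
        fin_cases i <;> fin_cases j <;> simp_all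
      · rintro ⟨rfl, rfl⟩; rfl
    simp only [this]
    split_ifs <;> simp_all
  · simp only [C, gm, Matrix.of_apply, c_pt helem]
    have : h = h' ↔ h.1 = h'.1 := Subtype.ext_iff
    simp only [this]
    split_ifs <;> simp_all

lemma sum_pt (x : XG G) (i : Fin 3) (h : HH G) (f : XG G → F) :
    ∑ y, C F x y (.inl i, h) * f y = f (pt x i h.1) := by
  simp [C]

lemma count1 (hn : (Fintype.card G : F) = 1) (x : XG G) (k : Fin 3) (g : G) :
    ∑ y, (if c x k y = g then (1 : F) else 0) = 1 := by
  have key : ∀ a b g : G, a * b = g ↔ b = a⁻¹ * g := fun a b g => by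
    rw [eq_inv_mul_iff_mul_eq]
  rw [sum_X x]
  fin_cases k <;> simp [key, hn]

lemma count2 (hn : (Fintype.card G : F) = 1) (x : XG G) (k l : Fin 3) (g g' : G) :
    ∑ y, (if c x k y = g then (1 : F) else 0) * (if c x l y = g' then (1 : F) else 0) =
      if k = l then (if g = g' then 1 else 0) else 1 := by
  have aux : ∀ k l : Fin 3, k < l → ∀ g g' : G,
      ∑ y, (if c x k y = g then (1 : F) else 0) * (if c x l y = g' then (1 : F) else 0) = 1 := by
    intro k l hkl g g'
    have key : ∀ a b g : G, a * b = g ↔ b = a⁻¹ * g := fun a b g => by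
      rw [eq_inv_mul_iff_mul_eq]
    have key2 : ∀ a b g : G, a * b = g ↔ a = g * b⁻¹ := fun a b g => by
      rw [eq_mul_inv_iff_mul_eq]
    rw [sum_X x]
    fin_cases k <;> fin_cases l <;> first | (exfalso; revert hkl; decide) | skip
    · simp
    · simp [key]
    · rw [Finset.sum_comm]; simp [key2]
  rcases lt_trichotomy k l with h | h | h
  · rw [aux k l h, if_neg h.ne]
  · subst h
    rw [if_pos rfl]
    by_cases hg : g = g'
    · subst hg
      rw [if_pos rfl]
      refine Eq.trans ?_ (count1 hn x k g)
      apply Finset.sum_congr rfl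
      intro y _; split_ifs <;> simp
    · rw [if_neg hg]
      apply Finset.sum_eq_zero
      intro y _; split_ifs <;> simp_all
  · simp_rw [mul_comm (if c x k _ = g then (1 : F) else 0)]
    rw [aux l k h, if_neg h.ne']

lemma CtC (helem : ∀ a : G, a * a = 1) (hn : (Fintype.card G : F) = 1) (x : XG G) :
    (C F x)ᵀ * C F x = gm F ⊗ₖ (1 : Matrix (HH G) (HH G) F) + O F G * hm F * (O F G)ᵀ := by
  ext ⟨q, h⟩ ⟨r, h'⟩
  have hO : (O F G * hm F * (O F G)ᵀ) (q, h) (r, h') = hm F q r := by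
    simp [O, Matrix.mul_apply, -Fintype.sum_sum_type]
  rw [Matrix.add_apply, hO, Matrix.kroneckerMap_apply, Matrix.one_apply, Matrix.mul_apply]
  simp only [Matrix.transpose_apply]
  rcases q with i | k
  · rw [sum_pt, C_pt helem]
    rcases r with j | l <;> simp [hm]
  · rcases r with j | l
    · rw [Finset.sum_congr rfl (fun y _ => mul_comm (C F x y (.inr k, h)) (C F x y (.inl j, h')))]
      rw [sum_pt, C_pt helem]
      simp only [hm, gm, Matrix.of_apply]
      rcases eq_or_ne h h' with e1 | e1 <;> rcases eq_or_ne k j with e2 | e2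
      · subst e1 e2; simp
      · subst e1; simp [e2, e2.symm]
      · subst e2; simp [e1, e1.symm]
      · simp [e1, e2, e1.symm, e2.symm]
    · have hh : h = h' ↔ h.1 = h'.1 := Subtype.ext_iff
      simp only [C, gm, hm, Matrix.of_apply, hh]
      rw [count2 hn]
      split_ifs <;> simp

lemma kv_x (x : XG G) (a : Fin 5) : kv F x a x = 1 := by
  fin_cases a <;> simp [kv, c_self]

lemma kv_succ (x : XG G) (i : Fin 3) (y : XG G) :
    kv F x i.succ.castSucc y = if c x i y = 1 then 1 else 0 := by
  fin_cases i <;> simp [kv]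

lemma eq_pt_iff (helem : ∀ a : G, a * a = 1) (x : XG G) (i : Fin 3) (y : XG G) (h : G) :
    y = pt x i h ↔ c x i y = 1 ∧ ∀ d, d ≠ i → c x d y = h := by
  constructor
  · rintro rfl
    constructor
    · simp [c_pt helem]
    · intro d hd; simp [c_pt helem, hd]
  · rintro ⟨h1, h2⟩
    have h3 : ∀ d, c x d y = c x d (pt x i h) := by
      intro d
      by_cases hd : d = i
      · subst hd; simp [c_pt helem, h1]
      · simp [c_pt helem, h2 d hd, hd]
    exact ext2 x (h3 0) (h3 1)

lemma inv_self (helem : ∀ a : G, a * a = 1) (a b : G) (h : a * b = 1) : a = b := by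
  rw [mul_eq_one_iff_eq_inv] at h
  rw [h, inv_eq_iff_mul_eq_one]; exact helem b

lemma exists_pt (helem : ∀ a : G, a * a = 1) (x : XG G) (i : Fin 3) (y : XG G)
    (h1 : c x i y = 1) : ∃ h, y = pt x i h := by
  have hm := c_mul x y
  fin_cases i
  · refine ⟨c x 1 y, (mk_c x y).symm.trans ?_⟩
    simp at h1
    simp [pt, h1]
  · refine ⟨c x 0 y, (mk_c x y).symm.trans ?_⟩
    simp at h1
    simp [pt, h1]
  · refine ⟨c x 0 y, (mk_c x y).symm.trans ?_⟩
    simp at h1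
    rw [h1] at hm
    simp [pt, ← inv_self helem _ _ hm]

lemma pt_inj (helem : ∀ a : G, a * a = 1) (x : XG G) (i : Fin 3) (h h' : G) :
    pt x i h = pt x i h' ↔ h = h' := by
  constructor
  · intro e
    have h0 := congrArg (c x 0) e
    have h1 := congrArg (c x 1) e
    simp only [c_pt helem] at h0 h1
    fin_cases i <;> simp_all
  · rintro rfl; rfl

lemma pt_one (helem : ∀ a : G, a * a = 1) (x : XG G) (i : Fin 3) : pt x i 1 = x := by
  apply ext2 x <;> simp [c_pt helem, c_self]

/-- sum over the points of a class -/
lemma sum_inl (helem : ∀ a : G, a * a = 1) (x : XG G) (i : Fin 3) (y : XG G) :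
    ∑ h : G, (if y = pt x i h then (1 : F) else 0) = if c x i y = 1 then 1 else 0 := by
  split_ifs with h1
  · obtain ⟨h, rfl⟩ := exists_pt helem x i y h1
    simp [pt_inj helem]
  · apply Finset.sum_eq_zero
    intro h _
    rw [if_neg]
    intro e; exact h1 ((eq_pt_iff helem x i y h).1 e).1

lemma CO (helem : ∀ a : G, a * a = 1) (x : XG G) : C F x * O F G = Jm F x * ka F := by
  ext y q
  have hO : (C F x * O F G) y q = ∑ h : HH G, C F x y (q, h) := by
    rw [Matrix.mul_apply, Fintype.sum_prod_type]
    simp [O, -Fintype.sum_sum_type, Finset.sum_comm (s := (Finset.univ : Finset Q))]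
  rw [hO, Matrix.mul_apply]
  rcases q with i | k
  · simp only [C, Jm, ka, Matrix.of_apply, mul_sub, Finset.sum_sub_distrib]
    rw [sum_ne_one (fun h => if y = pt x i h then (1 : F) else 0), sum_inl helem, pt_one helem]
    simp only [mul_ite, mul_one, mul_zero, Finset.sum_ite_eq', Finset.mem_univ, if_true, kv_succ]
    simp [kv]
  · simp only [C, Jm, ka, Matrix.of_apply, mul_sub, Finset.sum_sub_distrib]
    rw [sum_ne_one (fun h => if c x k y = h then (1 : F) else 0)]
    simp only [mul_ite, mul_one, mul_zero, Finset.sum_ite_eq', Finset.mem_univ, if_true, kv_succ]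
    simp [kv]

lemma five (a : Fin 5) : a = 0 ∨ a = 4 ∨ ∃ i : Fin 3, a = i.succ.castSucc := by
  revert a; decide

lemma CtJ (helem : ∀ a : G, a * a = 1) (hn : (Fintype.card G : F) = 1) (x : XG G) :
    (C F x)ᵀ * Jm F x = O F G * sm F := by
  ext ⟨q, h⟩ a
  have hO : (O F G * sm F) (q, h) a = sm F q a := by
    simp [O, Matrix.mul_apply, -Fintype.sum_sum_type]
  rw [hO, Matrix.mul_apply]
  simp only [Matrix.transpose_apply]
  rcases q with i | k
  · rw [sum_pt]
    exact kv_pt helem x i h a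
  · have h2 := h.2
    simp only [C, Jm, sm, Matrix.of_apply]
    rcases five a with rfl | rfl | ⟨i, rfl⟩
    · simp [kv, c_self, h2.symm]
    · have : (4 : Fin 5) ≠ k.succ.castSucc := by clear hO; revert k; decide
      simp only [kv, mul_one, count1 hn, this]
      simp
    · simp only [kv_succ, count2 hn]
      have : i.succ.castSucc ≠ (0 : Fin 5) := by clear hO; revert i; decide
      simp [h2, this, eq_comm]

lemma JtJ (hn : (Fintype.card G : F) = 1) (x : XG G) :
    (Jm F x)ᵀ * Jm F x = Nm F := by
  ext a b
  rw [Matrix.mul_apply]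
  simp only [Matrix.transpose_apply, Jm, Nm, Matrix.of_apply]
  rcases five a with rfl | rfl | ⟨i, rfl⟩
  · have : ∀ y, kv F x 0 y = if y = x then 1 else 0 := fun y => rfl
    simp [this, kv_x]
  · rcases five b with rfl | rfl | ⟨j, rfl⟩
    · simp [kv]
    · rw [sum_X x]; simp [kv, hn]
    · simp only [kv_succ]; simp only [kv, one_mul, count1 hn]
  · rcases five b with rfl | rfl | ⟨j, rfl⟩
    · have : ∀ y, kv F x 0 y = if y = x then 1 else 0 := fun y => rfl
      simp [this, kv_x]
    · simp only [kv_succ]; simp only [kv, mul_one, count1 hn]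
    · simp only [kv_succ, count2 hn]; simp

lemma one_ka : Nm F * ka F = 0 := by
  ext a q
  rw [Matrix.mul_apply]
  rcases q with i | i <;> simp [Nm, ka]

/-- The general element of the algebra. -/
def tm (x : XG G) (m : Matrix Q Q F) (e : F) (β : Matrix (Fin 5) (Fin 5) F) :
    Matrix (XG G) (XG G) F :=
  C F x * (m ⊗ₖ (1 : Matrix (HH G) (HH G) F)) * (C F x)ᵀ + e • 1 + Jm F x * β * (Jm F x)ᵀ

lemma tm_add (x : XG G) (m m' : Matrix Q Q F) (e e' : F) (β β' : Matrix (Fin 5) (Fin 5) F) :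
    tm x m e β + tm x m' e' β' = tm x (m + m') (e + e') (β + β') := by
  simp only [tm, Matrix.add_kronecker, Matrix.mul_add, Matrix.add_mul, add_smul]
  abel

lemma tm_smul (x : XG G) (r : F) (m : Matrix Q Q F) (e : F) (β : Matrix (Fin 5) (Fin 5) F) :
    r • tm x m e β = tm x (r • m) (r * e) (r • β) := by
  simp only [tm, Matrix.smul_kronecker, Matrix.mul_smul, Matrix.smul_mul, smul_add, smul_smul]

lemma kO (m : Matrix Q Q F) : (m ⊗ₖ (1 : Matrix (HH G) (HH G) F)) * O F G = O F G * m := by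
  ext ⟨q, h⟩ r
  simp [O, Matrix.mul_apply, Fintype.sum_prod_type, Matrix.one_apply, -Fintype.sum_sum_type]

lemma Ok (m : Matrix Q Q F) : (O F G)ᵀ * (m ⊗ₖ (1 : Matrix (HH G) (HH G) F)) = m * (O F G)ᵀ := by
  ext r ⟨q, h⟩
  simp [O, Matrix.mul_apply, Fintype.sum_prod_type, Matrix.one_apply, -Fintype.sum_sum_type]

lemma kk (m m' : Matrix Q Q F) : (m ⊗ₖ (1 : Matrix (HH G) (HH G) F)) * (m' ⊗ₖ 1) =
    (m * m') ⊗ₖ 1 := by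
  rw [← Matrix.mul_kronecker_mul, Matrix.one_mul]

def betaMul (m m' : Matrix Q Q F) (e e' : F) (β β' : Matrix (Fin 5) (Fin 5) F) :
    Matrix (Fin 5) (Fin 5) F :=
  ka F * (m * hm F * m') * (ka F)ᵀ + ka F * (m * sm F * β') + β * (sm F)ᵀ * m' * (ka F)ᵀ
    + β * Nm F * β' + e • β' + e' • β

lemma tm_mul (helem : ∀ a : G, a * a = 1) (hn : (Fintype.card G : F) = 1) (x : XG G)
    (m m' : Matrix Q Q F) (e e' : F) (β β' : Matrix (Fin 5) (Fin 5) F) :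
    tm x m e β * tm x m' e' β' =
      tm x (m * gm F * m' + e • m' + e' • m) (e * e') (betaMul m m' e e' β β') := by
  have hCC := CtC helem hn x
  have hCO := CO (F := F) helem x
  have hCJ := CtJ helem hn x
  have hJJ := JtJ hn x
  have hOC : (O F G)ᵀ * (C F x)ᵀ = (ka F)ᵀ * (Jm F x)ᵀ := by
    rw [← Matrix.transpose_mul, hCO, Matrix.transpose_mul]
  have hJC : (Jm F x)ᵀ * C F x = (sm F)ᵀ * (O F G)ᵀ := by
    have := congrArg Matrix.transpose hCJ
    simpa [Matrix.transpose_mul] using this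
  have e1 : (C F x * (m ⊗ₖ (1 : Matrix (HH G) (HH G) F)) * (C F x)ᵀ) *
      (C F x * (m' ⊗ₖ (1 : Matrix (HH G) (HH G) F)) * (C F x)ᵀ) =
      C F x * ((m * gm F * m') ⊗ₖ (1 : Matrix (HH G) (HH G) F)) * (C F x)ᵀ +
      Jm F x * (ka F * (m * hm F * m') * (ka F)ᵀ) * (Jm F x)ᵀ := by
    calc _ = C F x * ((m ⊗ₖ (1 : Matrix (HH G) (HH G) F)) * ((C F x)ᵀ * C F x) *
          (m' ⊗ₖ (1 : Matrix (HH G) (HH G) F))) * (C F x)ᵀ := by simp only [Matrix.mul_assoc]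
      _ = C F x * ((m * gm F * m') ⊗ₖ (1 : Matrix (HH G) (HH G) F)) * (C F x)ᵀ +
          C F x * (((m ⊗ₖ (1 : Matrix (HH G) (HH G) F)) * O F G) * hm F *
          ((O F G)ᵀ * (m' ⊗ₖ (1 : Matrix (HH G) (HH G) F)))) * (C F x)ᵀ := by
        rw [hCC, Matrix.mul_add, Matrix.add_mul, kk, kk, Matrix.mul_add, Matrix.add_mul]
        simp only [Matrix.mul_assoc]
      _ = C F x * ((m * gm F * m') ⊗ₖ (1 : Matrix (HH G) (HH G) F)) * (C F x)ᵀ +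
          (C F x * O F G) * (m * hm F * m') * ((O F G)ᵀ * (C F x)ᵀ) := by
        rw [kO, Ok]
        simp only [Matrix.mul_assoc]
      _ = _ := by
        rw [hCO, hOC]
        simp only [Matrix.mul_assoc]
  have e2 : (C F x * (m ⊗ₖ (1 : Matrix (HH G) (HH G) F)) * (C F x)ᵀ) *
      (Jm F x * β' * (Jm F x)ᵀ) = Jm F x * (ka F * (m * sm F * β')) * (Jm F x)ᵀ := by
    calc _ = C F x * ((m ⊗ₖ (1 : Matrix (HH G) (HH G) F)) * ((C F x)ᵀ * Jm F x)) * β' *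
            (Jm F x)ᵀ := by simp only [Matrix.mul_assoc]
      _ = (C F x * O F G) * m * sm F * β' * (Jm F x)ᵀ := by
        rw [hCJ, ← Matrix.mul_assoc _ (O F G), kO]; simp only [Matrix.mul_assoc]
      _ = _ := by rw [hCO]; simp only [Matrix.mul_assoc]
  have e3 : (Jm F x * β * (Jm F x)ᵀ) *
      (C F x * (m' ⊗ₖ (1 : Matrix (HH G) (HH G) F)) * (C F x)ᵀ) =
      Jm F x * (β * (sm F)ᵀ * m' * (ka F)ᵀ) * (Jm F x)ᵀ := by
    calc _ = Jm F x * β * (((Jm F x)ᵀ * C F x) * (m' ⊗ₖ (1 : Matrix (HH G) (HH G) F))) *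
            (C F x)ᵀ := by simp only [Matrix.mul_assoc]
      _ = Jm F x * β * (sm F)ᵀ * m' * ((O F G)ᵀ * (C F x)ᵀ) := by
        rw [hJC, Matrix.mul_assoc (sm F)ᵀ, Ok]; simp only [Matrix.mul_assoc]
      _ = _ := by rw [hOC]; simp only [Matrix.mul_assoc]
  have e4 : (Jm F x * β * (Jm F x)ᵀ) * (Jm F x * β' * (Jm F x)ᵀ) =
      Jm F x * (β * Nm F * β') * (Jm F x)ᵀ := by
    rw [← hJJ]; simp only [Matrix.mul_assoc]
  simp only [tm, betaMul, Matrix.mul_add, Matrix.add_mul, e1, e2, e3, e4, Matrix.add_kronecker,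
    Matrix.smul_kronecker, Matrix.mul_smul, Matrix.smul_mul, Matrix.mul_one, Matrix.one_mul,
    smul_smul, smul_add]
  rw [mul_comm e' e]
  abel

def UU (F : Type) [Field F] : Matrix (Fin 4) Q F := Matrix.of fun a q => match q with
  | .inl i => if a = i.castSucc then 1 else 0
  | .inr i => if a = i.castSucc then 0 else 1

def WW (F : Type) [Field F] : Matrix Q (Fin 4) F := Matrix.of fun q a => match q with
  | .inl i => if a = i.castSucc then 1 else 0
  | .inr i => if a = 3 then -1 else if a = i.castSucc then 0 else 1

def la (F : Type) [Field F] : Matrix (Fin 4) Q F := Matrix.of fun a q => match q with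
  | .inl i => if a = 3 then (if i = 0 then 0 else 1) else if a = i.castSucc then 1 else 0
  | .inr i => if a = 3 then (if i = 0 then -1 else 0) else 0

def rh (F : Type) [Field F] : Matrix Q (Fin 4) F := Matrix.of fun q a => match q with
  | .inl i => if a = 3 then (if i = 0 then 0 else -1) else if a = i.castSucc then 1 else 0
  | .inr i => if a = 3 then (if i = 0 then 1 else 0) else 0

lemma WU : WW F * UU F = gm F := by
  ext q r
  rcases q with i | i <;> rcases r with j | j <;> fin_cases i <;> fin_cases j <;>
    simp [WW, UU, gm, Matrix.mul_apply, Fin.sum_univ_four]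

lemma laW : la F * WW F = 1 := by
  ext i j
  fin_cases i <;> fin_cases j <;>
    simp [WW, la, Matrix.mul_apply, Fin.sum_univ_three]

lemma Urh : UU F * rh F = 1 := by
  ext i j
  fin_cases i <;> fin_cases j <;>
    simp [UU, rh, Matrix.mul_apply, Fin.sum_univ_three]

lemma lag : la F * gm F = UU F := by
  rw [← WU, ← Matrix.mul_assoc, laW, Matrix.one_mul]

lemma grh : gm F * rh F = WW F := by
  rw [← WU, Matrix.mul_assoc, Urh, Matrix.mul_one]

def vt (f : HH G → F) (A : Matrix Q (Fin 4) F) : Matrix (Q × HH G) (Fin 4) F :=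
  Matrix.of fun p j => A p.1 j * f p.2

def Lf (F : Type) [Field F] (h0 : HH G) : Matrix (Fin 4) (Q × HH G) F :=
  Matrix.of fun i p => la F i p.1 * if p.2 = h0 then 1 else 0

lemma k_vt (f : HH G → F) (m : Matrix Q Q F) (A : Matrix Q (Fin 4) F) :
    (m ⊗ₖ (1 : Matrix (HH G) (HH G) F)) * vt f A = vt f (m * A) := by
  ext ⟨q, h⟩ j
  simp [vt, Matrix.mul_apply, Fintype.sum_prod_type, Matrix.one_apply, -Fintype.sum_sum_type,
    Finset.sum_mul, mul_assoc]

lemma O_vt (f : HH G → F) (hf : ∑ h, f h = 0) (A : Matrix Q (Fin 4) F) :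
    (O F G)ᵀ * vt f A = 0 := by
  ext q j
  simp [vt, O, Matrix.mul_apply, Fintype.sum_prod_type, -Fintype.sum_sum_type,
    ← Finset.mul_sum, hf]

lemma Lf_vt (f : HH G → F) (h0 : HH G) (hf : f h0 = 1) (A : Matrix Q (Fin 4) F) :
    Lf F h0 * vt f A = la F * A := by
  ext i j
  simp [vt, Lf, Matrix.mul_apply, Fintype.sum_prod_type, -Fintype.sum_sum_type, hf]

lemma Ct_R (helem : ∀ a : G, a * a = 1) (hn : (Fintype.card G : F) = 1) (x : XG G)
    (f : HH G → F) (hf : ∑ h, f h = 0) (A : Matrix Q (Fin 4) F) :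
    (C F x)ᵀ * (C F x * vt f A) = vt f (gm F * A) := by
  rw [← Matrix.mul_assoc, CtC helem hn, Matrix.add_mul, k_vt, Matrix.mul_assoc, O_vt f hf,
    Matrix.mul_zero, add_zero]

/-- First component. -/
def phi1 (x : XG G) (f : HH G → F) (h0 : HH G) (t : Matrix (XG G) (XG G) F) :
    Matrix (Fin 4) (Fin 4) F := Lf F h0 * (C F x)ᵀ * t * (C F x * vt f (rh F))

lemma phi1_tm (helem : ∀ a : G, a * a = 1) (hn : (Fintype.card G : F) = 1) (x : XG G)
    (f : HH G → F) (h0 : HH G) (hf : ∑ h, f h = 0) (hf1 : f h0 = 1)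
    (m : Matrix Q Q F) (e : F) (β : Matrix (Fin 5) (Fin 5) F) :
    phi1 x f h0 (tm x m e β) = UU F * m * WW F + e • 1 := by
  have hJ : (Jm F x)ᵀ * (C F x * vt f (rh F)) = 0 := by
    have hJC : (Jm F x)ᵀ * C F x = (sm F)ᵀ * (O F G)ᵀ := by
      have := congrArg Matrix.transpose (CtJ helem hn x)
      simpa [Matrix.transpose_mul] using this
    rw [← Matrix.mul_assoc, hJC, Matrix.mul_assoc, O_vt f hf, Matrix.mul_zero]
  have hC := Ct_R helem hn x f hf
  have e1 : Lf F h0 * (C F x)ᵀ * (C F x * (m ⊗ₖ (1 : Matrix (HH G) (HH G) F)) * (C F x)ᵀ) *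
      (C F x * vt f (rh F)) = UU F * m * WW F := by
    calc _ = Lf F h0 * ((C F x)ᵀ * (C F x * ((m ⊗ₖ (1 : Matrix (HH G) (HH G) F)) *
          ((C F x)ᵀ * (C F x * vt f (rh F)))))) := by simp only [Matrix.mul_assoc]
      _ = _ := by
        rw [hC, grh, k_vt, hC, Lf_vt f h0 hf1, ← Matrix.mul_assoc, lag, Matrix.mul_assoc]
  have e2 : Lf F h0 * (C F x)ᵀ * (C F x * vt f (rh F)) = 1 := by
    rw [Matrix.mul_assoc, hC, grh, Lf_vt f h0 hf1, laW]
  have e3 : Lf F h0 * (C F x)ᵀ * (Jm F x * β * (Jm F x)ᵀ) * (C F x * vt f (rh F)) = 0 := by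
    rw [Matrix.mul_assoc, Matrix.mul_assoc _ (Jm F x)ᵀ, hJ, Matrix.mul_zero, Matrix.mul_zero]
  simp only [phi1, tm, Matrix.mul_add, Matrix.add_mul, e1, e3, Matrix.mul_smul, Matrix.smul_mul,
    Matrix.mul_one, e2, add_zero]

/-- The alternating vector. -/
def wv (F : Type) [Field F] (x : XG G) (a b : G) (y : XG G) : F :=
  (if y = mk x a b then 1 else 0) + (if y = mk x b (a * b) then 1 else 0)
    + (if y = mk x (a * b) a then 1 else 0) - (if y = mk x b a then 1 else 0)
    - (if y = mk x a (a * b) then 1 else 0) - (if y = mk x (a * b) b then 1 else 0)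

lemma wv_sum (x : XG G) (a b : G) (f : XG G → F) :
    ∑ y, f y * wv F x a b y = f (mk x a b) + f (mk x b (a * b)) + f (mk x (a * b) a)
      - f (mk x b a) - f (mk x a (a * b)) - f (mk x (a * b) b) := by
  simp [wv, mul_add, mul_sub, Finset.sum_add_distrib, Finset.sum_sub_distrib]

lemma wv_C (helem : ∀ a : G, a * a = 1) (x : XG G) (a b : G) (ha : a ≠ 1) (hb : b ≠ 1)
    (hab : a ≠ b) : (C F x)ᵀ *ᵥ wv F x a b = 0 := by
  have hab1 : a * b ≠ 1 := fun h => hab (inv_self helem _ _ h)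
  have h1 : ∀ a b : G, b * (a * b) = a := fun a b => by
    rw [mul_comm a b, ← mul_assoc, helem, one_mul]
  have h2 : ∀ a b : G, a * (a * b) = b := fun a b => by
    rw [← mul_assoc, helem, one_mul]
  have h3 : ∀ a b : G, a * b * a = b := fun a b => by
    rw [mul_comm, h2]
  have h4 : ∀ a b : G, a * b * b = a := fun a b => by
    rw [mul_comm, h1]
  ext ⟨q, h⟩
  have := wv_sum x a b (fun y => C F x y (q, h))
  simp only [Matrix.mulVec, dotProduct, Matrix.transpose_apply, this]
  rcases q with i | k
  · simp only [C, Matrix.of_apply, eq_pt_iff helem]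
    fin_cases i <;> simp [ha, hb, hab1, h1, h2, h3, h4, mul_comm b a]
  · simp only [C, Matrix.of_apply]
    fin_cases k <;> simp [h1, h2, h3, h4, mul_comm b a] <;> ring

lemma wv_J (helem : ∀ a : G, a * a = 1) (x : XG G) (a b : G) (ha : a ≠ 1) (hb : b ≠ 1)
    (hab : a ≠ b) : (Jm F x)ᵀ *ᵥ wv F x a b = 0 := by
  have hab1 : a * b ≠ 1 := fun h => hab (inv_self helem _ _ h)
  have h1 : ∀ a b : G, b * (a * b) = a := fun a b => by
    rw [mul_comm a b, ← mul_assoc, helem, one_mul]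
  have h2 : ∀ a b : G, a * (a * b) = b := fun a b => by
    rw [← mul_assoc, helem, one_mul]
  have h3 : ∀ a b : G, a * b * a = b := fun a b => by
    rw [mul_comm, h2]
  have h4 : ∀ a b : G, a * b * b = a := fun a b => by
    rw [mul_comm, h1]
  have hx : ∀ a b : G, a ≠ 1 → mk x a b ≠ x := fun a b ha h => by
    have := congrArg (c x 0) h
    rw [c0_mk, c_self] at this
    exact ha this
  ext k
  have := wv_sum x a b (fun y => Jm F x y k)
  simp only [Matrix.mulVec, dotProduct, Matrix.transpose_apply, this]
  simp only [Jm, Matrix.of_apply]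
  fin_cases k <;> simp [kv, ha, hb, hab1, h1, h2, h3, h4, mul_comm b a, hx]

lemma wv_self (helem : ∀ a : G, a * a = 1) (x : XG G) (a b : G) (ha : a ≠ 1) (hb : b ≠ 1)
    (hab : a ≠ b) : wv F x a b (mk x a b) = 1 := by
  have inj : ∀ a b a' b' : G, mk x a b = mk x a' b' ↔ a = a' ∧ b = b' := by
    intro a b a' b'
    constructor
    · intro h
      have h0 := congrArg (c x 0) h
      have h1 := congrArg (c x 1) h
      simp at h0 h1
      exact ⟨h0, h1⟩
    · rintro ⟨rfl, rfl⟩; rfl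
  simp [wv, inj, ha, hb, hab]

def phi2 (x : XG G) (a b : G) (t : Matrix (XG G) (XG G) F) : F := (t *ᵥ wv F x a b) (mk x a b)

lemma phi2_tm (helem : ∀ a : G, a * a = 1) (x : XG G) (a b : G) (ha : a ≠ 1) (hb : b ≠ 1)
    (hab : a ≠ b) (m : Matrix Q Q F) (e : F) (β : Matrix (Fin 5) (Fin 5) F) :
    phi2 x a b (tm x m e β) = e := by
  simp only [phi2, tm, Matrix.add_mulVec, ← Matrix.mulVec_mulVec, wv_C helem x a b ha hb hab,
    wv_J helem x a b ha hb hab, Matrix.mulVec_zero, Matrix.smul_mulVec, Matrix.one_mulVec]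
  simp [wv_self helem x a b ha hb hab]

lemma C_x (helem : ∀ a : G, a * a = 1) (x : XG G) (p : Q × HH G) : C F x x p = 0 := by
  rcases p with ⟨i | k, h⟩
  · have : x ≠ pt x i h.1 := by
      intro e
      have e' : pt x i 1 = pt x i h.1 := by rw [pt_one helem]; exact e
      rw [pt_inj helem] at e'
      exact h.2 e'.symm
    simp [C, this]
  · simp [C, c_self, h.2.symm]

lemma phi3_tm (helem : ∀ a : G, a * a = 1) (x : XG G) (m : Matrix Q Q F) (e : F)
    (β : Matrix (Fin 5) (Fin 5) F) :
    tm x m e β x x = (∑ i, ∑ j, β i j) + e := by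
  have h1 : (C F x * (m ⊗ₖ (1 : Matrix (HH G) (HH G) F)) * (C F x)ᵀ) x x = 0 := by
    rw [Matrix.mul_apply]
    apply Finset.sum_eq_zero
    intro p _
    simp [C_x helem]
  have h2 : (Jm F x * β * (Jm F x)ᵀ) x x = ∑ i, ∑ j, β i j := by
    simp only [Matrix.mul_apply, Jm, Matrix.of_apply, Matrix.transpose_apply, kv_x, mul_one,
      one_mul]
    exact Finset.sum_comm
  simp only [tm, Matrix.add_apply, h1, h2, Matrix.smul_apply, Matrix.one_apply_eq]
  simp [add_comm]

lemma NbN (β : Matrix (Fin 5) (Fin 5) F) : Nm F * β * Nm F = (∑ i, ∑ j, β i j) • Nm F := by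
  ext a b
  simp only [Matrix.mul_apply, Nm, Matrix.of_apply, Matrix.smul_apply, one_mul, mul_one,
    smul_eq_mul]
  exact Finset.sum_comm

lemma sum_betaMul (m m' : Matrix Q Q F) (e e' : F) (β β' : Matrix (Fin 5) (Fin 5) F) :
    (∑ i, ∑ j, betaMul m m' e e' β β' i j) = (∑ i, ∑ j, β i j) * (∑ i, ∑ j, β' i j)
      + e * (∑ i, ∑ j, β' i j) + e' * (∑ i, ∑ j, β i j) := by
  have k1 : Nm F * ka F = 0 := one_ka
  have k2 : (ka F)ᵀ * Nm F = 0 := by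
    have h := congrArg Matrix.transpose (one_ka (F := F))
    rw [Matrix.transpose_mul, Matrix.transpose_zero] at h
    exact h
  have key : Nm F * betaMul m m' e e' β β' * Nm F = ((∑ i, ∑ j, β i j) * (∑ i, ∑ j, β' i j)
      + e * (∑ i, ∑ j, β' i j) + e' * (∑ i, ∑ j, β i j)) • Nm F := by
    have t1 : Nm F * (ka F * (m * hm F * m') * (ka F)ᵀ) * Nm F = 0 := by
      rw [Matrix.mul_assoc, Matrix.mul_assoc, k2, Matrix.mul_zero, Matrix.mul_zero]
    have t2 : Nm F * (ka F * (m * sm F * β')) * Nm F = 0 := by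
      rw [← Matrix.mul_assoc (Nm F), k1, Matrix.zero_mul, Matrix.zero_mul]
    have t3 : Nm F * (β * (sm F)ᵀ * m' * (ka F)ᵀ) * Nm F = 0 := by
      rw [Matrix.mul_assoc, Matrix.mul_assoc, k2, Matrix.mul_zero, Matrix.mul_zero]
    have t4 : Nm F * (β * Nm F * β') * Nm F =
        ((∑ i, ∑ j, β i j) * (∑ i, ∑ j, β' i j)) • Nm F := by
      rw [← Matrix.mul_assoc, ← Matrix.mul_assoc, NbN, Matrix.smul_mul, Matrix.smul_mul, NbN,
        smul_smul]
    simp only [betaMul, Matrix.mul_add, Matrix.add_mul, t1, t2, t3, t4, Matrix.mul_smul,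
      Matrix.smul_mul, NbN, smul_smul, add_smul, zero_add]
  rw [NbN] at key
  have := congrFun (congrFun key 0) 0
  simpa [Nm] using this

/-- The algebra of all `tm`. -/
def TT (F : Type) [Field F] (helem : ∀ a : G, a * a = 1) (hn : (Fintype.card G : F) = 1)
    (x : XG G) : Subalgebra F (Matrix (XG G) (XG G) F) where
  carrier := {t | ∃ m e β, t = tm x m e β}
  mul_mem' := by
    rintro _ _ ⟨m, e, β, rfl⟩ ⟨m', e', β', rfl⟩
    exact ⟨_, _, _, tm_mul helem hn x m m' e e' β β'⟩
  add_mem' := by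
    rintro _ _ ⟨m, e, β, rfl⟩ ⟨m', e', β', rfl⟩
    exact ⟨_, _, _, tm_add x m m' e e' β β'⟩
  algebraMap_mem' := by
    intro r
    refine ⟨0, r, 0, ?_⟩
    simp [tm, Algebra.algebraMap_eq_smul_one]

/-- All three components. -/
def Phi (x : XG G) (f : HH G → F) (h0 : HH G) (a b : G) :
    Matrix (XG G) (XG G) F →ₗ[F] Matrix (Fin 4) (Fin 4) F × F × F where
  toFun t := (phi1 x f h0 t, phi2 x a b t, t x x)
  map_add' s t := by
    simp [phi1, phi2, Matrix.mul_add, Matrix.add_mul, Matrix.add_mulVec]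
  map_smul' r t := by
    simp [phi1, phi2, Matrix.smul_mulVec]

end

/-- The auxiliary data. -/
structure Dat (F : Type) [Field F] (G : Type) [CommGroup G] [Fintype G] [DecidableEq G] where
  helem : ∀ a : G, a * a = 1
  hn : (Fintype.card G : F) = 1
  x : XG G
  f : HH G → F
  h0 : HH G
  hf : ∑ h, f h = 0
  hf1 : f h0 = 1
  a : G
  b : G
  ha : a ≠ 1
  hb : b ≠ 1
  hab : a ≠ b

section
variable {F : Type} [Field F] {G : Type} [CommGroup G] [Fintype G] [DecidableEq G]
  (D : Dat F G)

def PhiD : Matrix (XG G) (XG G) F →ₗ[F] Matrix (Fin 4) (Fin 4) F × F × F :=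
  Phi D.x D.f D.h0 D.a D.b

lemma PhiD_tm (m : Matrix Q Q F) (e : F) (β : Matrix (Fin 5) (Fin 5) F) :
    PhiD D (tm D.x m e β) = (UU F * m * WW F + e • 1, e, (∑ i, ∑ j, β i j) + e) := by
  have h1 := phi1_tm D.helem D.hn D.x D.f D.h0 D.hf D.hf1 m e β
  have h2 := phi2_tm D.helem D.x D.a D.b D.ha D.hb D.hab m e β
  have h3 := phi3_tm D.helem D.x m e β
  change (phi1 D.x D.f D.h0 _, phi2 D.x D.a D.b _, tm D.x m e β D.x D.x) = _
  rw [h1, h2, h3]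

lemma tm_one (x : XG G) : tm x 0 (1 : F) 0 = 1 := by simp [tm]

def phiT : TT F D.helem D.hn D.x →ₐ[F] Matrix (Fin 4) (Fin 4) F × F × F :=
  AlgHom.ofLinearMap ((PhiD D).comp (TT F D.helem D.hn D.x).val.toLinearMap)
    (by
      change PhiD D 1 = 1
      rw [← tm_one D.x, PhiD_tm]
      simp)
    (by
      rintro ⟨_, m, e, β, rfl⟩ ⟨_, m', e', β', rfl⟩
      change PhiD D (tm D.x m e β * tm D.x m' e' β') =
        PhiD D (tm D.x m e β) * PhiD D (tm D.x m' e' β')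
      rw [tm_mul D.helem D.hn, PhiD_tm, PhiD_tm, PhiD_tm, sum_betaMul, ← WU]
      simp only [Prod.mk_mul_mk]
      refine Prod.ext ?_ (Prod.ext rfl ?_)
      · simp only [Matrix.mul_add, Matrix.add_mul, Matrix.mul_smul, Matrix.smul_mul,
          Matrix.mul_one, Matrix.one_mul, Matrix.mul_assoc, smul_smul, smul_add]
        rw [mul_comm e' e]
        abel
      · simp only
        ring)

lemma phiT_apply (t : TT F D.helem D.hn D.x) : phiT D t = PhiD D t.1 := rfl

/-- Three elements of the kernel multiply into the span of the `J`s. -/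
lemma three (s t u : Matrix (XG G) (XG G) F) (hs : s ∈ TT F D.helem D.hn D.x)
    (ht : t ∈ TT F D.helem D.hn D.x) (hu : u ∈ TT F D.helem D.hn D.x)
    (hs0 : PhiD D s = 0) (ht0 : PhiD D t = 0) (hu0 : PhiD D u = 0) :
    ∃ β, (∑ i, ∑ j, β i j) = 0 ∧ s * t * u = tm D.x 0 0 β := by
  obtain ⟨m, e, β, rfl⟩ := hs
  obtain ⟨m', e', β', rfl⟩ := ht
  obtain ⟨m'', e'', β'', rfl⟩ := hu
  rw [PhiD_tm] at hs0 ht0 hu0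
  simp only [Prod.mk_eq_zero] at hs0 ht0 hu0
  obtain ⟨a1, rfl, c1⟩ := hs0
  obtain ⟨a2, rfl, c2⟩ := ht0
  obtain ⟨a3, rfl, c3⟩ := hu0
  simp only [zero_smul, add_zero] at *
  have h3 : m * gm F * m' * gm F * m'' = 0 := by
    calc _ = m * WW F * (UU F * m' * WW F) * (UU F * m'') := by
          rw [← WU]; simp only [Matrix.mul_assoc]
      _ = 0 := by rw [a2, Matrix.mul_zero, Matrix.zero_mul]
  rw [tm_mul D.helem D.hn, tm_mul D.helem D.hn]
  simp only [zero_smul, add_zero, mul_zero, h3]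
  refine ⟨_, ?_, rfl⟩
  rw [sum_betaMul, sum_betaMul]
  simp [c1, c2, c3]

lemma tmb_mul (β β' : Matrix (Fin 5) (Fin 5) F) :
    tm D.x 0 0 β * tm D.x 0 0 β' = tm D.x 0 0 (β * Nm F * β') := by
  rw [tm_mul D.helem D.hn]
  simp [betaMul]

lemma nine (t : Fin 9 → Matrix (XG G) (XG G) F) (ht : ∀ i, t i ∈ TT F D.helem D.hn D.x)
    (h0 : ∀ i, PhiD D (t i) = 0) : (List.ofFn t).prod = 0 := by
  obtain ⟨β, _, e1⟩ := three D (t 0) (t 1) (t 2) (ht _) (ht _) (ht _) (h0 _) (h0 _) (h0 _)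
  obtain ⟨β', hb, e2⟩ := three D (t 3) (t 4) (t 5) (ht _) (ht _) (ht _) (h0 _) (h0 _) (h0 _)
  obtain ⟨β'', _, e3⟩ := three D (t 6) (t 7) (t 8) (ht _) (ht _) (ht _) (h0 _) (h0 _) (h0 _)
  have : (List.ofFn t).prod = (t 0 * t 1 * t 2) * (t 3 * t 4 * t 5) * (t 6 * t 7 * t 8) := by
    simp [List.ofFn_succ, mul_assoc]
  rw [this, e1, e2, e3, tmb_mul, tmb_mul]
  have : β * Nm F * β' * Nm F * β'' = 0 := by
    calc _ = β * (Nm F * β' * Nm F) * β'' := by simp only [Matrix.mul_assoc]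
      _ = 0 := by rw [NbN, hb]; simp
  rw [this]
  simp [tm]

end
section
variable {F : Type} [Field F] {G : Type} [CommGroup G] [Fintype G] [DecidableEq G]

lemma tm_apply (x : XG G) (m : Matrix Q Q F) (e : F) (β : Matrix (Fin 5) (Fin 5) F) (y z : XG G) :
    tm x m e β y z = (∑ q, ∑ r, m q r * ∑ h : HH G, C F x y (q, h) * C F x z (r, h))
      + (if y = z then e else 0) + ∑ a, ∑ b, β a b * (kv F x a y * kv F x b z) := by
  have h1 : (C F x * (m ⊗ₖ (1 : Matrix (HH G) (HH G) F)) * (C F x)ᵀ) y z =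
      ∑ q, ∑ r, m q r * ∑ h : HH G, C F x y (q, h) * C F x z (r, h) := by
    simp only [Matrix.mul_apply, Fintype.sum_prod_type, Matrix.kroneckerMap_apply,
      Matrix.transpose_apply, Matrix.one_apply, mul_ite, mul_one, mul_zero, Finset.sum_ite_eq',
      Finset.sum_mul, Finset.mul_sum, ite_mul, zero_mul, Finset.sum_ite_eq, Finset.mem_univ,
      if_true]
    rw [Finset.sum_congr rfl (fun r _ => Finset.sum_comm), Finset.sum_comm]
    refine Finset.sum_congr rfl fun q _ => Finset.sum_congr rfl fun r _ =>
      Finset.sum_congr rfl fun h _ => ?_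
    ring
  have h2 : (Jm F x * β * (Jm F x)ᵀ) y z = ∑ a, ∑ b, β a b * (kv F x a y * kv F x b z) := by
    simp only [Matrix.mul_apply, Jm, Matrix.of_apply, Matrix.transpose_apply, Finset.sum_mul]
    rw [Finset.sum_comm]
    refine Finset.sum_congr rfl fun a _ => Finset.sum_congr rfl fun b _ => ?_
    ring
  simp only [tm, Matrix.add_apply, h1, h2, Matrix.smul_apply, Matrix.one_apply]
  simp

lemma tm_single_apply (x : XG G) (q : Q) (y z : XG G) :
    tm x (Matrix.single q q (1 : F)) 0 0 y z = ∑ h : HH G, C F x y (q, h) * C F x z (q, h) := by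
  rw [tm_apply]
  simp only [Matrix.single_apply, Matrix.zero_apply, zero_mul, Finset.sum_const_zero, ite_self,
    add_zero]
  rw [Finset.sum_eq_single q, Finset.sum_eq_single q]
  · simp
  · intro r _ hr; simp [hr.symm]
  · simp
  · intro r _ hr; simp [hr.symm]
  · simp

lemma tm_beta_apply (x : XG G) (a : Fin 5) (y z : XG G) :
    tm x 0 0 (Matrix.single a a (1 : F)) y z = kv F x a y * kv F x a z := by
  rw [tm_apply]
  simp only [Matrix.single_apply, Matrix.zero_apply, zero_mul, Finset.sum_const_zero, ite_self,
    zero_add]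
  rw [Finset.sum_eq_single a, Finset.sum_eq_single a]
  · simp
  · intro r _ hr; simp [hr.symm]
  · simp
  · intro r _ hr; simp [hr.symm]
  · simp

lemma rel_zero (y z : XG G) : rel 0 y z ↔ y = z := by simp [rel]
lemma rel_four (y z : XG G) : rel 4 y z ↔ ∀ d : Fin 3, y.1 d ≠ z.1 d := by simp [rel]
lemma rel_mid (i : Fin 3) (y z : XG G) :
    rel i.succ.castSucc y z ↔ y ≠ z ∧ y.1 i = z.1 i := by
  fin_cases i <;> simp [rel, cIdx]

lemma Adj_zero : Adj F 0 = (1 : Matrix (XG G) (XG G) F) := by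
  ext y z
  simp [Adj, rel_zero, Matrix.one_apply]

lemma Adj_mid (x : XG G) (i : Fin 3) : Adj F i.succ.castSucc =
    tm x (Matrix.single (.inr i) (.inr i) (1 : F)) (-1)
      (Matrix.single i.succ.castSucc i.succ.castSucc 1) := by
  have h : tm x (Matrix.single (.inr i) (.inr i) (1 : F)) (-1)
      (Matrix.single i.succ.castSucc i.succ.castSucc 1) =
      tm x (Matrix.single (.inr i) (.inr i) (1 : F)) 0 0 +
      tm x 0 0 (Matrix.single i.succ.castSucc i.succ.castSucc 1) - 1 := by
    rw [← tm_one (F := F) x, tm_add, sub_eq_add_neg, ← neg_one_smul F (tm x 0 1 0), tm_smul,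
      tm_add]
    simp
  rw [h]
  ext y z
  rw [Matrix.sub_apply, Matrix.add_apply, tm_single_apply, tm_beta_apply, kv_succ, kv_succ]
  have hs := sum_ne_one (fun h => (if c x i y = h then (1 : F) else 0) *
    (if c x i z = h then 1 else 0))
  simp only [C, Matrix.of_apply]
  rw [hs]
  simp only [Adj, Matrix.of_apply, rel_mid, ← c_eq_iff x, Matrix.one_apply]
  by_cases hyz : y = z
  · subst hyz; simp
  · by_cases hc : c x i y = c x i z
    · simp [hyz, hc]
    · simp [hyz, hc, Ne.symm hc]

lemma two_eq (y z : XG G) (i j : Fin 3) (hij : i ≠ j) (hi : y.1 i = z.1 i) (hj : y.1 j = z.1 j) :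
    y = z := by
  have h1 := y.2
  have h2 := z.2
  have : y.1 0 = z.1 0 ∧ y.1 1 = z.1 1 := by
    have k1 : y.1 0 = z.1 0 → y.1 2 = z.1 2 → y.1 1 = z.1 1 := fun a b => by
      rw [← h1, ← h2, a] at b
      exact mul_left_cancel b
    have k2 : y.1 1 = z.1 1 → y.1 2 = z.1 2 → y.1 0 = z.1 0 := fun a b => by
      rw [← h1, ← h2, a] at b
      exact mul_right_cancel b
    clear h1 h2
    fin_cases i <;> fin_cases j <;> simp_all
  apply Subtype.ext
  funext d
  fin_cases d
  · exact this.1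
  · exact this.2
  · change y.1 2 = z.1 2
    rw [← h1, ← h2, this.1, this.2]

lemma adj_sum (y z : XG G) : Adj F 4 y z = 1 - Adj F 0 y z - Adj F 1 y z - Adj F 2 y z
    - Adj F 3 y z := by
  have r1 := rel_mid 0 y z
  have r2 := rel_mid 1 y z
  have r3 := rel_mid 2 y z
  simp at r1 r2 r3
  simp only [Adj, Matrix.of_apply, rel_zero, rel_four, r1]
  have e2 : rel 2 y z ↔ y ≠ z ∧ y.1 1 = z.1 1 := r2
  have e3 : rel 3 y z ↔ y ≠ z ∧ y.1 2 = z.1 2 := r3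
  have e4 : (∀ d : Fin 3, y.1 d ≠ z.1 d) ↔
      (y.1 0 ≠ z.1 0 ∧ y.1 1 ≠ z.1 1 ∧ y.1 2 ≠ z.1 2) := by
    constructor
    · intro h; exact ⟨h 0, h 1, h 2⟩
    · rintro ⟨h0, h1, h2⟩ d
      fin_cases d
      · exact h0
      · exact h1
      · exact h2
  simp only [e2, e3, e4]
  by_cases hyz : y = z
  · subst hyz; simp
  · have t01 : y.1 0 = z.1 0 → ¬ y.1 1 = z.1 1 := fun h1 h2 => hyz (two_eq y z 0 1 (by decide) h1 h2)
    have t02 : y.1 0 = z.1 0 → ¬ y.1 2 = z.1 2 := fun h1 h2 => hyz (two_eq y z 0 2 (by decide) h1 h2)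
    have t12 : y.1 1 = z.1 1 → ¬ y.1 2 = z.1 2 := fun h1 h2 => hyz (two_eq y z 1 2 (by decide) h1 h2)
    by_cases h0 : y.1 0 = z.1 0
    · simp [hyz, h0, t01 h0, t02 h0]
    · by_cases h1 : y.1 1 = z.1 1
      · simp [hyz, h0, h1, t12 h1]
      · by_cases h2 : y.1 2 = z.1 2 <;> simp [hyz, h0, h1, h2]

lemma DualE_apply (x : XG G) (i : Fin 5) (y z : XG G) :
    DualE F x i y z = if y = z then Adj F i x y else 0 := by
  simp [DualE, Adj, ite_and]

lemma Adj_four (x : XG G) : Adj F 4 = tm x 0 0 (Matrix.single 4 4 (1 : F)) - Adj F 0 - Adj F 1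
    - Adj F 2 - Adj F 3 := by
  ext y z
  rw [adj_sum]
  simp only [Matrix.sub_apply, tm_beta_apply]
  simp [kv]

lemma DualE_four (x : XG G) : DualE F x 4 = 1 - DualE F x 0 - DualE F x 1
    - DualE F x 2 - DualE F x 3 := by
  ext y z
  simp only [Matrix.sub_apply, DualE_apply, adj_sum, Matrix.one_apply]
  split_ifs <;> simp

lemma DualE_zero (x : XG G) : DualE F x 0 = tm x 0 0 (Matrix.single 0 0 (1 : F)) := by
  ext y z
  rw [tm_beta_apply]
  simp only [DualE, Matrix.of_apply, rel_zero, kv]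
  by_cases h : y = x
  · subst h; simp [eq_comm]
  · simp [h, Ne.symm h]

lemma DualE_mid (helem : ∀ a : G, a * a = 1) (x : XG G) (i : Fin 3) :
    DualE F x i.succ.castSucc = tm x (Matrix.single (.inl i) (.inl i) (1 : F)) 0 0 := by
  ext y z
  rw [tm_single_apply]
  simp only [DualE, Matrix.of_apply, rel_mid, C]
  by_cases hyz : y = z
  · subst hyz
    have : ∀ h : HH G, (if y = pt x i h.1 then (1 : F) else 0) *
        (if y = pt x i h.1 then (1 : F) else 0) = if y = pt x i h.1 then (1 : F) else 0 := by
      intro h; split_ifs <;> simp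
    simp only [this]
    rw [sum_ne_one (fun h => if y = pt x i h then (1 : F) else 0), sum_inl helem, pt_one helem]
    have : x.1 i = y.1 i ↔ c x i y = 1 := by rw [← c_eq_iff x, c_self, eq_comm]
    simp only [this]
    by_cases h : x = y
    · subst h; simp [c_self]
    · simp [h, Ne.symm h]
  · rw [if_neg (fun h => hyz h.1)]
    symm
    apply Finset.sum_eq_zero
    intro h _
    by_cases h1 : y = pt x i h.1
    · have : z ≠ pt x i h.1 := fun e => hyz (h1.trans e.symm)
      simp [this]
    · simp [h1]

variable (D : Dat F G)

lemma mem_tm (m : Matrix Q Q F) (e : F) (β : Matrix (Fin 5) (Fin 5) F) :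
    tm D.x m e β ∈ TT F D.helem D.hn D.x := ⟨m, e, β, rfl⟩

lemma Adj_mem (i : Fin 5) : Adj F i ∈ TT F D.helem D.hn D.x := by
  have h0 : Adj F 0 ∈ TT F D.helem D.hn D.x := by rw [Adj_zero]; exact one_mem _
  have hm : ∀ i : Fin 3, Adj F i.succ.castSucc ∈ TT F D.helem D.hn D.x := by
    intro i; rw [Adj_mid D.x]; exact mem_tm D _ _ _
  rcases five i with rfl | rfl | ⟨j, rfl⟩
  · exact h0
  · rw [Adj_four D.x]
    exact sub_mem (sub_mem (sub_mem (sub_mem (mem_tm D _ _ _) h0) (hm 0)) (hm 1)) (hm 2)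
  · exact hm j

lemma DualE_mem (i : Fin 5) : DualE F D.x i ∈ TT F D.helem D.hn D.x := by
  have h0 : DualE F D.x 0 ∈ TT F D.helem D.hn D.x := by rw [DualE_zero]; exact mem_tm D _ _ _
  have hm : ∀ i : Fin 3, DualE F D.x i.succ.castSucc ∈ TT F D.helem D.hn D.x := by
    intro i; rw [DualE_mid D.helem]; exact mem_tm D _ _ _
  rcases five i with rfl | rfl | ⟨j, rfl⟩
  · exact h0
  · rw [DualE_four D.x]
    exact sub_mem (sub_mem (sub_mem (sub_mem (one_mem _) h0) (hm 0)) (hm 1)) (hm 2)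
  · exact hm j

lemma T_le : TerwilligerAlg F G D.x ≤ TT F D.helem D.hn D.x := by
  apply Algebra.adjoin_le
  rintro _ ⟨a, b, c, rfl⟩
  exact mul_mem (mul_mem (DualE_mem D a) (Adj_mem D b)) (DualE_mem D c)

def phi : TerwilligerAlg F G D.x →ₐ[F] Matrix (Fin 4) (Fin 4) F × F × F :=
  (phiT D).comp (Subalgebra.inclusion (T_le D))

lemma phi_apply (t : TerwilligerAlg F G D.x) : phi D t = PhiD D t.1 := rfl

lemma PhiD_mul (s t : Matrix (XG G) (XG G) F) (hs : s ∈ TT F D.helem D.hn D.x)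
    (ht : t ∈ TT F D.helem D.hn D.x) : PhiD D (s * t) = PhiD D s * PhiD D t := by
  have h := map_mul (phiT D) ⟨s, hs⟩ ⟨t, ht⟩
  rw [phiT_apply, phiT_apply, phiT_apply] at h
  exact h

lemma gen_range (a b c : Fin 5) :
    PhiD D (DualE F D.x a) * PhiD D (Adj F b) * PhiD D (DualE F D.x c) ∈ (phi D).range := by
  rw [← PhiD_mul D _ _ (DualE_mem D a) (Adj_mem D b),
    ← PhiD_mul D _ _ (mul_mem (DualE_mem D a) (Adj_mem D b)) (DualE_mem D c)]
  exact ⟨⟨_, Algebra.subset_adjoin ⟨a, b, c, rfl⟩⟩, rfl⟩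

lemma P_A0 : PhiD D (Adj F 0) = 1 := by
  rw [Adj_zero]; exact map_one (phiT D)

lemma sum_single (a : Fin 5) : ∑ i, ∑ j, Matrix.single a a (1 : F) i j = 1 := by
  simp only [Matrix.single_apply, ite_and]
  simp only [Finset.sum_ite_irrel, Finset.sum_ite_eq, Finset.mem_univ, if_true,
    Finset.sum_const_zero]

lemma P_E0 : PhiD D (DualE F D.x 0) = (0, 0, 1) := by
  rw [DualE_zero, PhiD_tm, sum_single]
  simp

lemma UW (q r : Q) (i j : Fin 4) : (UU F * Matrix.single q r (1 : F) * WW F) i j =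
    UU F i q * WW F r j := by
  rw [Matrix.mul_assoc, Matrix.mul_apply, Finset.sum_eq_single q]
  · simp
  · intro p _ hp; simp [hp]
  · simp

lemma P_E (i : Fin 3) : PhiD D (DualE F D.x i.succ.castSucc) =
    (Matrix.single i.castSucc i.castSucc 1, 0, 0) := by
  rw [DualE_mid D.helem, PhiD_tm]
  refine Prod.ext ?_ (Prod.ext rfl ?_)
  · ext a b
    simp only [Matrix.add_apply, UW]
    simp only [UU, WW, Matrix.single_apply, Matrix.of_apply, @eq_comm _ i.castSucc]
    simp [ite_and]
    split_ifs <;> rfl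
  · simp

lemma P_E4 : PhiD D (DualE F D.x 4) = (Matrix.single 3 3 1, 1, 0) := by
  have h1 : PhiD D 1 = 1 := map_one (phiT D)
  have e1 : PhiD D (DualE F D.x 1) = (Matrix.single 0 0 1, 0, 0) := P_E D 0
  have e2 : PhiD D (DualE F D.x 2) = (Matrix.single 1 1 1, 0, 0) := P_E D 1
  have e3 : PhiD D (DualE F D.x 3) = (Matrix.single 2 2 1, 0, 0) := P_E D 2
  rw [DualE_four, map_sub, map_sub, map_sub, map_sub, h1, P_E0, e1, e2, e3]
  refine Prod.ext ?_ (Prod.ext ?_ ?_)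
  · ext a b
    fin_cases a <;> fin_cases b <;> simp [Matrix.single_apply]
  · simp
  · simp

lemma P_A (i : Fin 3) : PhiD D (Adj F i.succ.castSucc) =
    (Matrix.of (fun a b => UU F a (.inr i) * WW F (.inr i) b) - 1, -1, 0) := by
  rw [Adj_mid D.x, PhiD_tm]
  refine Prod.ext ?_ (Prod.ext rfl ?_)
  · ext a b
    simp only [Matrix.add_apply, UW, Matrix.sub_apply, Matrix.of_apply]
    simp [sub_eq_add_neg]
  · simp only [sum_single]
    simp

lemma surj : Function.Surjective (phi D) := by
  have e1 : PhiD D (DualE F D.x 1) = (Matrix.single 0 0 1, 0, 0) := P_E D 0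
  have e2 : PhiD D (DualE F D.x 2) = (Matrix.single 1 1 1, 0, 0) := P_E D 1
  have e3 : PhiD D (DualE F D.x 3) = (Matrix.single 2 2 1, 0, 0) := P_E D 2
  have a2 := P_A D 1
  have a3 := P_A D 2
  simp only [Fin.succ_one_eq_two] at a2
  have a2 : PhiD D (Adj F 2) = _ := a2
  have a3 : PhiD D (Adj F 3) = _ := a3
  have c00 : ((Matrix.single 0 0 1, 0, 0) : Matrix (Fin 4) (Fin 4) F × F × F) ∈ (phi D).range := by
    have := gen_range D 1 0 1
    rw [P_A0, e1] at this
    simpa using this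
  have col : ∀ i : Fin 4, ((Matrix.single i 0 1, 0, 0) : Matrix (Fin 4) (Fin 4) F × F × F) ∈
      (phi D).range := by
    intro i
    fin_cases i
    · exact c00
    · have := gen_range D 2 3 1
      rw [e1, e2, a3] at this
      convert this using 1
      simp [UU, WW]
    · have := gen_range D 3 2 1
      rw [e1, e3, a2] at this
      convert this using 1
      simp [UU, WW]
    · have := gen_range D 4 2 1
      rw [e1, P_E4, a2] at this
      convert this using 1
      simp [UU, WW]
  have row : ∀ i : Fin 4, ((Matrix.single 0 i 1, 0, 0) : Matrix (Fin 4) (Fin 4) F × F × F) ∈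
      (phi D).range := by
    intro i
    fin_cases i
    · exact c00
    · have := gen_range D 1 3 2
      rw [e1, e2, a3] at this
      convert this using 1
      simp [UU, WW]
    · have := gen_range D 1 2 3
      rw [e1, e3, a2] at this
      convert this using 1
      simp [UU, WW]
    · have := neg_mem (gen_range D 1 2 4)
      rw [e1, P_E4, a2] at this
      convert this using 1
      simp [UU, WW, ← Matrix.single_neg]
  have all : ∀ i j : Fin 4, ((Matrix.single i j 1, 0, 0) : Matrix (Fin 4) (Fin 4) F × F × F) ∈
      (phi D).range := by
    intro i j
    have := mul_mem (col i) (row j)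
    simpa using this
  have f3 : ((0, 0, 1) : Matrix (Fin 4) (Fin 4) F × F × F) ∈ (phi D).range := by
    have := gen_range D 0 0 0
    rw [P_A0, P_E0] at this
    simpa using this
  have f2 : ((0, 1, 0) : Matrix (Fin 4) (Fin 4) F × F × F) ∈ (phi D).range := by
    have := gen_range D 4 0 4
    rw [P_A0, P_E4] at this
    have := sub_mem this (all 3 3)
    simpa using this
  rintro ⟨M, r, s⟩
  have hM : ((M, r, s) : Matrix (Fin 4) (Fin 4) F × F × F) =
      (∑ i, ∑ j, M i j • ((Matrix.single i j 1, 0, 0) : Matrix (Fin 4) (Fin 4) F × F × F)) +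
        r • ((0, 1, 0) : Matrix (Fin 4) (Fin 4) F × F × F) +
        s • ((0, 0, 1) : Matrix (Fin 4) (Fin 4) F × F × F) := by
    refine Prod.ext ?_ (Prod.ext ?_ ?_)
    · simp only [Prod.fst_add, Prod.fst_sum, Prod.smul_fst, smul_zero, add_zero]
      conv_lhs => rw [Matrix.matrix_eq_sum_single M]
      simp
    · simp [Prod.snd_sum, Prod.fst_sum]
    · simp [Prod.snd_sum]
  have : ((M, r, s) : Matrix (Fin 4) (Fin 4) F × F × F) ∈ (phi D).range := by
    rw [hM]
    exact add_mem (add_mem (sum_mem fun i _ => sum_mem fun j _ => Subalgebra.smul_mem _ (all i j) _)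
      (Subalgebra.smul_mem _ f2 _)) (Subalgebra.smul_mem _ f3 _)
  exact this

end

theorem main (F : Type) [Field F] (G : Type) [CommGroup G] [Fintype G] [DecidableEq G]
    (helem : ∀ a : G, a ^ 2 = 1) (hcard : 3 ≤ Fintype.card G)
    (hn : (Fintype.card G : F) = 1) (x : XG G) :
    ∃ φ : TerwilligerAlg F G x →ₐ[F] (Matrix (Fin 4) (Fin 4) F × F × F),
      Function.Surjective φ ∧
      ∃ m : ℕ, 1 ≤ m ∧
        ∀ f : Fin m → TerwilligerAlg F G x,
          (∀ j, φ (f j) = 0) → (List.ofFn f).prod = 0 := by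
  obtain ⟨a, ha⟩ : ∃ a : G, a ∉ ({1} : Finset G) := by
    by_contra! h
    have := Finset.card_le_card (fun a _ => h a : (Finset.univ : Finset G) ⊆ {1})
    simp at this
    omega
  obtain ⟨b, hb⟩ : ∃ b : G, b ∉ ({1, a} : Finset G) := by
    by_contra! h
    have := Finset.card_le_card (fun a _ => h a : (Finset.univ : Finset G) ⊆ {1, a})
    have h2 := Finset.card_le_two (a := (1 : G)) (b := a)
    simp only [Finset.card_univ] at this
    omega
  simp only [Finset.mem_singleton, Finset.mem_insert, not_or] at ha hb
  let D : Dat F G :=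
    { helem := fun a => by rw [← sq]; exact helem a
      hn := hn
      x := x
      f := fun h => (if h = ⟨a, ha⟩ then 1 else 0) - (if h = ⟨b, hb.1⟩ then 1 else 0)
      h0 := ⟨a, ha⟩
      hf := by simp [Finset.sum_sub_distrib]
      hf1 := by simp [Ne.symm hb.2]
      a := a
      b := b
      ha := ha
      hb := hb.1
      hab := Ne.symm hb.2 }
  refine ⟨phi D, surj D, 9, by norm_num, ?_⟩
  intro f hf
  apply Subtype.ext
  have h9 := nine D (fun i => (f i).1) (fun i => T_le D (f i).2) (fun i => hf i)
  have : ((List.ofFn f).prod : TerwilligerAlg F G x).1 = (List.ofFn fun i => (f i).1).prod := by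
    change (TerwilligerAlg F G x).val (List.ofFn f).prod = _
    rw [map_list_prod, List.map_ofFn]
    rfl
  rw [this, h9]
  rfl

end TW

theorem stmt15 (F : Type) [Field F] (G : Type) [Group G] [Fintype G] [DecidableEq G]
    (helem : ∀ a : G, a ^ 2 = 1) (hcard : 3 ≤ Fintype.card G)
    (hn : (Fintype.card G : F) = 1) (x : XG G) :
    ∃ φ : TerwilligerAlg F G x →ₐ[F] (Matrix (Fin 4) (Fin 4) F × F × F),
      Function.Surjective φ ∧
      ∃ m : ℕ, 1 ≤ m ∧
        ∀ f : Fin m → TerwilligerAlg F G x,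
          (∀ j, φ (f j) = 0) → (List.ofFn f).prod = 0 := by
  let _ : CommGroup G :=
    { ‹Group G› with
      mul_comm := fun a b => by
        have h : ∀ a : G, a⁻¹ = a := fun a => by
          rw [inv_eq_iff_mul_eq_one, ← sq]; exact helem a
        have := h (a * b)
        rw [_root_.mul_inv_rev, h, h] at this
        exact this.symm }
  exact TW.main F G helem hcard hn x
end

section
/- Assume G is an elementary abelian 2-group with |G| = n, the characteristic of F is not 2, and the image of n in F equals 2 (i.e. n ≡ 2 mod p where p = char F). Then there is a surjective F-algebra homomorphism from the Terwilliger F-algebra T onto M₆(F) × M₄(F) × F whose kernel K is a nilpotent two-sided ideal of T (there exists m ≥ 1 such that any product of m elements of K equals the zero matrix). Consequently T/Rad T ≅ M₆(F) ⊕ M₄(F) ⊕ M₁(F) as F-algebras, where Rad T = K is the Jacobson radical of T. -/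
open Matrix

set_option linter.all false
section Aux

variable {F : Type} [Field F] {G : Type} [Group G] [Fintype G] [DecidableEq G]

def al (x y : XG G) : G := x.1 0 * y.1 0
def be (x y : XG G) : G := x.1 1 * y.1 1

def Qm (F : Type) [Field F] (x : XG G) (g : G) : Matrix (XG G) (Fin 6) F :=
  Matrix.of fun y => 
    ![if al x y = 1 ∧ be x y = g then 1 else 0,
      if al x y = g ∧ be x y = 1 then 1 else 0,
      if al x y = g ∧ be x y = g then 1 else 0,
      if al x y = g then 1 else 0,
      if be x y = g then 1 else 0,
      if al x y * be x y = g then 1 else 0]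

def Um (F : Type) [Field F] (x : XG G) : Matrix (XG G) (Fin 5) F :=
  Matrix.of fun y => 
    ![if al x y = 1 ∧ be x y = 1 then 1 else 0,
      if al x y = 1 ∧ be x y ≠ 1 then 1 else 0,
      if al x y ≠ 1 ∧ be x y = 1 then 1 else 0,
      if al x y ≠ 1 ∧ be x y = al x y then 1 else 0,
      if al x y ≠ 1 ∧ be x y ≠ 1 ∧ be x y ≠ al x y then 1 else 0]

def kN (F : Type) [Field F] : Matrix (Fin 6) (Fin 6) F :=
  !![1,0,0,0,1,1; 0,1,0,1,0,1; 0,0,1,1,1,0; 0,1,1,2,0,0; 1,0,1,0,2,0; 1,1,0,0,0,2]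
def kK (F : Type) [Field F] : Matrix (Fin 6) (Fin 6) F :=
  !![0,0,0,0,0,0; 0,0,0,0,0,0; 0,0,0,0,0,0; 0,0,0,0,1,1; 0,0,0,1,0,1; 0,0,0,1,1,0]
def kNi (F : Type) [Field F] : Matrix (Fin 6) (Fin 6) F :=
  !![1,-1,-1,1,0,0; -1,1,-1,0,1,0; -1,-1,1,0,0,1;
     1,0,0,1/2,-1/2,-1/2; 0,1,0,-1/2,1/2,-1/2; 0,0,1,-1/2,-1/2,1/2]
def kR (F : Type) [Field F] : Matrix (Fin 6) (Fin 5) F :=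
  !![0,1,0,0,0; 0,0,1,0,0; 0,0,0,1,0; 0,0,1,1,1; 0,1,0,1,1; 0,1,1,0,1]
def kC (F : Type) [Field F] : Matrix (Fin 6) (Fin 5) F :=
  !![0,1,0,0,0; 0,0,1,0,0; 0,0,0,1,0; 0,0,1,1,0; 0,1,0,1,0; 0,1,1,0,0]
def kD (F : Type) [Field F] : Matrix (Fin 5) (Fin 5) F :=
  Matrix.diagonal ![1,1,1,1,0]

theorem kN_mul_kNi (h2 : (2 : F) ≠ 0) : kN F * kNi F = 1 := by
  ext i j
  fin_cases i <;> fin_cases j <;>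
    simp [kN, kNi, Matrix.mul_apply, Fin.sum_univ_succ] <;> field_simp <;> ring

theorem ptEquiv_aux (hs : ∀ a : G, a * a = 1) (hc : ∀ a b : G, a * b = b * a) (x y : XG G) :
    x.1 2 * y.1 2 = al x y * be x y := by
  rw [← x.2, ← y.2, al, be]
  calc x.1 0 * x.1 1 * (y.1 0 * y.1 1) = x.1 0 * (x.1 1 * y.1 0) * y.1 1 := by group
    _ = x.1 0 * (y.1 0 * x.1 1) * y.1 1 := by rw [hc (x.1 1)]
    _ = _ := by group

def ptEquiv (hs : ∀ a : G, a * a = 1) (x : XG G) : XG G ≃ G × G where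
  toFun y := (al x y, be x y)
  invFun p := ⟨![x.1 0 * p.1, x.1 1 * p.2, x.1 0 * p.1 * (x.1 1 * p.2)], rfl⟩
  left_inv y := by
    apply Subtype.ext
    have h0 : x.1 0 * al x y = y.1 0 := by rw [al, ← mul_assoc, hs, one_mul]
    have h1 : x.1 1 * be x y = y.1 1 := by rw [be, ← mul_assoc, hs, one_mul]
    funext d
    fin_cases d
    · simp [h0]
    · simp [h1]
    · simp [h0, h1, y.2]
  right_inv p := by
    ext
    · simp [al, ← mul_assoc, hs]
    · simp [be, ← mul_assoc, hs]

theorem sum_pt (hs : ∀ a : G, a * a = 1) (x : XG G) (f : G → G → F) :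
    ∑ y : XG G, f (al x y) (be x y) = ∑ a, ∑ b, f a b := by
  rw [← Fintype.sum_prod_type' (f := f)]
  exact (ptEquiv hs x).sum_comp (fun p => f p.1 p.2)

theorem sum_H (f : G → F) : ∑ g : {g : G // g ≠ 1}, f g = ∑ g, f g - f 1 := by
  rw [← Finset.sum_erase_eq_sub (Finset.mem_univ 1)]
  exact (Finset.sum_subtype (Finset.univ.erase 1) (by simp) f).symm

theorem mul_eq_iff (hs : ∀ a : G, a * a = 1) (a b g : G) : a * b = g ↔ b = a * g := by
  constructor
  · rintro rfl; rw [← mul_assoc, hs, one_mul]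
  · rintro rfl; rw [← mul_assoc, hs, one_mul]

theorem QQ (hs : ∀ a : G, a * a = 1) (hc : ∀ a b : G, a * b = b * a)
    (hn : (Fintype.card G : F) = 2) (x : XG G) (g h : {g : G // g ≠ 1}) :
    (Qm F x g)ᵀ * Qm F x h = (if g = h then kN F else 0) + kK F := by
  obtain ⟨g, hg⟩ := g
  obtain ⟨h, hh⟩ := h
  have e1 : ∀ a b : G, a * b = a ↔ b = 1 := fun a b => mul_eq_left
  have e2 : ∀ a b : G, a = a * b ↔ b = 1 := fun a b => left_eq_mul
  ext i j
  rw [Matrix.mul_apply]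
  simp only [Matrix.transpose_apply, Qm, Matrix.of_apply]
  rw [sum_pt hs x (fun a b => (![if a = 1 ∧ b = g then 1 else 0,
      if a = g ∧ b = 1 then 1 else 0,
      if a = g ∧ b = g then 1 else 0,
      if a = g then 1 else 0,
      if b = g then 1 else 0,
      if a * b = g then 1 else 0] : Fin 6 → F) i * (![if a = 1 ∧ b = h then 1 else 0,
      if a = h ∧ b = 1 then 1 else 0,
      if a = h ∧ b = h then 1 else 0,
      if a = h then 1 else 0,
      if b = h then 1 else 0,
      if a * b = h then 1 else 0] : Fin 6 → F) j)]
  by_cases hgh : g = h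
  · subst hgh
    fin_cases i <;> fin_cases j <;>
      simp [kN, kK, ite_and, mul_eq_iff hs, hg, hn, hs, Ne.symm hg, Finset.sum_ite_eq, Finset.sum_ite_eq'] 
  · have f1 : ∀ x, (h = x * g) = (x = h * g) := by
      intro x
      apply propext
      constructor
      · rintro rfl; rw [mul_assoc, hs, mul_one]
      · rintro rfl; rw [mul_assoc, hs, mul_one]
    have f2 : ∀ x : G, x * (x * g) = g := fun x => by rw [← mul_assoc, hs, one_mul]
    have f3 : ¬ 1 = h * g := by
      intro e
      exact hgh (by simpa using (mul_eq_iff hs h g 1).1 e.symm)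
    fin_cases i <;> fin_cases j <;>
      simp [kN, kK, f1, f2, f3, ite_and, mul_eq_iff hs, hg, hh, hn, hs, hgh, Ne.symm hgh, Ne.symm hg, Ne.symm hh, Finset.sum_ite_eq, Finset.sum_ite_eq'] 

def uvec (F : Type) [Field F] (a b : G) : Fin 5 → F :=
  ![if a = 1 ∧ b = 1 then 1 else 0,
    (if a = 1 then 1 else 0) - if a = 1 ∧ b = 1 then 1 else 0,
    (if b = 1 then 1 else 0) - if a = 1 ∧ b = 1 then 1 else 0,
    (if b = a then 1 else 0) - if a = 1 ∧ b = 1 then 1 else 0,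
    1 - (if a = 1 then 1 else 0) - (if b = 1 then 1 else 0) - (if b = a then 1 else 0)
      + 2 * if a = 1 ∧ b = 1 then 1 else 0]

theorem Um_uvec (x y : XG G) (j : Fin 5) : Um F x y j = uvec F (al x y) (be x y) j := by
  simp only [Um, uvec, Matrix.of_apply]
  generalize al x y = a
  generalize be x y = b
  by_cases ha : a = 1 <;> by_cases hb : b = 1 <;> by_cases hab : b = a <;>
    fin_cases j <;> simp_all <;> ring

theorem QU (hs : ∀ a : G, a * a = 1)
    (hn : (Fintype.card G : F) = 2) (x : XG G) (g : {g : G // g ≠ 1}) :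
    (Qm F x g)ᵀ * Um F x = kC F := by
  obtain ⟨g, hg⟩ := g
  have f2 : ∀ y : G, y = y * g ↔ g = 1 := fun a => left_eq_mul
  have f3 : ∀ y : G, y * g = y ↔ g = 1 := fun a => mul_eq_left
  have f4 : ∀ y : G, (1 = y * g) = (y = g) := by
    intro y
    apply propext
    constructor
    · intro e; have := (mul_eq_iff hs y g 1).1 e.symm; simpa using this.symm
    · rintro rfl; exact (hs y).symm
  ext i j
  rw [Matrix.mul_apply]
  simp only [Matrix.transpose_apply, Um_uvec, Qm, Matrix.of_apply]
  rw [sum_pt hs x (fun a b => (![if a = 1 ∧ b = g then 1 else 0,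
      if a = g ∧ b = 1 then 1 else 0,
      if a = g ∧ b = g then 1 else 0,
      if a = g then 1 else 0,
      if b = g then 1 else 0,
      if a * b = g then 1 else 0] : Fin 6 → F) i * uvec F a b j)]
  fin_cases i <;> fin_cases j <;>
    simp [kC, uvec, ite_and, mul_eq_iff hs, hg, hs, hn, f2, f3, f4, Ne.symm hg, mul_add, mul_sub,
      Finset.sum_add_distrib, Finset.sum_sub_distrib] <;> ring

theorem UU (hs : ∀ a : G, a * a = 1)
    (hn : (Fintype.card G : F) = 2) (x : XG G) :
    (Um F x)ᵀ * Um F x = kD F := by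
  ext i j
  rw [Matrix.mul_apply]
  simp only [Matrix.transpose_apply, Um_uvec]
  rw [sum_pt hs x (fun a b => uvec F a b i * uvec F a b j)]
  fin_cases i <;> fin_cases j <;>
    simp [kD, uvec, ite_and, hn, mul_add, mul_sub, add_mul, sub_mul,
      Finset.sum_add_distrib, Finset.sum_sub_distrib] <;> ring

theorem sumQ (hs : ∀ a : G, a * a = 1) (x : XG G) :
    ∑ g : {g : G // g ≠ 1}, Qm F x g = Um F x * (kR F)ᵀ := by
  ext y i
  rw [Matrix.sum_apply, sum_H (fun g => Qm F x g y i), Matrix.mul_apply]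
  simp only [Matrix.transpose_apply, Qm, Um, Matrix.of_apply]
  generalize al x y = a
  generalize be x y = b
  have h3 : a * b = 1 ↔ b = a := by rw [mul_eq_iff hs, mul_one]
  rw [Fin.sum_univ_five]
  by_cases ha : a = 1 <;> by_cases hb : b = 1 <;> by_cases hab : b = a <;>
    fin_cases i <;> simp_all [kR, ite_and]

def Sm (x : XG G) (A : Matrix (Fin 6) (Fin 6) F) : Matrix (XG G) (XG G) F :=
  ∑ g : {g : G // g ≠ 1}, Qm F x g * A * (Qm F x g)ᵀ

structure Ctx (F : Type) [Field F] (G : Type) [Group G] [Fintype G] : Prop where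
  hs : ∀ a : G, a * a = 1
  hc : ∀ a b : G, a * b = b * a
  hn : (Fintype.card G : F) = 2

theorem S_Q (H : Ctx F G) (x : XG G) (A : Matrix (Fin 6) (Fin 6) F) (h : {g : G // g ≠ 1}) :
    Sm x A * Qm F x h = Qm F x h * (A * kN F) + Um F x * ((kR F)ᵀ * A * kK F) := by
  rw [Sm, Matrix.sum_mul]
  have : ∀ g : {g : G // g ≠ 1}, Qm F x g * A * (Qm F x g)ᵀ * Qm F x h =
      (if g = h then Qm F x h * (A * kN F) else 0) + Qm F x g * (A * kK F) := by
    intro g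
    rw [Matrix.mul_assoc, QQ H.hs H.hc H.hn]
    split_ifs with e
    · subst e; simp only [Matrix.mul_add, Matrix.mul_assoc]
    · simp only [Matrix.mul_assoc, zero_add]
  simp only [this, Finset.sum_add_distrib]
  rw [← Matrix.sum_mul, sumQ H.hs]
  simp [Matrix.mul_assoc]

theorem Sm_mul (x : XG G) (A : Matrix (Fin 6) (Fin 6) F) (H : Ctx F G)
    (A' : Matrix (Fin 6) (Fin 6) F) :
    Sm x A * Sm x A' = Sm x (A * kN F * A') +
      Um F x * ((kR F)ᵀ * A * kK F * A' * kR F) * (Um F x)ᵀ := by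
  have e : Sm x A' = ∑ g : {g : G // g ≠ 1}, Qm F x g * A' * (Qm F x g)ᵀ := rfl
  rw [e, Matrix.mul_sum]
  have : ∀ h : {g : G // g ≠ 1}, Sm x A * (Qm F x h * A' * (Qm F x h)ᵀ) =
      Qm F x h * (A * kN F * A') * (Qm F x h)ᵀ +
      Um F x * ((kR F)ᵀ * A * kK F * A') * (Qm F x h)ᵀ := by
    intro h
    rw [← Matrix.mul_assoc, ← Matrix.mul_assoc, S_Q H, Matrix.add_mul, Matrix.add_mul]
    simp only [Matrix.mul_assoc]
  simp only [this, Finset.sum_add_distrib]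
  rw [← Matrix.mul_sum, ← Matrix.transpose_sum, sumQ H.hs]
  simp [Sm, Matrix.mul_assoc, Matrix.transpose_mul]

theorem S_U (x : XG G) (A : Matrix (Fin 6) (Fin 6) F) (H : Ctx F G) :
    Sm x A * Um F x = Um F x * ((kR F)ᵀ * A * kC F) := by
  rw [Sm, Matrix.sum_mul]
  simp only [Matrix.mul_assoc, QU H.hs H.hn]
  rw [← Matrix.sum_mul, sumQ H.hs]
  simp only [Matrix.mul_assoc]

theorem U_S (x : XG G) (A : Matrix (Fin 6) (Fin 6) F) (H : Ctx F G) :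
    (Um F x)ᵀ * Sm x A = ((kC F)ᵀ * A * kR F) * (Um F x)ᵀ := by
  have hUQ : ∀ g : {g : G // g ≠ 1}, (Um F x)ᵀ * Qm F x g = (kC F)ᵀ := by
    intro g
    rw [← QU H.hs H.hn x g]; simp
  rw [Sm, Matrix.mul_sum]
  simp only [← Matrix.mul_assoc, hUQ]
  rw [← Matrix.mul_sum, ← Matrix.transpose_sum, sumQ H.hs]
  simp [Matrix.mul_assoc]

theorem Sm_add (x : XG G) (A A' : Matrix (Fin 6) (Fin 6) F) :
    Sm x (A + A') = Sm x A + Sm x A' := by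
  simp [Sm, Matrix.mul_add, Matrix.add_mul, Finset.sum_add_distrib]

theorem Sm_smul (x : XG G) (c : F) (A : Matrix (Fin 6) (Fin 6) F) :
    Sm x (c • A) = c • Sm x A := by
  simp [Sm, Finset.smul_sum]

theorem Sm_zero (x : XG G) :
    Sm x (0 : Matrix (Fin 6) (Fin 6) F) = 0 := by
  simp [Sm]

def Psi (x : XG G) (A : Matrix (Fin 6) (Fin 6) F) (B : Matrix (Fin 5) (Fin 5) F) (c : F) :
    Matrix (XG G) (XG G) F := Sm x A + Um F x * B * (Um F x)ᵀ + c • 1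

theorem Psi_mul (H : Ctx F G) (x : XG G) (A A' : Matrix (Fin 6) (Fin 6) F)
    (B B' : Matrix (Fin 5) (Fin 5) F) (c c' : F) :
    Psi x A B c * Psi x A' B' c' = Psi x (A * kN F * A' + c • A' + c' • A)
      ((kR F)ᵀ * A * kK F * A' * kR F + (kR F)ᵀ * A * kC F * B' + B * ((kC F)ᵀ * A' * kR F)
        + B * kD F * B' + c • B' + c' • B) (c * c') := by
  have h1 : Sm x A * (Um F x * B' * (Um F x)ᵀ) =
      Um F x * ((kR F)ᵀ * A * kC F * B') * (Um F x)ᵀ := by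
    rw [← Matrix.mul_assoc, ← Matrix.mul_assoc, S_U _ _ H]; simp only [Matrix.mul_assoc]
  have h2 : Um F x * B * (Um F x)ᵀ * Sm x A' =
      Um F x * (B * ((kC F)ᵀ * A' * kR F)) * (Um F x)ᵀ := by
    rw [Matrix.mul_assoc, U_S _ _ H]; simp only [Matrix.mul_assoc]
  have h3 : Um F x * B * (Um F x)ᵀ * (Um F x * B' * (Um F x)ᵀ) =
      Um F x * (B * kD F * B') * (Um F x)ᵀ := by
    rw [← UU H.hs H.hn x]; simp only [Matrix.mul_assoc]
  simp only [Psi, Matrix.add_mul, Matrix.mul_add, Sm_mul _ _ H, h1, h2, h3, Sm_add, Sm_smul,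
    Matrix.smul_mul, Matrix.mul_smul, Matrix.mul_one, Matrix.one_mul, smul_smul, smul_add]
  rw [mul_comm c' c]
  abel

def Wsub (H : Ctx F G) (x : XG G) : Subalgebra F (Matrix (XG G) (XG G) F) where
  carrier := {t | ∃ A B c, t = Psi x A B c}
  mul_mem' := by
    rintro _ _ ⟨A, B, c, rfl⟩ ⟨A', B', c', rfl⟩
    exact ⟨_, _, _, Psi_mul H x A A' B B' c c'⟩
  add_mem' := by
    rintro _ _ ⟨A, B, c, rfl⟩ ⟨A', B', c', rfl⟩
    refine ⟨A + A', B + B', c + c', ?_⟩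
    simp only [Psi, Sm_add, Matrix.mul_add, Matrix.add_mul, add_smul]
    abel
  algebraMap_mem' := by
    intro c
    refine ⟨0, 0, c, ?_⟩
    simp [Psi, Sm_zero, Algebra.algebraMap_eq_smul_one]

theorem Sm_mem (H : Ctx F G) (x : XG G) (A : Matrix (Fin 6) (Fin 6) F) : Sm x A ∈ Wsub H x :=
  ⟨A, 0, 0, by simp [Psi]⟩

theorem UBU_mem (H : Ctx F G) (x : XG G) (B : Matrix (Fin 5) (Fin 5) F) :
    Um F x * B * (Um F x)ᵀ ∈ Wsub H x :=
  ⟨0, B, 0, by simp [Psi, Sm_zero]⟩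

theorem eq0 (x y : XG G) : x.1 0 = y.1 0 ↔ x.1 0 * y.1 0 = x.1 0 * x.1 0 := by
  rw [mul_right_inj, eq_comm]

theorem coord0 (x y z : XG G) : y.1 0 = z.1 0 ↔ al x y = al x z := by
  simp [al]
theorem coord1 (x y z : XG G) : y.1 1 = z.1 1 ↔ be x y = be x z := by
  simp [be]
theorem coord2 (H : Ctx F G) (x y z : XG G) :
    y.1 2 = z.1 2 ↔ al x y * be x y = al x z * be x z := by
  rw [← ptEquiv_aux H.hs H.hc, ← ptEquiv_aux H.hs H.hc]; simp
theorem pt_eq (H : Ctx F G) (x y z : XG G) : y = z ↔ al x y = al x z ∧ be x y = be x z := by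
  rw [← (ptEquiv H.hs x).apply_eq_iff_eq]; simp [ptEquiv]

theorem al_self (H : Ctx F G) (x : XG G) : al x x = 1 := H.hs _
theorem be_self (H : Ctx F G) (x : XG G) : be x x = 1 := H.hs _

theorem Um_rel (H : Ctx F G) (x y : XG G) (i : Fin 5) :
    Um F x y i = if rel i x y then 1 else 0 := by
  have h3 : al x y * be x y = 1 ↔ be x y = al x y := by rw [mul_eq_iff H.hs, mul_one]
  have c0 := coord0 x x y
  have c1 := coord1 x x y
  have c2 := coord2 H x x y
  have e := pt_eq H x x y
  rw [al_self H] at c0 c2 e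
  rw [be_self H] at c1 c2 e
  rw [mul_one, eq_comm (a := (1 : G)), h3] at c2
  rw [eq_comm (a := (1 : G))] at c0 e
  rw [eq_comm (a := (1 : G))] at c1
  rw [eq_comm (a := (1 : G)) (b := be x y)] at e
  simp only [Um, Matrix.of_apply]
  have d : (∀ d : Fin 3, x.1 d ≠ y.1 d) ↔ (al x y ≠ 1 ∧ be x y ≠ 1 ∧ be x y ≠ al x y) := by
    rw [Fin.forall_fin_succ, Fin.forall_fin_succ, Fin.forall_fin_succ]
    simp [c0, c1, c2]
  have g1 : cIdx 1 = 0 := rfl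
  have g2 : cIdx 2 = 1 := rfl
  have g3 : cIdx 3 = 2 := rfl
  fin_cases i
  · simp [rel, e]
  · simp [rel, e, c0, g1]
    grind
  · simp [rel, e, c1, g2]
    grind
  · simp [rel, e, c2, g3]
    grind
  · simp only [rel]
    simp [d]

theorem Um_sum (x y : XG G) : ∑ i, Um F x y i = 1 := by
  simp only [Um_uvec, Fin.sum_univ_five, uvec]
  simp only [Matrix.cons_val]
  ring

theorem DualE_eq (H : Ctx F G) (x : XG G) (i : Fin 5) :
    DualE F x i = Matrix.diagonal (fun y => Um F x y i) := by
  ext y z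
  simp only [DualE, Matrix.of_apply, Matrix.diagonal_apply, Um_rel H, ite_and]

/-- The matrix of equality of coordinate. -/
def Cm (F : Type) [Field F] (G : Type) [Group G] [DecidableEq G] (d : Fin 3) :
    Matrix (XG G) (XG G) F :=
  Matrix.of fun y z => if y.1 d = z.1 d then 1 else 0

theorem Cm_eq (d : Fin 3) : Cm F G d = Adj F d.succ.castSucc + Adj F 0 := by
  have g1 : cIdx 1 = 0 := rfl
  have g2 : cIdx 2 = 1 := rfl
  have g3 : cIdx 3 = 2 := rfl
  ext y z
  simp only [Cm, Adj, Matrix.add_apply, Matrix.of_apply]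
  by_cases h : y = z
  · subst h
    fin_cases d <;> simp [rel]
  · fin_cases d <;> simp [rel, h, g1, g2, g3]

theorem Adj0 : Adj F (G := G) 0 = 1 := by
  ext y z
  simp [Adj, rel, Matrix.one_apply]

theorem AllOne_eq (H : Ctx F G) : AllOne F G = ∑ b, Adj F b := by
  ext y z
  rw [Matrix.sum_apply]
  simp only [Adj, AllOne, Matrix.of_apply, ← Um_rel H, Um_sum]

theorem sumDual (H : Ctx F G) (x : XG G) : ∑ a, DualE F x a = 1 := by
  ext y z
  rw [Matrix.sum_apply]
  simp only [DualE_eq H, Matrix.diagonal_apply, Matrix.one_apply]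
  split_ifs
  · exact Um_sum x y
  · simp

theorem Sm_single (x : XG G) (i j : Fin 6) (y z : XG G) :
    Sm x (Matrix.single i j (1 : F)) y z =
      ∑ g, Qm F x g y i * Qm F x g z j - Qm F x 1 y i * Qm F x 1 z j := by
  rw [← sum_H (fun g => Qm F x g y i * Qm F x g z j), Sm, Matrix.sum_apply]
  apply Finset.sum_congr rfl
  intro g _
  simp [Matrix.mul_apply, Matrix.single_apply, ite_and]

theorem U_single (H : Ctx F G) (x : XG G) (a b : Fin 5) :
    Um F x * Matrix.single a b (1 : F) * (Um F x)ᵀ = DualE F x a * AllOne F G * DualE F x b := by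
  ext y z
  rw [DualE_eq H, DualE_eq H, Matrix.mul_diagonal, Matrix.diagonal_mul]
  simp [Matrix.mul_apply, Matrix.single_apply, ite_and, AllOne]

theorem J_eq (x : XG G) :
    AllOne F G = Um F x * (Matrix.of fun _ _ => 1 : Matrix (Fin 5) (Fin 5) F) * (Um F x)ᵀ := by
  ext y z
  simp only [AllOne, Matrix.mul_apply, Matrix.of_apply, Matrix.transpose_apply, mul_one, Um_sum]
  simp [Um_sum]

theorem E0_eq (H : Ctx F G) (x : XG G) :
    DualE F x 0 = Um F x * (Matrix.single 0 0 1 : Matrix (Fin 5) (Fin 5) F) * (Um F x)ᵀ := by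
  rw [U_single H, DualE_eq H]
  ext y z
  rw [Matrix.mul_diagonal, Matrix.diagonal_mul]
  simp only [Matrix.diagonal_apply, pt_eq H x y z, AllOne, Um, Matrix.of_apply, Matrix.cons_val]
  generalize al x y = a, be x y = b, al x z = a', be x z = b'
  by_cases h1 : a = 1 <;> by_cases h2 : b = 1 <;> by_cases h3 : a' = 1 <;> by_cases h4 : b' = 1 <;>
    simp_all [eq_comm]

theorem E1_eq (H : Ctx F G) (x : XG G) :
    DualE F x 1 = Sm x (Matrix.single 0 0 (1 : F)) := by
  rw [DualE_eq H]
  ext y z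
  rw [Sm_single]
  simp only [Matrix.diagonal_apply, pt_eq H x y z, Um, Qm, Matrix.of_apply, Matrix.cons_val]
  generalize al x y = a, be x y = b, al x z = a', be x z = b'
  simp [ite_and]
  grind

theorem E2_eq (H : Ctx F G) (x : XG G) :
    DualE F x 2 = Sm x (Matrix.single 1 1 (1 : F)) := by
  rw [DualE_eq H]
  ext y z
  rw [Sm_single]
  simp only [Matrix.diagonal_apply, pt_eq H x y z, Um, Qm, Matrix.of_apply, Matrix.cons_val]
  generalize al x y = a, be x y = b, al x z = a', be x z = b'
  simp [ite_and]
  grind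

theorem E3_eq (H : Ctx F G) (x : XG G) :
    DualE F x 3 = Sm x (Matrix.single 2 2 (1 : F)) := by
  rw [DualE_eq H]
  ext y z
  rw [Sm_single]
  simp only [Matrix.diagonal_apply, pt_eq H x y z, Um, Qm, Matrix.of_apply, Matrix.cons_val]
  generalize al x y = a, be x y = b, al x z = a', be x z = b'
  simp [ite_and]
  grind

theorem C0_eq (H : Ctx F G) (x : XG G) :
    Cm F G 0 = Sm x (Matrix.single 3 3 (1 : F)) +
      (DualE F x 0 + DualE F x 1) * AllOne F G * (DualE F x 0 + DualE F x 1) := by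
  simp only [DualE_eq H, Matrix.diagonal_add]
  ext y z
  rw [Matrix.add_apply, Matrix.mul_diagonal, Matrix.diagonal_mul, Sm_single]
  simp only [Cm, coord0 x y z, AllOne, Um, Qm, Matrix.of_apply, Matrix.cons_val]
  generalize al x y = a, be x y = b, al x z = a', be x z = b'
  simp [ite_and]
  grind

theorem C1_eq (H : Ctx F G) (x : XG G) :
    Cm F G 1 = Sm x (Matrix.single 4 4 (1 : F)) +
      (DualE F x 0 + DualE F x 2) * AllOne F G * (DualE F x 0 + DualE F x 2) := by
  simp only [DualE_eq H, Matrix.diagonal_add]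
  ext y z
  rw [Matrix.add_apply, Matrix.mul_diagonal, Matrix.diagonal_mul, Sm_single]
  simp only [Cm, coord1 x y z, AllOne, Um, Qm, Matrix.of_apply, Matrix.cons_val]
  generalize al x y = a, be x y = b, al x z = a', be x z = b'
  simp [ite_and]
  grind

theorem C2_eq (H : Ctx F G) (x : XG G) :
    Cm F G 2 = Sm x (Matrix.single 5 5 (1 : F)) +
      (DualE F x 0 + DualE F x 3) * AllOne F G * (DualE F x 0 + DualE F x 3) := by
  simp only [DualE_eq H, Matrix.diagonal_add]
  ext y z
  rw [Matrix.add_apply, Matrix.mul_diagonal, Matrix.diagonal_mul, Sm_single]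
  simp only [Cm, coord2 H x y z, AllOne, Um, Qm, Matrix.of_apply, Matrix.cons_val]
  have h3 : al x y * be x y = 1 ↔ be x y = al x y := by rw [mul_eq_iff H.hs, mul_one]
  have h4 : al x z * be x z = 1 ↔ be x z = al x z := by rw [mul_eq_iff H.hs, mul_one]
  simp only [h3, h4]
  generalize al x y = a, be x y = b, al x z = a', be x z = b' at *
  simp
  grind

theorem DualE_memW (H : Ctx F G) (x : XG G) (a : Fin 5) : DualE F x a ∈ Wsub H x := by
  have h0 : DualE F x 0 ∈ Wsub H x := by rw [E0_eq H]; exact UBU_mem H x _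
  have h1 : DualE F x 1 ∈ Wsub H x := by rw [E1_eq H]; exact Sm_mem H x _
  have h2 : DualE F x 2 ∈ Wsub H x := by rw [E2_eq H]; exact Sm_mem H x _
  have h3 : DualE F x 3 ∈ Wsub H x := by rw [E3_eq H]; exact Sm_mem H x _
  have h4 : DualE F x 4 = 1 - DualE F x 0 - DualE F x 1 - DualE F x 2 - DualE F x 3 := by
    rw [← sumDual H x, Fin.sum_univ_five]; abel
  fin_cases a
  · exact h0
  · exact h1
  · exact h2
  · exact h3
  · change DualE F x 4 ∈ _
    rw [h4]
    exact sub_mem (sub_mem (sub_mem (sub_mem (one_mem _) h0) h1) h2) h3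

theorem J_memW (H : Ctx F G) (x : XG G) : AllOne F G ∈ Wsub H x := by
  rw [J_eq x]; exact UBU_mem H x _

theorem Cm_memW (H : Ctx F G) (x : XG G) (d : Fin 3) : Cm F G d ∈ Wsub H x := by
  fin_cases d
  · change Cm F G 0 ∈ _
    rw [C0_eq H x]
    exact add_mem (Sm_mem H x _) (mul_mem (mul_mem (add_mem (DualE_memW H x _) (DualE_memW H x _))
      (J_memW H x)) (add_mem (DualE_memW H x _) (DualE_memW H x _)))
  · change Cm F G 1 ∈ _
    rw [C1_eq H x]
    exact add_mem (Sm_mem H x _) (mul_mem (mul_mem (add_mem (DualE_memW H x _) (DualE_memW H x _))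
      (J_memW H x)) (add_mem (DualE_memW H x _) (DualE_memW H x _)))
  · change Cm F G 2 ∈ _
    rw [C2_eq H x]
    exact add_mem (Sm_mem H x _) (mul_mem (mul_mem (add_mem (DualE_memW H x _) (DualE_memW H x _))
      (J_memW H x)) (add_mem (DualE_memW H x _) (DualE_memW H x _)))

theorem Adj_memW (H : Ctx F G) (x : XG G) (b : Fin 5) : Adj F b ∈ Wsub H x := by
  have h0 : Adj F (G := G) 0 ∈ Wsub H x := by rw [Adj0]; exact one_mem _
  have hd : ∀ d : Fin 3, Adj F (G := G) d.succ.castSucc ∈ Wsub H x := by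
    intro d
    have : Adj F (G := G) d.succ.castSucc = Cm F G d - Adj F 0 := by rw [Cm_eq]; abel
    rw [this]
    exact sub_mem (Cm_memW H x d) h0
  have h4 : Adj F (G := G) 4 = AllOne F G - Adj F 0 - Adj F 1 - Adj F 2 - Adj F 3 := by
    rw [AllOne_eq H, Fin.sum_univ_five]; abel
  have h1 : Adj F (G := G) 1 ∈ Wsub H x := hd 0
  have h2 : Adj F (G := G) 2 ∈ Wsub H x := hd 1
  have h3 : Adj F (G := G) 3 ∈ Wsub H x := hd 2
  fin_cases b
  · exact h0
  · exact h1
  · exact h2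
  · exact h3
  · change Adj F 4 ∈ _
    rw [h4]
    exact sub_mem (sub_mem (sub_mem (sub_mem (J_memW H x) h0) h1) h2) h3

theorem T_le_W (H : Ctx F G) (x : XG G) : TerwilligerAlg F G x ≤ Wsub H x := by
  apply Algebra.adjoin_le
  rintro _ ⟨a, b, c, rfl⟩
  exact mul_mem (mul_mem (DualE_memW H x a) (Adj_memW H x b)) (DualE_memW H x c)

theorem DualE_memT (H : Ctx F G) (x : XG G) (a : Fin 5) : DualE F x a ∈ TerwilligerAlg F G x := by
  have : DualE F x a = DualE F x a * Adj F 0 * DualE F x a := by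
    rw [Adj0, mul_one, DualE_eq H, Matrix.diagonal_mul_diagonal]
    congr 1
    funext y
    rw [Um_rel H]
    split_ifs <;> simp
  rw [this]
  exact Algebra.subset_adjoin ⟨a, 0, a, rfl⟩

theorem Adj_memT (H : Ctx F G) (x : XG G) (b : Fin 5) : Adj F b ∈ TerwilligerAlg F G x := by
  have : Adj F b = (∑ a, DualE F x a) * Adj F b * (∑ c, DualE F x c) := by
    rw [sumDual H, one_mul, mul_one]
  rw [this, Finset.sum_mul, Finset.sum_mul]
  refine sum_mem fun a _ => ?_
  rw [Finset.mul_sum]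
  exact sum_mem fun c _ => Algebra.subset_adjoin ⟨a, b, c, rfl⟩

theorem J_memT (H : Ctx F G) (x : XG G) : AllOne F G ∈ TerwilligerAlg F G x := by
  rw [AllOne_eq H]
  exact sum_mem fun b _ => Adj_memT H x b

theorem Cm_memT (H : Ctx F G) (x : XG G) (d : Fin 3) : Cm F G d ∈ TerwilligerAlg F G x := by
  rw [Cm_eq]
  exact add_mem (Adj_memT H x _) (Adj_memT H x _)

theorem UBU_memT (H : Ctx F G) (x : XG G) (B : Matrix (Fin 5) (Fin 5) F) :
    Um F x * B * (Um F x)ᵀ ∈ TerwilligerAlg F G x := by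
  rw [Matrix.matrix_eq_sum_single B, Matrix.mul_sum, Matrix.sum_mul]
  refine sum_mem fun i _ => ?_
  rw [Matrix.mul_sum, Matrix.sum_mul]
  refine sum_mem fun j _ => ?_
  have : Matrix.single i j (B i j) = B i j • Matrix.single i j (1 : F) := by
    simp
  rw [this, Matrix.mul_smul, Matrix.smul_mul, U_single H]
  exact Subalgebra.smul_mem _ (mul_mem (mul_mem (DualE_memT H x _) (J_memT H x))
    (DualE_memT H x _)) _

theorem Sm_transpose (x : XG G) (A : Matrix (Fin 6) (Fin 6) F) : (Sm x A)ᵀ = Sm x Aᵀ := by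
  simp [Sm, Matrix.transpose_sum, Matrix.mul_assoc]

theorem DualE_transpose (H : Ctx F G) (x : XG G) (a : Fin 5) : (DualE F x a)ᵀ = DualE F x a := by
  rw [DualE_eq H, Matrix.diagonal_transpose]

theorem Cm_transpose (d : Fin 3) : (Cm F G d)ᵀ = Cm F G d := by
  ext y z
  simp [Cm, eq_comm]

theorem S01_eq (H : Ctx F G) (x : XG G) :
    Sm x (Matrix.single 0 1 (1 : F)) = DualE F x 1 * Cm F G 2 * DualE F x 2 := by
  rw [DualE_eq H, DualE_eq H]
  ext y z
  rw [Matrix.mul_diagonal, Matrix.diagonal_mul, Sm_single]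
  simp only [Cm, coord2 H x y z, Um, Qm, Matrix.of_apply, Matrix.cons_val]
  generalize al x y = a, be x y = b, al x z = a', be x z = b'
  simp [ite_and]
  grind

theorem S02_eq (H : Ctx F G) (x : XG G) :
    Sm x (Matrix.single 0 2 (1 : F)) = DualE F x 1 * Cm F G 1 * DualE F x 3 := by
  rw [DualE_eq H, DualE_eq H]
  ext y z
  rw [Matrix.mul_diagonal, Matrix.diagonal_mul, Sm_single]
  simp only [Cm, coord1 x y z, Um, Qm, Matrix.of_apply, Matrix.cons_val]
  generalize al x y = a, be x y = b, al x z = a', be x z = b'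
  simp [ite_and]
  grind

theorem S04_eq (H : Ctx F G) (x : XG G) :
    Sm x (Matrix.single 0 4 (1 : F)) = DualE F x 1 * Cm F G 1 := by
  rw [DualE_eq H]
  ext y z
  rw [Matrix.diagonal_mul, Sm_single]
  simp only [Cm, coord1 x y z, Um, Qm, Matrix.of_apply, Matrix.cons_val]
  generalize al x y = a, be x y = b, al x z = a', be x z = b'
  simp [ite_and]
  grind

theorem S05_eq (H : Ctx F G) (x : XG G) :
    Sm x (Matrix.single 0 5 (1 : F)) = DualE F x 1 * Cm F G 2 := by
  rw [DualE_eq H]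
  ext y z
  rw [Matrix.diagonal_mul, Sm_single]
  simp only [Cm, coord2 H x y z, Um, Qm, Matrix.of_apply, Matrix.cons_val]
  generalize al x y = a, be x y = b, al x z = a', be x z = b'
  simp [ite_and]
  grind

theorem S13_eq (H : Ctx F G) (x : XG G) :
    Sm x (Matrix.single 1 3 (1 : F)) = DualE F x 2 * Cm F G 0 := by
  rw [DualE_eq H]
  ext y z
  rw [Matrix.diagonal_mul, Sm_single]
  simp only [Cm, coord0 x y z, Um, Qm, Matrix.of_apply, Matrix.cons_val]
  generalize al x y = a, be x y = b, al x z = a', be x z = b'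
  simp [ite_and]
  grind

theorem Sm_single_mul (H : Ctx F G) (x : XG G) (i j k : Fin 6) (hN : kN F k k = 1)
    (hK : kK F k k = 0) :
    Sm x (Matrix.single i k (1 : F)) * Sm x (Matrix.single k j (1 : F)) =
      Sm x (Matrix.single i j (1 : F)) := by
  rw [Sm_mul x _ H]
  have h1 : Matrix.single i k (1 : F) * kN F * Matrix.single k j 1 = Matrix.single i j 1 := by
    rw [Matrix.single_mul_mul_single, hN]; simp
  have h2 : Matrix.single i k (1 : F) * kK F * Matrix.single k j 1 = 0 := by
    rw [Matrix.single_mul_mul_single, hK]; simp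
  have h3 : (kR F)ᵀ * Matrix.single i k (1 : F) * kK F * Matrix.single k j (1 : F) * kR F = 0 := by
    calc _ = (kR F)ᵀ * (Matrix.single i k (1 : F) * kK F * Matrix.single k j 1) * kR F := by
          simp only [Matrix.mul_assoc]
      _ = 0 := by rw [h2]; simp
  rw [h1, h3]
  simp

theorem S0_memT (H : Ctx F G) (x : XG G) (j : Fin 6) :
    Sm x (Matrix.single 0 j (1 : F)) ∈ TerwilligerAlg F G x ∧
    Sm x (Matrix.single j 0 (1 : F)) ∈ TerwilligerAlg F G x := by
  have tr : ∀ i j : Fin 6, Sm x (Matrix.single i j (1 : F)) =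
      (Sm x (Matrix.single j i (1 : F)))ᵀ := by
    intro i j; rw [Sm_transpose]; simp
  have mE := DualE_memT H x
  have mC := Cm_memT H x
  have m01 : Sm x (Matrix.single 0 1 (1 : F)) ∈ TerwilligerAlg F G x := by
    rw [S01_eq H]; exact mul_mem (mul_mem (mE _) (mC _)) (mE _)
  have m10 : Sm x (Matrix.single 1 0 (1 : F)) ∈ TerwilligerAlg F G x := by
    rw [tr, S01_eq H]
    simp only [Matrix.transpose_mul, DualE_transpose H, Cm_transpose]
    exact mul_mem (mE _) (mul_mem (mC _) (mE _))
  have m13 : Sm x (Matrix.single 1 3 (1 : F)) ∈ TerwilligerAlg F G x := by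
    rw [S13_eq H]; exact mul_mem (mE _) (mC _)
  have m31 : Sm x (Matrix.single 3 1 (1 : F)) ∈ TerwilligerAlg F G x := by
    rw [tr, S13_eq H]
    simp only [Matrix.transpose_mul, DualE_transpose H, Cm_transpose]
    exact mul_mem (mC _) (mE _)
  fin_cases j
  · have : Sm x (Matrix.single 0 0 (1 : F)) ∈ TerwilligerAlg F G x := by
      rw [← E1_eq H]; exact mE _
    exact ⟨this, this⟩
  · exact ⟨m01, m10⟩
  · change Sm x (Matrix.single 0 2 (1 : F)) ∈ _ ∧ Sm x (Matrix.single 2 0 (1 : F)) ∈ _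
    rw [tr 2 0, S02_eq H]
    simp only [Matrix.transpose_mul, DualE_transpose H, Cm_transpose]
    exact ⟨mul_mem (mul_mem (mE _) (mC _)) (mE _), mul_mem (mE _) (mul_mem (mC _) (mE _))⟩
  · change Sm x (Matrix.single 0 3 (1 : F)) ∈ _ ∧ Sm x (Matrix.single 3 0 (1 : F)) ∈ _
    rw [← Sm_single_mul H x 0 3 1 (by simp [kN]) (by simp [kK]),
      ← Sm_single_mul H x 3 0 1 (by simp [kN]) (by simp [kK])]
    exact ⟨mul_mem m01 m13, mul_mem m31 m10⟩
  · change Sm x (Matrix.single 0 4 (1 : F)) ∈ _ ∧ Sm x (Matrix.single 4 0 (1 : F)) ∈ _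
    rw [tr 4 0, S04_eq H]
    simp only [Matrix.transpose_mul, DualE_transpose H, Cm_transpose]
    exact ⟨mul_mem (mE _) (mC _), mul_mem (mC _) (mE _)⟩
  · change Sm x (Matrix.single 0 5 (1 : F)) ∈ _ ∧ Sm x (Matrix.single 5 0 (1 : F)) ∈ _
    rw [tr 5 0, S05_eq H]
    simp only [Matrix.transpose_mul, DualE_transpose H, Cm_transpose]
    exact ⟨mul_mem (mE _) (mC _), mul_mem (mC _) (mE _)⟩

theorem Sm_sum {ι : Type} (s : Finset ι) (x : XG G) (f : ι → Matrix (Fin 6) (Fin 6) F) :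
    Sm x (∑ i ∈ s, f i) = ∑ i ∈ s, Sm x (f i) := by
  simp only [Sm, Matrix.mul_sum, Matrix.sum_mul]
  exact Finset.sum_comm

theorem Sm_memT (H : Ctx F G) (x : XG G) (A : Matrix (Fin 6) (Fin 6) F) :
    Sm x A ∈ TerwilligerAlg F G x := by
  rw [Matrix.matrix_eq_sum_single A, Sm_sum]
  refine sum_mem fun i _ => ?_
  rw [Sm_sum]
  refine sum_mem fun j _ => ?_
  have : Matrix.single i j (A i j) = A i j • Matrix.single i j (1 : F) := by
    simp
  rw [this, Sm_smul, ← Sm_single_mul H x i j 0 (by simp [kN]) (by simp [kK])]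
  exact Subalgebra.smul_mem _ (mul_mem (S0_memT H x i).2 (S0_memT H x j).1) _

theorem Psi_memT (H : Ctx F G) (x : XG G) (A : Matrix (Fin 6) (Fin 6) F)
    (B : Matrix (Fin 5) (Fin 5) F) (c : F) : Psi x A B c ∈ TerwilligerAlg F G x :=
  add_mem (add_mem (Sm_memT H x A) (UBU_memT H x B)) (Subalgebra.smul_mem _ (one_mem _) _)

/-- The action on the five class indicators. -/
def M5 (A : Matrix (Fin 6) (Fin 6) F) (B : Matrix (Fin 5) (Fin 5) F) (c : F) :
    Matrix (Fin 5) (Fin 5) F := (kR F)ᵀ * A * kC F + B * kD F + c • 1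

theorem Psi_U (H : Ctx F G) (x : XG G) (A : Matrix (Fin 6) (Fin 6) F)
    (B : Matrix (Fin 5) (Fin 5) F) (c : F) :
    Psi x A B c * Um F x = Um F x * M5 A B c := by
  rw [Psi, M5, Matrix.add_mul, Matrix.add_mul, S_U x A H, Matrix.mul_assoc _ _ (Um F x),
    UU H.hs H.hn, Matrix.mul_add, Matrix.mul_add]
  simp [Matrix.mul_assoc]

theorem Psi_W (H : Ctx F G) (x : XG G) (A : Matrix (Fin 6) (Fin 6) F)
    (B : Matrix (Fin 5) (Fin 5) F) (c : F) (g h : {g : G // g ≠ 1}) :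
    Psi x A B c * (Qm F x g - Qm F x h) = (Qm F x g - Qm F x h) * (A * kN F + c • 1) := by
  have hUQ : ∀ g : {g : G // g ≠ 1}, (Um F x)ᵀ * Qm F x g = (kC F)ᵀ := by
    intro g
    rw [← QU H.hs H.hn x g]; simp
  rw [Psi, Matrix.add_mul, Matrix.add_mul, Matrix.mul_assoc _ _ (_ - _), Matrix.mul_sub (Um F x)ᵀ,
    hUQ, hUQ, sub_self, Matrix.mul_sub, S_Q H, S_Q H]
  simp [Matrix.sub_mul, Matrix.mul_add]

theorem M5_last (A : Matrix (Fin 6) (Fin 6) F) (B : Matrix (Fin 5) (Fin 5) F) (c : F) (k : Fin 5) :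
    M5 A B c k 4 = if k = 4 then c else 0 := by
  have hC : ∀ i, kC F i 4 = 0 := by
    intro i; fin_cases i <;> simp [kC] 
  have hD : ∀ i, kD F i 4 = 0 := by
    intro i; fin_cases i <;> simp [kD] 
  simp [M5, Matrix.mul_apply, hC, hD, Matrix.one_apply]

theorem tri_mul (M M' : Matrix (Fin 5) (Fin 5) F)
    (hM : ∀ k : Fin 4, M k.castSucc 4 = 0) :
    (M * M').submatrix Fin.castSucc Fin.castSucc =
      M.submatrix Fin.castSucc (Fin.castSucc : Fin 4 → Fin 5) *
        M'.submatrix (Fin.castSucc : Fin 4 → Fin 5) Fin.castSucc := by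
  ext i j
  simp [Matrix.mul_apply, Fin.sum_univ_castSucc (n := 4), hM]

theorem tri_mul' (M M' : Matrix (Fin 5) (Fin 5) F)
    (hM : ∀ k : Fin 4, M' k.castSucc 4 = 0) :
    (M * M') 4 4 = M 4 4 * M' 4 4 := by
  simp [Matrix.mul_apply, Fin.sum_univ_castSucc (n := 4), hM]

theorem exists_pts (H : Ctx F G) (hcard : 3 ≤ Fintype.card G) (x : XG G) :
    ∃ (g h : {g : G // g ≠ 1}) (pts : Fin 5 → XG G), g ≠ h ∧
      (Um F x).submatrix pts id = 1 := by
  obtain ⟨g, h, hg, hh, hgh⟩ : ∃ g h : G, g ≠ 1 ∧ h ≠ 1 ∧ g ≠ h := by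
    obtain ⟨a, b, c, hab, hac, hbc⟩ := Fintype.two_lt_card_iff.1 (show 2 < Fintype.card G from hcard)
    by_cases ha : a = 1
    · exact ⟨b, c, by rintro rfl; exact hab ha, by rintro rfl; exact hac ha, hbc⟩
    · by_cases hb : b = 1
      · exact ⟨a, c, ha, by rintro rfl; exact hbc hb, hac⟩
      · exact ⟨a, b, ha, hb, hab⟩
  have hsurj : ∀ p : G × G, ∃ y : XG G, al x y = p.1 ∧ be x y = p.2 := by
    intro p
    obtain ⟨y, hy⟩ := (ptEquiv H.hs x).surjective p
    exact ⟨y, congrArg Prod.fst hy, congrArg Prod.snd hy⟩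
  choose P hP1 hP2 using hsurj
  refine ⟨⟨g, hg⟩, ⟨h, hh⟩, ![P (1, 1), P (1, g), P (g, 1), P (g, g), P (g, h)], by simpa using hgh, ?_⟩
  ext i j
  fin_cases i <;> fin_cases j <;>
    simp [Um, hP1, hP2, hg, hh, hgh, Ne.symm hgh, Ne.symm hg, Ne.symm hh]

theorem exists_hom (H : Ctx F G) (h2 : (2 : F) ≠ 0) (hcard : 3 ≤ Fintype.card G) (x : XG G) :
    ∃ φ : TerwilligerAlg F G x →ₐ[F]
        (Matrix (Fin 6) (Fin 6) F × Matrix (Fin 4) (Fin 4) F × F),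
      ∀ (t : TerwilligerAlg F G x) A B c, t.1 = Psi x A B c →
        φ t = (A * kN F + c • 1, (M5 A B c).submatrix Fin.castSucc Fin.castSucc, c) := by
  obtain ⟨g, h, pts, hgh, hpts⟩ := exists_pts H hcard x
  set W := Qm F x g - Qm F x h with hW
  have hNi : kNi F * kN F = 1 := mul_eq_one_comm.1 (kN_mul_kNi h2)
  have hWW : Wᵀ * W = (2 : F) • kN F := by
    rw [hW, Matrix.transpose_sub, Matrix.sub_mul, Matrix.mul_sub, Matrix.mul_sub,
      QQ H.hs H.hc H.hn, QQ H.hs H.hc H.hn, QQ H.hs H.hc H.hn, QQ H.hs H.hc H.hn]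
    simp only [hgh, Ne.symm hgh, if_true, if_false, two_smul]
    abel
  obtain ⟨L, hL⟩ : ∃ L : Matrix (Fin 6) (XG G) F, L * W = 1 := by
    refine ⟨(2 : F)⁻¹ • (kNi F * Wᵀ), ?_⟩
    rw [Matrix.smul_mul, Matrix.mul_assoc, hWW, Matrix.mul_smul, hNi, smul_smul,
      inv_mul_cancel₀ h2, one_smul]
  let f : TerwilligerAlg F G x →ₗ[F]
      (Matrix (Fin 6) (Fin 6) F × Matrix (Fin 4) (Fin 4) F × F) :=
    { toFun := fun t => (L * (t.1 * W),
        ((t.1 * Um F x).submatrix pts id).submatrix Fin.castSucc Fin.castSucc,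
        ((t.1 * Um F x).submatrix pts id) 4 4)
      map_add' := by
        intro s t
        simp [Matrix.add_mul, Matrix.mul_add, Matrix.submatrix_add]
      map_smul' := by
        intro c t
        simp [Matrix.submatrix_smul] }
  have hf : ∀ (t : TerwilligerAlg F G x) (M : Matrix (Fin 6) (Fin 6) F)
      (M' : Matrix (Fin 5) (Fin 5) F), t.1 * W = W * M → t.1 * Um F x = Um F x * M' →
      f t = (M, M'.submatrix Fin.castSucc Fin.castSucc, M' 4 4) := by
    intro t M M' h1 h2
    have e1 : L * (t.1 * W) = M := by rw [h1, ← Matrix.mul_assoc, hL, Matrix.one_mul]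
    have e2 : (t.1 * Um F x).submatrix pts id = M' := by
      rw [h2, Matrix.submatrix_mul _ _ pts id id Function.bijective_id, hpts, Matrix.one_mul,
        Matrix.submatrix_id_id]
    change (L * (t.1 * W), ((t.1 * Um F x).submatrix pts id).submatrix Fin.castSucc Fin.castSucc,
        ((t.1 * Um F x).submatrix pts id) 4 4) = _
    rw [e1, e2]
  have h4 : ∀ k : Fin 4, k.castSucc ≠ (4 : Fin 5) := fun k => (Fin.castSucc_lt_last k).ne
  have hcol : ∀ (A : Matrix (Fin 6) (Fin 6) F) B c (k : Fin 4), M5 A B c k.castSucc 4 = 0 := by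
    intro A B c k
    rw [M5_last, if_neg (h4 k)]
  have hval : ∀ (t : TerwilligerAlg F G x) A B c, t.1 = Psi x A B c →
        f t = (A * kN F + c • 1, (M5 A B c).submatrix Fin.castSucc Fin.castSucc, c) := by
    intro t A B c ht
    rw [hf t _ _ (by rw [ht]; exact Psi_W H x A B c g h) (by rw [ht]; exact Psi_U H x A B c),
      M5_last, if_pos rfl]
  refine ⟨AlgHom.ofLinearMap f ?_ ?_, ?_⟩
  · rw [hf 1 1 1 (by simp) (by simp), Matrix.submatrix_one _ (Fin.castSucc_injective 4)]
    exact Prod.ext rfl (Prod.ext rfl (by simp))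
  · intro s t
    obtain ⟨A, B, c, hs⟩ := T_le_W H x s.2
    obtain ⟨A', B', c', ht⟩ := T_le_W H x t.2
    have s1 := hs ▸ Psi_W H x A B c g h
    have s2 := hs ▸ Psi_U H x A B c
    have t1 := ht ▸ Psi_W H x A' B' c' g h
    have t2 := ht ▸ Psi_U H x A' B' c'
    rw [hf s _ _ s1 s2, hf t _ _ t1 t2, hf (s * t) _ _
      (by rw [MulMemClass.coe_mul, Matrix.mul_assoc, t1, ← Matrix.mul_assoc, s1, Matrix.mul_assoc])
      (by rw [MulMemClass.coe_mul, Matrix.mul_assoc, t2, ← Matrix.mul_assoc, s2, Matrix.mul_assoc]),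
      tri_mul _ _ (hcol A B c), tri_mul' _ _ (hcol A' B' c')]
    rfl
  · exact hval

theorem kD_sub (j : Fin 4) : (![1,1,1,1,0] : Fin 5 → F) j.castSucc = 1 := by
  fin_cases j <;> rfl

theorem M5_sub (A : Matrix (Fin 6) (Fin 6) F) (B : Matrix (Fin 5) (Fin 5) F) (c : F) (i j : Fin 4) :
    M5 A B c i.castSucc j.castSucc = ((kR F)ᵀ * A * kC F) i.castSucc j.castSucc
      + B i.castSucc j.castSucc + (c • (1 : Matrix (Fin 4) (Fin 4) F)) i j := by
  rw [M5, Matrix.add_apply, Matrix.add_apply, kD, Matrix.mul_diagonal, kD_sub, mul_one]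
  simp [Matrix.one_apply]

theorem kD_mul_kD (B : Matrix (Fin 5) (Fin 5) F)
    (hB : ∀ i j : Fin 4, B i.castSucc j.castSucc = 0) : kD F * B * kD F = 0 := by
  ext i j
  rw [kD, Matrix.mul_diagonal, Matrix.diagonal_mul]
  induction i using Fin.lastCases with
  | last => simp
  | cast i =>
    induction j using Fin.lastCases with
    | last => simp
    | cast j => simp [hB]

end Aux

theorem stmt16 (F : Type) [Field F] (G : Type) [Group G] [Fintype G] [DecidableEq G]
    (hp : ringChar F ≠ 2)
    (helem : ∀ a : G, a ^ 2 = 1) (hcard : 3 ≤ Fintype.card G)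
    (hn : (Fintype.card G : F) = 2) (x : XG G) :
    ∃ φ : TerwilligerAlg F G x →ₐ[F]
        (Matrix (Fin 6) (Fin 6) F × Matrix (Fin 4) (Fin 4) F × F),
      Function.Surjective φ ∧
      ∃ m : ℕ, 1 ≤ m ∧
        ∀ f : Fin m → TerwilligerAlg F G x,
          (∀ j, φ (f j) = 0) → (List.ofFn f).prod = 0 := by
  have h2 : (2 : F) ≠ 0 := Ring.two_ne_zero hp
  have hs : ∀ a : G, a * a = 1 := fun a => by rw [← pow_two]; exact helem a
  have H : Ctx F G :=
    { hs := hs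
      hn := hn
      hc := fun a b => by
        have h := hs (a * b)
        calc a * b = a * 1 * b := by group
          _ = a * (a * b * (a * b)) * b := by rw [h]
          _ = (a * a) * (b * a) * (b * b) := by group
          _ = b * a := by rw [hs, hs]; group }
  obtain ⟨φ, hφ⟩ := exists_hom H h2 hcard x
  have hNi : kNi F * kN F = 1 := mul_eq_one_comm.1 (kN_mul_kNi h2)
  refine ⟨φ, ?_, 3, by norm_num, ?_⟩
  · rintro ⟨M, Z, c⟩
    set A := (M - c • 1) * kNi F with hA
    set B : Matrix (Fin 5) (Fin 5) F := Matrix.of fun k l =>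
      Fin.lastCases (motive := fun _ => F) 0 (fun i => Fin.lastCases (motive := fun _ => F) 0
        (fun j => Z i j - ((kR F)ᵀ * A * kC F) i.castSucc j.castSucc
          - (c • (1 : Matrix (Fin 4) (Fin 4) F)) i j) l) k with hB
    refine ⟨⟨Psi x A B c, Psi_memT H x A B c⟩, ?_⟩
    rw [hφ _ A B c rfl]
    refine Prod.ext ?_ (Prod.ext ?_ rfl)
    · change A * kN F + c • 1 = M
      rw [hA, Matrix.mul_assoc, hNi, Matrix.mul_one, sub_add_cancel]
    · change (M5 A B c).submatrix Fin.castSucc Fin.castSucc = Z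
      ext i j
      rw [Matrix.submatrix_apply, M5_sub, hB, Matrix.of_apply, Fin.lastCases_castSucc,
        Fin.lastCases_castSucc]
      ring
  · intro f hf
    have key : ∀ t : TerwilligerAlg F G x, φ t = 0 → ∃ B : Matrix (Fin 5) (Fin 5) F,
        t.1 = Um F x * B * (Um F x)ᵀ ∧ kD F * B * kD F = 0 := by
      intro t ht
      obtain ⟨A, B, c, e⟩ := T_le_W H x t.2
      rw [hφ t A B c e] at ht
      have hc : c = 0 := congrArg (fun p => p.2.2) ht
      have h6 : A * kN F + c • 1 = 0 := congrArg (fun p => p.1) ht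
      have h4 : (M5 A B c).submatrix Fin.castSucc Fin.castSucc = (0 : Matrix (Fin 4) (Fin 4) F) :=
        congrArg (fun p => p.2.1) ht
      subst hc
      have hA : A = 0 := by
        rw [zero_smul, add_zero] at h6
        calc A = A * (kN F * kNi F) := by rw [kN_mul_kNi h2, Matrix.mul_one]
          _ = 0 := by rw [← Matrix.mul_assoc, h6, Matrix.zero_mul]
      subst hA
      refine ⟨B, by rw [e]; simp [Psi, Sm_zero], kD_mul_kD B fun i j => ?_⟩
      have := congrFun (congrFun h4 i) j
      rw [Matrix.submatrix_apply, M5_sub] at this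
      simpa using this
    obtain ⟨B0, e0, d0⟩ := key (f 0) (hf 0)
    obtain ⟨B1, e1, d1⟩ := key (f 1) (hf 1)
    obtain ⟨B2, e2, d2⟩ := key (f 2) (hf 2)
    apply Subtype.ext
    have hp3 : (List.ofFn f).prod = f 0 * (f 1 * f 2) := by
      simp [List.ofFn_succ]
    rw [hp3, MulMemClass.coe_mul, MulMemClass.coe_mul, e0, e1, e2]
    have hU := UU H.hs H.hn x
    calc Um F x * B0 * (Um F x)ᵀ * (Um F x * B1 * (Um F x)ᵀ * (Um F x * B2 * (Um F x)ᵀ))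
        = Um F x * B0 * ((Um F x)ᵀ * Um F x * B1 * ((Um F x)ᵀ * Um F x)) * B2 * (Um F x)ᵀ := by
          simp only [Matrix.mul_assoc]
      _ = 0 := by rw [hU, d1]; simp
end
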